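/- arXiv:quant-ph/0410052 — 2 statements merged into one kernel-verified Lean document; each statement's English description precedes it below -/
import Mathlib

section
/- Suppose an $n \times n$ Hermitian matrix $\sigma$ can be written as a convex combination of unitary conjugates of a fixed $n \times n$ Hermitian matrix $\rho$: $\sigma = \sum_{i=1}^N p_i U_i \rho U_i^\dagger$, where each $U_i$ is unitary, $p_i \geq 0$, and $\sum_{i=1}^N p_i = 1$. Suppose further that $q = (q_1, \ldots, q_N)$ is a probability vector with $q \prec p = (p_1, \ldots, p_N)$. Then there exist $n \times n$ unitary matrices $V_1, \ldots, V_N$ such that $\sigma = \sum_{i=1}^N q_i V_i \rho V_i^\dagger$. -/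
open Matrix

/-- Partial sum of the first `k` entries of a vector indexed by `Fin N`. -/
noncomputable def psum {N : ℕ} (v : Fin N → ℝ) (k : ℕ) : ℝ :=
  ∑ i ∈ Finset.univ.filter (fun i : Fin N => (i : ℕ) < k), v i

/-- `q` is majorized by `p`: the partial sums of the nonincreasing rearrangement of `q`
are dominated by those of the nonincreasing rearrangement of `p`, with equal total sums. -/
def Majorizes {N : ℕ} (q p : Fin N → ℝ) : Prop :=
  ∃ qs ps : Fin N → ℝ,
    (∃ σ : Equiv.Perm (Fin N), qs = q ∘ σ) ∧ Antitone qs ∧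
    (∃ τ : Equiv.Perm (Fin N), ps = p ∘ τ) ∧ Antitone ps ∧
    (∀ k : ℕ, k < N → psum qs k ≤ psum ps k) ∧ psum qs N = psum ps N


noncomputable section

open scoped ComplexOrder

/-- logarithm of the absolute value of the determinant -/
def ld {m : Type*} [Fintype m] [DecidableEq m] (M : Matrix m m ℂ) : ℝ := Real.log ‖M.det‖

section basics
variable {m k : Type*} [Fintype m] [DecidableEq m] [Fintype k] [DecidableEq k]

lemma herm_spectral {A : Matrix m m ℂ} (hA : A.IsHermitian) :
    ∃ W : Matrix m m ℂ, ∃ e : m → ℝ, Wᴴ * W = 1 ∧ W * Wᴴ = 1 ∧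
      A = W * diagonal (fun i => (e i : ℂ)) * Wᴴ := by
  refine ⟨hA.eigenvectorUnitary, hA.eigenvalues, ?_, ?_, ?_⟩
  · exact Unitary.coe_star_mul_self _
  · exact Unitary.coe_mul_star_self _
  · have := hA.spectral_theorem
    rw [Unitary.conjStarAlgAut_apply] at this
    exact this

lemma diag_conj_eq {A W : Matrix m m ℂ} {e : m → ℝ} (h1 : Wᴴ * W = 1)
    (hA : A = W * diagonal (fun i => (e i : ℂ)) * Wᴴ) :
    diagonal (fun i => (e i : ℂ)) = Wᴴ * A * W := by
  rw [hA]
  calc diagonal (fun i => (e i : ℂ)) = (Wᴴ * W) * diagonal (fun i => (e i : ℂ)) * (Wᴴ * W) := by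
        rw [h1]; simp
    _ = _ := by simp only [Matrix.mul_assoc]

lemma inj_of_isometry {V : Matrix m k ℂ} (h : Vᴴ * V = 1) : Function.Injective V.mulVec := by
  intro x y hxy
  have : Vᴴ *ᵥ (V *ᵥ x) = Vᴴ *ᵥ (V *ᵥ y) := congrArg (fun z => Vᴴ *ᵥ z) hxy
  simpa [Matrix.mulVec_mulVec, h] using this

lemma pd_spectral {A : Matrix m m ℂ} (hA : A.PosDef) :
    ∃ W : Matrix m m ℂ, ∃ e : m → ℝ, Wᴴ * W = 1 ∧ W * Wᴴ = 1 ∧ (∀ i, 0 < e i) ∧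
      A = W * diagonal (fun i => (e i : ℂ)) * Wᴴ := by
  obtain ⟨W, e, h1, h2, h3⟩ := herm_spectral hA.1
  refine ⟨W, e, h1, h2, ?_, h3⟩
  have := diag_conj_eq h1 h3
  have h4 := hA.conjTranspose_mul_mul_same (inj_of_isometry h1)
  rw [← this, posDef_diagonal_iff] at h4
  intro i
  exact_mod_cast h4 i

lemma psd_spectral {A : Matrix m m ℂ} (hA : A.PosSemidef) :
    ∃ W : Matrix m m ℂ, ∃ e : m → ℝ, Wᴴ * W = 1 ∧ W * Wᴴ = 1 ∧ (∀ i, 0 ≤ e i) ∧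
      A = W * diagonal (fun i => (e i : ℂ)) * Wᴴ := by
  obtain ⟨W, e, h1, h2, h3⟩ := herm_spectral hA.1
  refine ⟨W, e, h1, h2, ?_, h3⟩
  have := diag_conj_eq h1 h3
  have h4 := hA.conjTranspose_mul_mul_same W
  rw [← this, posSemidef_diagonal_iff] at h4
  intro i
  exact_mod_cast h4 i

lemma ld_mul {A B : Matrix m m ℂ} (hA : A.det ≠ 0) (hB : B.det ≠ 0) :
    ld (A * B) = ld A + ld B := by
  simp only [ld, det_mul, norm_mul]
  rw [Real.log_mul (by simpa using hA) (by simpa using hB)]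

lemma ld_conjTranspose (A : Matrix m m ℂ) : ld Aᴴ = ld A := by
  simp [ld, det_conjTranspose]

lemma ld_one : ld (1 : Matrix m m ℂ) = 0 := by simp [ld]

lemma ld_conj {A B : Matrix m m ℂ} (hA : A.det ≠ 0) (hB : B.det ≠ 0) :
    ld (Bᴴ * A * B) = 2 * ld B + ld A := by
  have : Bᴴ.det ≠ 0 := by simpa [det_conjTranspose] using hB
  have h2 : (Bᴴ * A).det ≠ 0 := by rw [det_mul]; exact mul_ne_zero this hA
  rw [ld_mul h2 hB, ld_mul this hA, ld_conjTranspose]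
  ring

lemma ld_unitary_conj {A W : Matrix m m ℂ} (h2 : W * Wᴴ = 1) :
    ld (W * A * Wᴴ) = ld A := by
  have h : W.det * Wᴴ.det = 1 := by rw [← det_mul, h2, det_one]
  have : (W * A * Wᴴ).det = A.det := by
    rw [det_mul, det_mul]; linear_combination A.det * h
  simp [ld, this]

lemma ld_diagonal {e : m → ℝ} (he : ∀ i, 0 < e i) :
    ld (diagonal (fun i => (e i : ℂ))) = ∑ i, Real.log (e i) := by
  simp only [ld, det_diagonal, norm_prod]
  rw [Real.log_prod]
  · refine Finset.sum_congr rfl fun i _ => ?_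
    simp
  · intro i _
    simpa using (he i).ne'

lemma pd_det_ne {A : Matrix m m ℂ} (hA : A.PosDef) : A.det ≠ 0 := hA.det_pos.ne'

lemma one_add_conj {W : Matrix m m ℂ} (h2 : W * Wᴴ = 1) (s : ℝ) (e : m → ℝ) :
    1 + (s : ℂ) • (W * diagonal (fun i => (e i : ℂ)) * Wᴴ)
      = W * diagonal (fun i => ((1 + s * e i : ℝ) : ℂ)) * Wᴴ := by
  have : diagonal (fun i => ((1 + s * e i : ℝ) : ℂ))
      = (1 : Matrix m m ℂ) + (s : ℂ) • diagonal (fun i => (e i : ℂ)) := by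
    rw [← diagonal_one, ← diagonal_smul, diagonal_add]
    congr 1; ext i; simp
  rw [this, Matrix.mul_add, Matrix.add_mul, Matrix.mul_one, h2]
  simp

lemma pd_factor {A : Matrix m m ℂ} (hA : A.PosDef) :
    ∃ B : Matrix m m ℂ, B.det ≠ 0 ∧ A = Bᴴ * B := by
  obtain ⟨W, e, h1, h2, he, h3⟩ := pd_spectral hA
  have key : A = (diagonal (fun i => (Real.sqrt (e i) : ℂ)) * Wᴴ)ᴴ *
      (diagonal (fun i => (Real.sqrt (e i) : ℂ)) * Wᴴ) := by
    rw [h3, conjTranspose_mul, conjTranspose_conjTranspose, diagonal_conjTranspose]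
    have : diagonal (fun i => (e i : ℂ)) = diagonal (star fun i => (Real.sqrt (e i) : ℂ))
        * diagonal (fun i => (Real.sqrt (e i) : ℂ)) := by
      rw [diagonal_mul_diagonal]
      congr 1; ext i
      simp only [Pi.star_apply, RCLike.star_def, Complex.conj_ofReal]
      rw [← Complex.ofReal_mul, Real.mul_self_sqrt (he i).le]
    rw [this]
    simp only [Matrix.mul_assoc]
  refine ⟨_, ?_, key⟩
  intro h0
  apply pd_det_ne hA
  rw [key, det_mul, h0, mul_zero]

lemma ld_mono {M N : Matrix m m ℂ} (hM : M.PosDef) (hN : (N - M).PosSemidef) : ld M ≤ ld N := by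
  obtain ⟨B, hB, rfl⟩ := pd_factor hM
  have hu : IsUnit B.det := isUnit_iff_ne_zero.mpr hB
  have hP := hN.conjTranspose_mul_mul_same B⁻¹
  set P := (B⁻¹)ᴴ * (N - Bᴴ * B) * B⁻¹ with hPd
  have hBi : B⁻¹ * B = 1 := nonsing_inv_mul B hu
  have hBi' : Bᴴ * (B⁻¹)ᴴ = 1 := by rw [← conjTranspose_mul, hBi, conjTranspose_one]
  have h1 : Bᴴ * P * B = N - Bᴴ * B := by
    calc Bᴴ * P * B = (Bᴴ * (B⁻¹)ᴴ) * (N - Bᴴ * B) * (B⁻¹ * B) := by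
          rw [hPd]; simp only [Matrix.mul_assoc]
      _ = _ := by rw [hBi, hBi']; simp
  have h2 : N = Bᴴ * (1 + P) * B := by
    rw [Matrix.mul_add, Matrix.add_mul, h1]; simp
  obtain ⟨W, e, w1, w2, he, h3⟩ := psd_spectral hP
  have h4 : 1 + P = W * diagonal (fun i => ((1 + 1 * e i : ℝ) : ℂ)) * Wᴴ := by
    rw [← one_add_conj w2, ← h3]; simp
  have hpos : ∀ i, 0 < 1 + 1 * e i := fun i => by linarith [he i]
  have hpd : (1 + P).PosDef := Matrix.PosDef.one.add_posSemidef hP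
  have h5 : 0 ≤ ld (1 + P) := by
    rw [h4, ld_unitary_conj w2, ld_diagonal hpos]
    exact Finset.sum_nonneg fun i _ => Real.log_nonneg (by linarith [he i])
  rw [h2, ld_conj (pd_det_ne hpd) hB, ld_mul (by simpa [det_conjTranspose] using hB) hB,
    ld_conjTranspose]
  linarith

lemma ld_smul_one {d : ℝ} (hd : 0 < d) :
    ld ((d : ℂ) • (1 : Matrix m m ℂ)) = Fintype.card m * Real.log d := by
  simp [ld, det_smul, abs_of_pos hd]

lemma ld_smul {d : ℝ} (hd : 0 < d) {A : Matrix m m ℂ} (hA : A.det ≠ 0) :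
    ld ((d : ℂ) • A) = Fintype.card m * Real.log d + ld A := by
  simp only [ld, det_smul, norm_mul, norm_pow, Complex.norm_real, Real.norm_eq_abs, abs_of_pos hd]
  rw [Real.log_mul (by positivity) (by simpa using hA), Real.log_pow]

lemma pd_smul_one {d : ℝ} (hd : 0 < d) : ((d : ℂ) • (1 : Matrix m m ℂ)).PosDef :=
  Matrix.PosDef.one.smul (by exact_mod_cast hd)

/-- log det (1 + sH) ≤ s tr H -/
lemma ld_one_add_le {H : Matrix m m ℂ} (hH : H.IsHermitian) (s : ℝ)
    (hp : (1 + (s : ℂ) • H).PosDef) : ld (1 + (s : ℂ) • H) ≤ s * (H.trace).re := by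
  obtain ⟨W, e, w1, w2, h3⟩ := herm_spectral hH
  have h4 : 1 + (s : ℂ) • H = W * diagonal (fun i => ((1 + s * e i : ℝ) : ℂ)) * Wᴴ := by
    rw [← one_add_conj w2, ← h3]
  have hpos : ∀ i, 0 < 1 + s * e i := by
    have := hp.conjTranspose_mul_mul_same (inj_of_isometry w1)
    rw [← diag_conj_eq w1 h4, posDef_diagonal_iff] at this
    intro i; exact_mod_cast this i
  have ht : H.trace = ∑ i, (e i : ℂ) := by
    rw [h3, trace_mul_comm, ← Matrix.mul_assoc, w1, Matrix.one_mul, trace_diagonal]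
  rw [h4, ld_unitary_conj w2, ld_diagonal hpos, ht, Complex.re_sum, Finset.mul_sum]
  refine Finset.sum_le_sum fun i _ => ?_
  have := Real.log_le_sub_one_of_pos (hpos i)
  simp only [Complex.ofReal_re]; linarith

lemma log_lower {x : ℝ} (hx : |x| ≤ 1 / 2) : x - 2 * x ^ 2 ≤ Real.log (1 + x) := by
  have h := abs_le.mp hx
  have h1 : 0 < 1 + x := by linarith
  have h2 := Real.one_sub_inv_le_log_of_pos h1
  have : 1 - (1 + x)⁻¹ = x / (1 + x) := by field_simp; ring
  rw [this] at h2
  refine le_trans ?_ h2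
  rw [le_div_iff₀ h1]
  nlinarith [mul_nonneg (sq_nonneg x) (by linarith : 0 ≤ 1 + 2 * x)]

/-- log det (1 + sE) ≥ s tr E - s² tr E² -/
lemma ld_one_add_ge {H : Matrix m m ℂ} (hH : H.IsHermitian) (s : ℝ)
    (hp : (1 + (2 * s : ℂ) • H).PosSemidef) (hp' : (1 - (2 * s : ℂ) • H).PosSemidef) :
    s * (H.trace).re - 2 * s ^ 2 * ((H * H).trace).re ≤ ld (1 + (s : ℂ) • H) := by
  obtain ⟨W, e, w1, w2, h3⟩ := herm_spectral hH
  have h4 : 1 + (s : ℂ) • H = W * diagonal (fun i => ((1 + s * e i : ℝ) : ℂ)) * Wᴴ := by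
    rw [← one_add_conj w2, ← h3]
  have hb : ∀ i, |s * e i| ≤ 1 / 2 := by
    have e1 : 1 + (2 * s : ℂ) • H = W * diagonal (fun i => ((1 + (2 * s) * e i : ℝ) : ℂ)) * Wᴴ := by
      rw [← one_add_conj w2, ← h3]; simp
    have e2 : 1 - (2 * s : ℂ) • H = W * diagonal (fun i => ((1 + (-(2 * s)) * e i : ℝ) : ℂ)) * Wᴴ := by
      rw [← one_add_conj w2, ← h3]; simp [sub_eq_add_neg]
    have t1 := hp.conjTranspose_mul_mul_same W
    rw [← diag_conj_eq w1 e1, posSemidef_diagonal_iff] at t1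
    have t2 := hp'.conjTranspose_mul_mul_same W
    rw [← diag_conj_eq w1 e2, posSemidef_diagonal_iff] at t2
    intro i
    have u1 : 0 ≤ 1 + (2 * s) * e i := by exact_mod_cast t1 i
    have u2 : 0 ≤ 1 + (-(2 * s)) * e i := by exact_mod_cast t2 i
    rw [abs_le]; constructor <;> linarith
  have hpos : ∀ i, 0 < 1 + s * e i := fun i => by linarith [(abs_le.mp (hb i)).1]
  have ht : H.trace = ∑ i, (e i : ℂ) := by
    rw [h3, trace_mul_comm, ← Matrix.mul_assoc, w1, Matrix.one_mul, trace_diagonal]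
  have ht2 : (H * H).trace = ∑ i, ((e i ^ 2 : ℝ) : ℂ) := by
    have : H * H = W * diagonal (fun i => ((e i ^ 2 : ℝ) : ℂ)) * Wᴴ := by
      have hd : diagonal (fun i => ((e i ^ 2 : ℝ) : ℂ)) = diagonal (fun i => (e i : ℂ)) *
          diagonal (fun i => (e i : ℂ)) := by
        rw [diagonal_mul_diagonal]; congr 1; ext i; push_cast; ring
      rw [hd]
      calc H * H = W * diagonal (fun i => (e i : ℂ)) * (Wᴴ * W) * diagonal (fun i => (e i : ℂ)) * Wᴴ := by
            conv_lhs => rw [h3]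
            simp only [Matrix.mul_assoc]
        _ = _ := by rw [w1]; simp only [Matrix.mul_assoc, Matrix.mul_one]
    rw [this, trace_mul_comm, ← Matrix.mul_assoc, w1, Matrix.one_mul, trace_diagonal]
  rw [h4, ld_unitary_conj w2, ld_diagonal hpos, ht, ht2, Complex.re_sum, Complex.re_sum,
    Finset.mul_sum, Finset.mul_sum, ← Finset.sum_sub_distrib]
  refine Finset.sum_le_sum fun i _ => ?_
  have := log_lower (hb i)
  simp only [Complex.ofReal_re]; nlinarith

end basics


section jensen
variable {m k : Type*} [Fintype m] [DecidableEq m] [Fintype k] [DecidableEq k]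

lemma conj_diag_apply (P : Matrix m k ℂ) (e : m → ℝ) (j : k) :
    (Pᴴ * diagonal (fun i => (e i : ℂ)) * P) j j
      = ((∑ a, Complex.normSq (P a j) * e a : ℝ) : ℂ) := by
  rw [Matrix.mul_apply]
  push_cast
  refine Finset.sum_congr rfl fun a _ => ?_
  rw [mul_diagonal, conjTranspose_apply]
  rw [Complex.normSq_eq_conj_mul_self]
  simp only [RCLike.star_def]
  ring

lemma ld_isometry_ge {h W : Matrix m m ℂ} {e : m → ℝ} (he : ∀ i, 0 < e i)
    (hpd : h.PosDef)
    (w1 : Wᴴ * W = 1) (w2 : W * Wᴴ = 1) (hh : h = W * diagonal (fun i => (e i : ℂ)) * Wᴴ)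
    {V : Matrix m k ℂ} (hV : Vᴴ * V = 1) :
    ((Vᴴ * (W * diagonal (fun i => (Real.log (e i) : ℂ)) * Wᴴ) * V).trace).re
      ≤ ld (Vᴴ * h * V) := by
  have hN := hpd.conjTranspose_mul_mul_same (inj_of_isometry hV)
  obtain ⟨Z, ν, z1, z2, hν, hZ⟩ := pd_spectral hN
  set P := Wᴴ * V * Z with hP
  have hPH : Pᴴ = Zᴴ * Vᴴ * W := by
    rw [hP]; simp [conjTranspose_mul, Matrix.mul_assoc]
  have hconj : ∀ D : Matrix m m ℂ, Pᴴ * D * P = Zᴴ * (Vᴴ * (W * D * Wᴴ) * V) * Z := by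
    intro D; rw [hPH, hP]; simp only [Matrix.mul_assoc]
  have hPP : Pᴴ * P = 1 := by
    have := hconj 1
    rw [Matrix.mul_one] at this
    rw [this, Matrix.mul_one, w2, Matrix.mul_one, hV, Matrix.mul_one, z1]
  have hnu : diagonal (fun i => (ν i : ℂ)) = Pᴴ * diagonal (fun i => (e i : ℂ)) * P := by
    rw [diag_conj_eq z1 hZ, hconj, ← hh]
  have hnu' : ∀ j, ν j = ∑ a, Complex.normSq (P a j) * e a := by
    intro j
    have := congrFun (congrFun hnu j) j
    rw [conj_diag_apply, diagonal_apply_eq] at this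
    exact_mod_cast this
  have hone : ∀ j, ∑ a, Complex.normSq (P a j) = 1 := by
    intro j
    have := conj_diag_apply P (fun _ => 1) j
    simp only [Complex.ofReal_one, diagonal_one, Matrix.mul_one, hPP, one_apply_eq, mul_one] at this
    exact_mod_cast this.symm
  have htr : (Vᴴ * (W * diagonal (fun i => (Real.log (e i) : ℂ)) * Wᴴ) * V).trace
      = ((∑ j, ∑ a, Complex.normSq (P a j) * Real.log (e a) : ℝ) : ℂ) := by
    calc _ = (Pᴴ * diagonal (fun i => (Real.log (e i) : ℂ)) * P).trace := by
          rw [hconj, trace_mul_comm (Zᴴ * _) Z, ← Matrix.mul_assoc Z, z2, Matrix.one_mul]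
      _ = _ := by
          rw [trace]
          simp only [diag_apply, conj_diag_apply]
          push_cast; rfl
  rw [htr, Complex.ofReal_re, hZ, ld_unitary_conj z2, ld_diagonal hν]
  refine Finset.sum_le_sum fun j _ => ?_
  rw [hnu' j]
  have := strictConcaveOn_log_Ioi.concaveOn.le_map_sum (t := Finset.univ)
    (w := fun a => Complex.normSq (P a j)) (p := e)
    (fun a _ => Complex.normSq_nonneg _) (hone j) (fun a _ => he a)
  simpa [smul_eq_mul] using this

end jensen

section flag
variable {n : ℕ}

/-- inclusion of the first coordinates up to `k` -/
def En (k : Fin n) : Matrix (Fin n) {j : Fin n // j ≤ k} ℂ :=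
  (1 : Matrix (Fin n) (Fin n) ℂ).submatrix id Subtype.val

lemma En_isometry (k : Fin n) : (En k)ᴴ * En k = 1 := by
  ext i j
  simp [En, Matrix.mul_apply, one_apply, Subtype.ext_iff]

/-- diagonal matrix with step data `a` -/
def Dg (a : Fin n → ℝ) : Matrix (Fin n) (Fin n) ℂ := ∑ k, (a k : ℂ) • (En k * (En k)ᴴ)

/-- the (logarithmic) Kempf-Ness type function -/
def phi {ι : Type*} [Fintype ι] (a : ι → Fin n → ℝ) (c : ℝ)
    (X : ι → Matrix (Fin n) (Fin n) ℂ) (h : Matrix (Fin n) (Fin n) ℂ) : ℝ :=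
  ∑ i, ∑ k, a i k * ld ((X i * En k)ᴴ * h * (X i * En k)) - c * ld h

lemma phi_nonneg {ι : Type*} [Fintype ι] {a : ι → Fin n → ℝ} (ha : ∀ i k, 0 ≤ a i k) {c : ℝ}
    {U : ι → Matrix (Fin n) (Fin n) ℂ} (hU : ∀ i, (U i)ᴴ * U i = 1)
    (hsum : ∑ i, U i * Dg (a i) * (U i)ᴴ = (c : ℂ) • 1)
    {h : Matrix (Fin n) (Fin n) ℂ} (hh : h.PosDef) : 0 ≤ phi a c U h := by
  obtain ⟨W, e, w1, w2, he, hW⟩ := pd_spectral hh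
  set L := W * diagonal (fun i => (Real.log (e i) : ℂ)) * Wᴴ with hL
  have hiso : ∀ i k, (U i * En k)ᴴ * (U i * En k) = 1 := by
    intro i k
    calc (U i * En k)ᴴ * (U i * En k) = (En k)ᴴ * ((U i)ᴴ * U i) * En k := by
          simp only [conjTranspose_mul, Matrix.mul_assoc]
      _ = 1 := by rw [hU, Matrix.mul_one, En_isometry]
  have hld : ld h = (L.trace).re := by
    rw [hW, ld_unitary_conj w2, ld_diagonal he, hL, trace_mul_comm, ← Matrix.mul_assoc, w1,
      Matrix.one_mul, trace_diagonal, Complex.re_sum]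
    simp
  have hkey : c * (L.trace).re
      = ∑ i, ∑ k, a i k * (((U i * En k)ᴴ * L * (U i * En k)).trace).re := by
    have h1 : ((L * ∑ i, U i * Dg (a i) * (U i)ᴴ).trace).re = c * (L.trace).re := by
      rw [hsum]; simp [trace_smul]
    rw [← h1, Finset.mul_sum, trace_sum, Complex.re_sum]
    refine Finset.sum_congr rfl fun i _ => ?_
    rw [Dg, Finset.mul_sum, Finset.sum_mul, Finset.mul_sum, trace_sum, Complex.re_sum]
    refine Finset.sum_congr rfl fun k _ => ?_
    have h2 : ((U i * En k)ᴴ * L * (U i * En k)).trace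
        = (L * (U i * (En k * (En k)ᴴ) * (U i)ᴴ)).trace := by
      rw [Matrix.mul_assoc, trace_mul_comm]
      simp only [conjTranspose_mul, Matrix.mul_assoc]
    rw [h2]
    simp [trace_smul]
  rw [phi, hld, hkey, ← Finset.sum_sub_distrib]
  refine Finset.sum_nonneg fun i _ => ?_
  rw [← Finset.sum_sub_distrib]
  refine Finset.sum_nonneg fun k _ => ?_
  rw [← mul_sub]
  refine mul_nonneg (ha i k) (sub_nonneg.mpr ?_)
  exact ld_isometry_ge he hh w1 w2 hW (hiso i k)

end flag


section schur
variable {m k : Type*} [Fintype m] [DecidableEq m] [Fintype k] [DecidableEq k]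

lemma schur_main {G : Matrix (k ⊕ m) (k ⊕ m) ℂ} (hG : G.PosDef) :
    ∃ S : Matrix k k ℂ, S.PosDef ∧ ld G = ld S + ld G.toBlocks₂₂ ∧
      (G - fromBlocks S 0 0 0).PosSemidef ∧
      ∀ S0 : Matrix k k ℂ, (G - fromBlocks S0 0 0 0).PosSemidef → (S - S0).PosSemidef := by
  set A := G.toBlocks₁₁ with hA
  set B := G.toBlocks₁₂ with hB
  set D := G.toBlocks₂₂ with hD
  have hC : G.toBlocks₂₁ = Bᴴ := by
    ext i j
    have := congrFun (congrFun hG.1 (Sum.inr i)) (Sum.inl j)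
    simpa [toBlocks₂₁, toBlocks₁₂, B] using this.symm
  have hGb : G = fromBlocks A B Bᴴ D := by
    rw [← hC]; exact (fromBlocks_toBlocks G).symm
  have hDpd : D.PosDef := hG.submatrix Sum.inr_injective
  have hDu : IsUnit D.det := isUnit_iff_ne_zero.mpr (pd_det_ne hDpd)
  letI : Invertible D := invertibleOfIsUnitDet D hDu
  have hsub : ∀ S0 : Matrix k k ℂ, G - fromBlocks S0 0 0 0 = fromBlocks (A - S0) B Bᴴ D := by
    intro S0
    rw [hGb]
    ext (i | i) (j | j) <;> simp
  have hiff : ∀ S0 : Matrix k k ℂ, (G - fromBlocks S0 0 0 0).PosSemidef ↔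
      (A - B * D⁻¹ * Bᴴ - S0).PosSemidef := by
    intro S0
    rw [hsub, PosDef.fromBlocks₂₂ _ _ hDpd, sub_right_comm]
  have hdet : G.det = D.det * (A - B * D⁻¹ * Bᴴ).det := by
    conv_lhs => rw [hGb]
    rw [det_fromBlocks₂₂, invOf_eq_nonsing_inv]
  have hSps : (A - B * D⁻¹ * Bᴴ).PosSemidef := by
    have h0 := hG.posSemidef
    rw [hGb] at h0
    exact (PosDef.fromBlocks₂₂ _ _ hDpd).mp h0
  have hne : (A - B * D⁻¹ * Bᴴ).det ≠ 0 := by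
    intro h0; rw [h0, mul_zero] at hdet; exact pd_det_ne hG hdet
  refine ⟨A - B * D⁻¹ * Bᴴ, ?_, ?_, ?_, ?_⟩
  · exact hSps.posDef_iff_det_ne_zero.mpr hne
  · simp only [ld, hdet, norm_mul]
    rw [Real.log_mul (by simpa using pd_det_ne hDpd) (by simpa using hne), add_comm]
  · rw [hiff, sub_self]; exact PosSemidef.zero
  · intro S0 h; exact (hiff S0).mp h

lemma schur_ge {G : Matrix (k ⊕ m) (k ⊕ m) ℂ} (hG : G.PosDef) {S0 : Matrix k k ℂ}
    (h0 : S0.PosDef) (h : (G - fromBlocks S0 0 0 0).PosSemidef) :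
    ld S0 + ld G.toBlocks₂₂ ≤ ld G := by
  obtain ⟨S, hS, h1, -, h2⟩ := schur_main hG
  have := ld_mono h0 (h2 S0 h)
  linarith

lemma ld_reindex (e : k ≃ m) (A : Matrix m m ℂ) : ld (A.submatrix e e) = ld A := by
  simp [ld, det_submatrix_equiv_self]

end schur

section toep

/-- split off the first block -/
def eS (M : ℕ) (β : Type*) : β ⊕ (Fin M × β) ≃ Fin (M + 1) × β where
  toFun := Sum.elim (fun b => (0, b)) (fun x => (x.1.succ, x.2))
  invFun := fun x => Fin.cases (Sum.inl x.2) (fun d => Sum.inr (d, x.2)) x.1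
  left_inv := by rintro (b | ⟨d, b⟩) <;> simp
  right_inv := by
    rintro ⟨d, b⟩
    refine Fin.cases ?_ (fun d => ?_) d <;> simp

/-- split off the last block -/
def eL (M : ℕ) (β : Type*) : β ⊕ (Fin M × β) ≃ Fin (M + 1) × β where
  toFun := Sum.elim (fun b => (Fin.last M, b)) (fun x => (x.1.castSucc, x.2))
  invFun := fun x => Fin.lastCases (motive := fun _ => β ⊕ (Fin M × β))
    (Sum.inl x.2) (fun d => Sum.inr (d, x.2)) x.1
  left_inv := by rintro (b | ⟨d, b⟩) <;> simp
  right_inv := by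
    rintro ⟨d, b⟩
    refine Fin.lastCases ?_ (fun d => ?_) d <;> simp

lemma gram_pd {m k : Type*} [Fintype m] [DecidableEq m] [Fintype k] [DecidableEq k]
    {H : Matrix m m ℂ} (hH : H.PosDef) {Y : Matrix m k ℂ} (hY : Function.Injective Y.mulVec) :
    (Yᴴ * H * Y).PosDef := hH.conjTranspose_mul_mul_same hY

lemma toep {β : Type} [Fintype β] [DecidableEq β] (M : ℕ) :
    ∀ H : Matrix (Fin (M + 1) × β) (Fin (M + 1) × β) ℂ, H.PosDef →
    ∃ h : Fin (M + 1) → Matrix β β ℂ, (∀ d, (h d).PosDef) ∧ ld H = ∑ d, ld (h d) ∧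
      (∀ R : ℝ, ((R : ℂ) • 1 - H).PosSemidef → ld (h (Fin.last M)) ≤ ld ((R : ℂ) • (1 : Matrix β β ℂ)))
      ∧ ∀ (κ : Type) [Fintype κ] [DecidableEq κ] (Y0 : Matrix β κ ℂ)
        (Y : Matrix (Fin (M + 1) × β) (Fin M × κ) ℂ), Function.Injective Y0.mulVec →
        Function.Injective Y.mulVec →
        (∀ e x y, Y (e.castSucc, x) (e, y) = Y0 x y) →
        (∀ d e x y, d < e.castSucc → Y (d, x) (e, y) = 0) →
        ∑ e : Fin M, ld (Y0ᴴ * h e.castSucc * Y0) ≤ ld (Yᴴ * H * Y) := by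
  induction M with
  | zero =>
    intro H hH
    have he : (fun b : β => ((0 : Fin 1), b)) = (Equiv.uniqueProd β (Fin 1)).symm := by
      ext b <;> simp
    refine ⟨fun _ => H.submatrix (Equiv.uniqueProd β (Fin 1)).symm (Equiv.uniqueProd β (Fin 1)).symm,
      fun _ => hH.submatrix (Equiv.injective _), ?_, ?_, ?_⟩
    · simp [ld_reindex]
    · intro R hR
      have := hR.submatrix (Equiv.uniqueProd β (Fin 1)).symm
      refine ld_mono (hH.submatrix (Equiv.injective _)) ?_
      convert this using 1
      ext i j
      simp [Matrix.one_apply]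
    · intro κ _ _ Y0 Y _ _ _ _
      simp [ld]
  | succ M ih =>
    intro H hH
    set e := eS (M + 1) β with he
    set G := H.submatrix e e with hGdef
    have hG : G.PosDef := hH.submatrix e.injective
    obtain ⟨S, hS, hld, hGS, -⟩ := schur_main hG
    have hD : G.toBlocks₂₂.PosDef := hG.submatrix Sum.inr_injective
    obtain ⟨h, h1, h2, h3, h4⟩ := ih _ hD
    refine ⟨Fin.cons S h, ?_, ?_, ?_, ?_⟩
    · intro d; refine Fin.cases ?_ (fun d => ?_) d
      · simpa using hS
      · simpa using h1 d
    · rw [Fin.sum_univ_succ]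
      simp only [Fin.cons_zero, Fin.cons_succ]
      rw [← h2, ← hld, hGdef, ld_reindex]
    · intro R hR
      rw [← Fin.succ_last, Fin.cons_succ]
      refine h3 R ?_
      have := (hR.submatrix e).submatrix Sum.inr
      convert this using 1
      ext i j
      simp [toBlocks₂₂, Matrix.one_apply, hGdef]
    · intro κ _ _ Y0 Y hY0 hY hdiag hlow
      rw [Fin.sum_univ_succ]
      simp only [Fin.castSucc_zero, Fin.cons_zero, Fin.castSucc_succ, Fin.cons_succ]
      set f := eS M κ with hf
      set Z := Y.submatrix e f with hZ
      have hZinj : Function.Injective Z.mulVec := by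
        intro x y hxy
        have hx : ∀ v : κ ⊕ Fin M × κ → ℂ, Z *ᵥ v = (Y *ᵥ (v ∘ f.symm)) ∘ e := by
          intro v; rw [hZ, submatrix_mulVec_equiv]
        rw [hx, hx] at hxy
        have h5 := hY (e.surjective.injective_comp_right hxy)
        exact f.symm.surjective.injective_comp_right h5
      have hGram : (Yᴴ * H * Y).submatrix f f = Zᴴ * G * Z := by
        rw [hZ, hGdef, conjTranspose_submatrix, submatrix_mul_equiv, submatrix_mul_equiv]
      have hgpd : (Zᴴ * G * Z).PosDef := gram_pd hG hZinj
      rw [← ld_reindex f, hGram]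
      have hZ12 : ∀ b x, Z (Sum.inl b) (Sum.inr x) = 0 := by
        intro b x
        exact hlow _ _ _ _ (by simp [he, hf, eS, Fin.lt_def])
      have hZ11 : ∀ b x, Z (Sum.inl b) (Sum.inl x) = Y0 b x := by
        intro b x
        exact hdiag 0 b x
      have hblock : Zᴴ * (fromBlocks S 0 0 0 : Matrix (β ⊕ Fin (M + 1) × β) (β ⊕ Fin (M + 1) × β) ℂ) * Z = fromBlocks (Y0ᴴ * S * Y0) 0 0 0 := by
        have : Z = fromBlocks Y0 0 Z.toBlocks₂₁ Z.toBlocks₂₂ := by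
          ext (i | i) (j | j) <;> first | rfl | simp [hZ12, hZ11]
        rw [this]
        simp [fromBlocks_conjTranspose, fromBlocks_multiply]
      have h22 : (Zᴴ * G * Z).toBlocks₂₂ = (Z.toBlocks₂₂)ᴴ * G.toBlocks₂₂ * Z.toBlocks₂₂ := by
        have : Z = fromBlocks Y0 0 Z.toBlocks₂₁ Z.toBlocks₂₂ := by
          ext (i | i) (j | j) <;> first | rfl | simp [hZ12, hZ11]
        rw [← fromBlocks_toBlocks G]
        rw [this]
        simp [fromBlocks_conjTranspose, fromBlocks_multiply]
      have h22inj : Function.Injective (Z.toBlocks₂₂).mulVec := by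
        intro x y hxy
        have : Z *ᵥ (Sum.elim 0 x) = Z *ᵥ (Sum.elim 0 y) := by
          have hZe : Z = fromBlocks Y0 0 Z.toBlocks₂₁ Z.toBlocks₂₂ := by
            ext (i | i) (j | j) <;> first | rfl | simp [hZ12, hZ11]
          rw [hZe, fromBlocks_mulVec, fromBlocks_mulVec]
          simp [hxy]
        have := hZinj this
        ext j
        exact congrFun this (Sum.inr j)
      have hge := schur_ge hgpd (S0 := Y0ᴴ * S * Y0) (gram_pd hS hY0) (by
        have := hGS.conjTranspose_mul_mul_same Z
        rw [Matrix.mul_sub, Matrix.sub_mul, hblock] at this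
        exact this)
      have hih := h4 κ Y0 Z.toBlocks₂₂ hY0 h22inj (by
        intro d x y
        exact hdiag d.succ x y) (by
        intro d d' x y hlt
        exact hlow d.succ d'.succ x y (by
          rw [Fin.lt_def] at hlt ⊢; simpa using hlt))
      rw [h22] at hge
      linarith

end toep


section disc
open scoped Kronecker

lemma psd_factor {m : Type*} [Fintype m] [DecidableEq m] {A : Matrix m m ℂ} (hA : A.PosSemidef) :
    ∃ B : Matrix m m ℂ, A = Bᴴ * B := by
  obtain ⟨W, e, h1, h2, he, h3⟩ := psd_spectral hA
  refine ⟨diagonal (fun i => (Real.sqrt (e i) : ℂ)) * Wᴴ, ?_⟩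
  rw [h3, conjTranspose_mul, conjTranspose_conjTranspose, diagonal_conjTranspose]
  have : diagonal (fun i => (e i : ℂ)) = diagonal (star fun i => (Real.sqrt (e i) : ℂ))
      * diagonal (fun i => (Real.sqrt (e i) : ℂ)) := by
    rw [diagonal_mul_diagonal]
    congr 1; ext i
    simp only [Pi.star_apply, RCLike.star_def, Complex.conj_ofReal]
    rw [← Complex.ofReal_mul, Real.mul_self_sqrt (he i)]
  rw [this]; simp only [Matrix.mul_assoc]

/-- block diagonal matrix -/
def BD {o α β : Type*} [DecidableEq o] (A : o → Matrix α β ℂ) : Matrix (o × α) (o × β) ℂ :=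
  (blockDiagonal A).submatrix (Equiv.prodComm o α) (Equiv.prodComm o β)

section
variable {o α β γ : Type*} [Fintype o] [DecidableEq o] [Fintype α] [DecidableEq α]
  [Fintype β] [DecidableEq β]

lemma BD_apply (A : o → Matrix α β ℂ) (j j' : o) (a : α) (b : β) :
    BD A (j, a) (j', b) = if j = j' then A j a b else 0 := by
  simp [BD, blockDiagonal_apply]

lemma BD_mul (A : o → Matrix α β ℂ) (B : o → Matrix β γ ℂ) :
    BD A * BD B = BD (fun j => A j * B j) := by
  rw [BD, BD, submatrix_mul_equiv, BD, blockDiagonal_mul]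

lemma BD_conj (A : o → Matrix α β ℂ) : (BD A)ᴴ = BD (fun j => (A j)ᴴ) := by
  rw [BD, conjTranspose_submatrix, blockDiagonal_conjTranspose, BD]

lemma BD_psd {A : o → Matrix α α ℂ} (h : ∀ j, (A j).PosSemidef) : (BD A).PosSemidef := by
  choose B hB using fun j => psd_factor (h j)
  have : BD A = (BD B)ᴴ * BD B := by
    rw [BD_conj, BD_mul]; congr 1; ext1 j; exact hB j
  rw [this]; exact posSemidef_conjTranspose_mul_self _

lemma BD_det (A : o → Matrix α α ℂ) : (BD A).det = ∏ j, (A j).det := by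
  rw [BD, det_submatrix_equiv_self, det_blockDiagonal]

lemma BD_pd {A : o → Matrix α α ℂ} (h : ∀ j, (A j).PosDef) : (BD A).PosDef := by
  refine (BD_psd fun j => (h j).posSemidef).posDef_iff_det_ne_zero.mpr ?_
  rw [BD_det]
  exact Finset.prod_ne_zero_iff.mpr fun j _ => pd_det_ne (h j)

lemma BD_ld {A : o → Matrix α α ℂ} (h : ∀ j, (A j).PosDef) : ld (BD A) = ∑ j, ld (A j) := by
  simp only [ld, BD_det, norm_prod]
  rw [Real.log_prod]
  intro j _
  simpa using pd_det_ne (h j)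

lemma BD_smul_one_sub (A : o → Matrix α α ℂ) (R : ℂ) :
    R • (1 : Matrix (o × α) (o × α) ℂ) - BD A = BD (fun j => R • 1 - A j) := by
  ext ⟨j, a⟩ ⟨j', b⟩
  by_cases h : j = j' <;> simp [BD_apply, Matrix.one_apply, h]

lemma BD_sub_smul_one (A : o → Matrix α α ℂ) (R : ℂ) :
    BD A - R • (1 : Matrix (o × α) (o × α) ℂ) = BD (fun j => A j - R • 1) := by
  ext ⟨j, a⟩ ⟨j', b⟩
  by_cases h : j = j' <;> simp [BD_apply, Matrix.one_apply, h]
end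

lemma inj_of_gram {m k : Type*} [Fintype m] [DecidableEq m] [Fintype k] [DecidableEq k]
    {H : Matrix m m ℂ} {Y : Matrix m k ℂ} (h : (Yᴴ * H * Y).PosDef) :
    Function.Injective Y.mulVec := by
  intro x y hxy
  have hu : IsUnit (Yᴴ * H * Y) := h.isUnit
  refine mulVec_injective_of_isUnit hu ?_
  show (Yᴴ * H * Y) *ᵥ x = (Yᴴ * H * Y) *ᵥ y
  rw [← mulVec_mulVec x (Yᴴ * H) Y, ← mulVec_mulVec y (Yᴴ * H) Y]
  exact congrArg (fun v => (Yᴴ * H) *ᵥ v) hxy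

lemma trunc_ge {κ : Type*} [Fintype κ] [DecidableEq κ] (M : ℕ)
    {G : Matrix (Fin (M + 1) × κ) (Fin (M + 1) × κ) ℂ} {δ : ℝ} (hδ : 0 < δ)
    (hG : (G - (δ : ℂ) • 1).PosSemidef) :
    ld ((δ : ℂ) • (1 : Matrix κ κ ℂ)) +
      ld (G.submatrix (fun x : Fin M × κ => (x.1.castSucc, x.2)) (fun x => (x.1.castSucc, x.2)))
      ≤ ld G := by
  have hGpd : G.PosDef := by
    have := (pd_smul_one (m := Fin (M + 1) × κ) hδ).add_posSemidef hG
    simpa using this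
  set e := eL M κ
  have h1 : (G.submatrix e e).PosDef := hGpd.submatrix e.injective
  have h2 := schur_ge h1 (S0 := (δ : ℂ) • 1) (pd_smul_one hδ) (by
    have h3 := hG.submatrix e
    have h4 : (fromBlocks 0 0 0 ((δ : ℂ) • 1) : Matrix (κ ⊕ (Fin M × κ)) (κ ⊕ (Fin M × κ)) ℂ).PosSemidef := by
      have : (fromBlocks 0 0 0 ((δ : ℂ) • 1) : Matrix (κ ⊕ (Fin M × κ)) (κ ⊕ (Fin M × κ)) ℂ)
        = (diagonal (Sum.elim (fun _ => 0) (fun _ => (δ : ℂ)))) := by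
        ext (i | i) (j | j) <;> simp [diagonal_apply, Matrix.one_apply]
      rw [this]
      refine PosSemidef.diagonal ?_
      rintro (i | i)
      · simp
      · simpa using hδ.le
    have h5 := h3.add h4
    convert h5 using 1
    ext (i | i) (j | j) <;> simp [Matrix.one_apply])
  rw [ld_reindex] at h2
  exact h2

lemma disc {β : Type} [Fintype β] [DecidableEq β] (M : ℕ)
    {F : Matrix (Fin (M + 1)) (Fin (M + 1)) ℂ} {z : Fin (M + 1) → ℂ} (F1 : Fᴴ * F = 1)
    (F2 : F * Fᴴ = 1) (hF : ∀ j (e : Fin M), F j e.succ = z j * F j e.castSucc)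
    {h : Fin (M + 1) → Matrix β β ℂ} (hpd : ∀ j, (h j).PosDef) {R : ℝ}
    (hR : ∀ j, ((R : ℂ) • 1 - h j).PosSemidef) :
    ∃ h' : Fin (M + 1) → Matrix β β ℂ, (∀ d, (h' d).PosDef) ∧ ∑ j, ld (h j) = ∑ d, ld (h' d) ∧
      ld (h' (Fin.last M)) ≤ ld ((R : ℂ) • (1 : Matrix β β ℂ)) ∧
      ∀ (κ : Type) [Fintype κ] [DecidableEq κ] (Y0 Y1 : Matrix β κ ℂ),
        Function.Injective Y0.mulVec → ∀ δ : ℝ, 0 < δ →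
        (∀ j, ((Y0 + z j • Y1)ᴴ * h j * (Y0 + z j • Y1) - (δ : ℂ) • 1).PosSemidef) →
        ∑ e : Fin M, ld (Y0ᴴ * h' e.castSucc * Y0) + ld ((δ : ℂ) • (1 : Matrix κ κ ℂ))
          ≤ ∑ j, ld ((Y0 + z j • Y1)ᴴ * h j * (Y0 + z j • Y1)) := by
  set Q : Matrix (Fin (M + 1) × β) (Fin (M + 1) × β) ℂ := F ⊗ₖ (1 : Matrix β β ℂ) with hQ
  have hQs : ∀ (κ : Type) [Fintype κ] [DecidableEq κ],
      (F ⊗ₖ (1 : Matrix κ κ ℂ))ᴴ * (F ⊗ₖ (1 : Matrix κ κ ℂ)) = 1 := by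
    intro κ _ _
    rw [conjTranspose_kronecker, ← mul_kronecker_mul, F1]; simp
  have hQs2 : ∀ (κ : Type) [Fintype κ] [DecidableEq κ],
      (F ⊗ₖ (1 : Matrix κ κ ℂ)) * (F ⊗ₖ (1 : Matrix κ κ ℂ))ᴴ = 1 := by
    intro κ _ _
    rw [conjTranspose_kronecker, ← mul_kronecker_mul, F2]; simp
  have hBDpd := BD_pd hpd
  have hld_conj : ∀ (κ : Type) [Fintype κ] [DecidableEq κ]
      (A : Matrix (Fin (M + 1) × κ) (Fin (M + 1) × κ) ℂ),
      ld ((F ⊗ₖ (1 : Matrix κ κ ℂ))ᴴ * A * (F ⊗ₖ (1 : Matrix κ κ ℂ))) = ld A := by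
    intro κ _ _ A
    have := ld_unitary_conj (A := A) (W := (F ⊗ₖ (1 : Matrix κ κ ℂ))ᴴ) (by
      rw [conjTranspose_conjTranspose]; exact hQs κ)
    rwa [conjTranspose_conjTranspose] at this
  set H := Qᴴ * BD h * Q with hH
  have hHpd : H.PosDef := gram_pd hBDpd (inj_of_isometry (hQs β))
  obtain ⟨h', k1, k2, k3, k4⟩ := toep M H hHpd
  refine ⟨h', k1, ?_, ?_, ?_⟩
  · rw [← k2, hH, hQ, hld_conj, BD_ld hpd]
  · refine k3 R ?_
    have := (BD_psd hR).conjTranspose_mul_mul_same Q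
    rw [← BD_smul_one_sub, Matrix.mul_sub, Matrix.sub_mul] at this
    rw [Matrix.mul_smul, Matrix.smul_mul, Matrix.mul_one, hQ, hQs β] at this
    exact this
  · intro κ _ _ Y0 Y1 hY0 δ hδ hge
    set P := F ⊗ₖ (1 : Matrix κ κ ℂ) with hP
    set Yj : Fin (M + 1) → Matrix β κ ℂ := fun j => Y0 + z j • Y1 with hYj
    set tr : Fin M × κ → Fin (M + 1) × κ := fun x => (x.1.castSucc, x.2) with htr
    have hgpd : ∀ j, ((Yj j)ᴴ * h j * Yj j).PosDef := by
      intro j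
      have := (pd_smul_one (m := κ) hδ).add_posSemidef (hge j)
      rwa [add_sub_cancel] at this
    set 𝒴 : Matrix (Fin (M + 1) × β) (Fin M × κ) ℂ := Matrix.of fun x y =>
      (if x.1 = y.1.castSucc then Y0 x.2 y.2 else 0)
        + (if x.1 = y.1.succ then Y1 x.2 y.2 else 0) with hYdef
    have hkey : (BD Yj * P).submatrix id tr = Q * 𝒴 := by
      ext ⟨j, a⟩ ⟨e, y⟩
      simp only [submatrix_apply, id, htr, Matrix.mul_apply, Fintype.sum_prod_type, BD_apply,
        hP, hQ, kronecker_apply, Matrix.one_apply, hYdef, of_apply]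
      simp [Finset.sum_add_distrib, mul_add, hYj, hF, add_mul]
      ring
    set Gf := Pᴴ * BD (fun j => (Yj j)ᴴ * h j * Yj j) * P with hGf
    have hGf2 : Gf = (BD Yj * P)ᴴ * BD h * (BD Yj * P) := by
      rw [hGf, conjTranspose_mul, BD_conj, ← BD_mul, ← BD_mul]
      simp only [Matrix.mul_assoc]
    have hQQ : Qᴴ * BD h * Q = H := rfl
    have hsub : Gf.submatrix tr tr = 𝒴ᴴ * H * 𝒴 := by
      have e1 : Gf.submatrix tr tr
          = ((BD Yj * P).submatrix id tr)ᴴ * BD h * ((BD Yj * P).submatrix id tr) := by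
        rw [hGf2]
        ext x y
        simp [Matrix.mul_apply]
      rw [e1, hkey, hH, conjTranspose_mul]
      simp only [Matrix.mul_assoc]
    have hGpd : Gf.PosDef := gram_pd (BD_pd hgpd) (inj_of_isometry (hQs κ))
    have hGd : (Gf - (δ : ℂ) • 1).PosSemidef := by
      have := (BD_psd hge).conjTranspose_mul_mul_same P
      rw [← BD_sub_smul_one, Matrix.mul_sub, Matrix.sub_mul] at this
      rw [Matrix.mul_smul, Matrix.smul_mul, Matrix.mul_one, hP, hQs κ] at this
      exact this
    have h5 := trunc_ge M hδ hGd
    have htinj : Function.Injective tr := by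
      rintro ⟨a, b⟩ ⟨c, d⟩ hh
      simpa [htr] using hh
    have hinj : Function.Injective 𝒴.mulVec := by
      have := hGpd.submatrix htinj
      rw [hsub] at this
      exact inj_of_gram this
    have h6 := k4 κ Y0 𝒴 hY0 hinj (by
        intro e x y
        simp [hYdef, Fin.ext_iff]) (by
        intro d e x y hlt
        have n1 : d ≠ e.castSucc := hlt.ne
        have n2 : d ≠ e.succ := by
          rintro rfl
          rw [Fin.lt_def] at hlt; simp at hlt
        simp [hYdef, n1, n2])
    rw [hsub] at h5
    have h7 : ld Gf = ∑ j, ld ((Yj j)ᴴ * h j * Yj j) := by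
      rw [hGf, hP, hld_conj, BD_ld hgpd]
    linarith

end disc


section dft

lemma dft_exists (M : ℕ) : ∃ (F : Matrix (Fin (M + 1)) (Fin (M + 1)) ℂ) (z : Fin (M + 1) → ℂ),
    Fᴴ * F = 1 ∧ F * Fᴴ = 1 ∧ (∀ j (e : Fin M), F j e.succ = z j * F j e.castSucc) ∧
    ∀ j, ‖z j‖ = 1 := by
  set ω : ℂ := Complex.exp (2 * Real.pi * Complex.I / (M + 1 : ℕ)) with hω
  have hprim : IsPrimitiveRoot ω (M + 1) := Complex.isPrimitiveRoot_exp _ (by omega)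
  have hnorm : ‖ω‖ = 1 := hprim.norm'_eq_one (by omega)
  have hne : ω ≠ 0 := by intro h; rw [h] at hnorm; simp at hnorm
  have hconj : star ω = ω⁻¹ := by
    rw [RCLike.star_def, Complex.inv_def, Complex.normSq_eq_norm_sq, hnorm]; simp
  set s : ℂ := (((Real.sqrt ((M : ℝ) + 1))⁻¹ : ℝ) : ℂ) with hs
  have hss : star s * s = ((M : ℂ) + 1)⁻¹ := by
    rw [hs, RCLike.star_def, Complex.conj_ofReal, ← Complex.ofReal_mul, ← mul_inv,
      Real.mul_self_sqrt (by positivity)]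
    push_cast; rfl
  set F : Matrix (Fin (M + 1)) (Fin (M + 1)) ℂ := Matrix.of fun j d => s * ω ^ (j.val * d.val)
    with hF
  have F1 : Fᴴ * F = 1 := by
    ext d d'
    rw [Matrix.mul_apply]
    set x : ℂ := ω⁻¹ ^ d.val * ω ^ d'.val with hx
    have hterm : ∀ j : Fin (M + 1), Fᴴ d j * F j d' = ((M : ℂ) + 1)⁻¹ * x ^ j.val := by
      intro j
      rw [conjTranspose_apply, hF, of_apply, of_apply, star_mul', star_pow, hconj, hx, mul_pow,
        ← hss, ← pow_mul, ← pow_mul, mul_comm d.val, mul_comm d'.val]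
      ring
    rw [Finset.sum_congr rfl fun j _ => hterm j, ← Finset.mul_sum,
      Fin.sum_univ_eq_sum_range (fun j => x ^ j) (M + 1)]
    by_cases hd : d = d'
    · subst hd
      have : x = 1 := by rw [hx, ← mul_pow, inv_mul_cancel₀ hne, one_pow]
      rw [this]
      have h0 : (M : ℂ) + 1 ≠ 0 := by exact_mod_cast Nat.succ_ne_zero M
      simp [h0]
    · have hx1 : x ≠ 1 := by
        intro h1
        have : ω ^ d'.val = ω ^ d.val := by
          rw [hx, inv_pow, inv_mul_eq_one₀ (pow_ne_zero _ hne)] at h1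
          exact h1.symm
        have := hprim.pow_inj d'.2 d.2 this
        exact hd (Fin.ext this.symm)
      have hxM : x ^ (M + 1) = 1 := by
        rw [hx, mul_pow, ← pow_mul, ← pow_mul, mul_comm, mul_comm d'.val, mul_comm d.val, pow_mul,
          pow_mul, hprim.pow_eq_one, inv_pow, hprim.pow_eq_one]; simp
      rw [geom_sum_eq hx1, hxM]
      simp [hd]
  refine ⟨F, fun j => ω ^ j.val, F1, mul_eq_one_comm.mp F1, ?_, ?_⟩
  · intro j e
    simp only [hF, of_apply, Fin.val_succ, Fin.val_castSucc, mul_add, pow_add, mul_one]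
    ring
  · intro j; simp [hnorm]

end dft

section avg
variable {n : ℕ} {ι : Type*} [Fintype ι]

lemma phi_add (a a' : ι → Fin n → ℝ) (c c' : ℝ) (X : ι → Matrix (Fin n) (Fin n) ℂ)
    (h : Matrix (Fin n) (Fin n) ℂ) :
    phi (fun i k => a i k + a' i k) (c + c') X h = phi a c X h + phi a' c' X h := by
  simp only [phi, add_mul, Finset.sum_add_distrib]; ring

lemma gram_unit_smul {m k : Type*} [Fintype m] [Fintype k] {w : ℂ} (hw : ‖w‖ = 1)
    (Y : Matrix m k ℂ) (h : Matrix m m ℂ) : (w • Y)ᴴ * h * (w • Y) = Yᴴ * h * Y := by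
  have : star w * w = 1 := by
    rw [RCLike.star_def, ← Complex.normSq_eq_conj_mul_self, Complex.normSq_eq_norm_sq, hw]; simp
  rw [conjTranspose_smul, Matrix.smul_mul, Matrix.smul_mul, Matrix.mul_smul, smul_smul, this,
    one_smul]

lemma gram_half {m k : Type*} [Fintype m] [Fintype k]
    (Y : Matrix m k ℂ) (h : Matrix m m ℂ) :
    (((1 / 2 : ℝ) : ℂ) • Y)ᴴ * h * (((1 / 2 : ℝ) : ℂ) • Y) = ((1 / 4 : ℝ) : ℂ) • (Yᴴ * h * Y) := by
  rw [conjTranspose_smul, Matrix.smul_mul, Matrix.smul_mul, Matrix.mul_smul, smul_smul]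
  congr 1
  rw [RCLike.star_def, Complex.conj_ofReal, ← Complex.ofReal_mul]; norm_num

lemma phi_avg {a : ι → Fin n → ℝ} (ha : ∀ i k, 0 ≤ a i k) {c : ℝ} (hc : 0 ≤ c) (M : ℕ)
    {F : Matrix (Fin (M + 1)) (Fin (M + 1)) ℂ} {z : Fin (M + 1) → ℂ} (F1 : Fᴴ * F = 1)
    (F2 : F * Fᴴ = 1) (hF : ∀ j (e : Fin M), F j e.succ = z j * F j e.castSucc)
    {X0 X1 : ι → Matrix (Fin n) (Fin n) ℂ} {K : ℝ}
    (hinj : ∀ i (k : Fin n), Function.Injective (X0 i * En k).mulVec)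
    (hK : ∀ h : Matrix (Fin n) (Fin n) ℂ, h.PosDef → -K ≤ phi a c X0 h)
    {h : Fin (M + 1) → Matrix (Fin n) (Fin n) ℂ} (hpd : ∀ j, (h j).PosDef) {R δ : ℝ}
    (hR : ∀ j, ((R : ℂ) • 1 - h j).PosSemidef) (hδ : 0 < δ)
    (hge : ∀ i j (k : Fin n), (((X0 i + z j • X1 i) * En k)ᴴ * h j * ((X0 i + z j • X1 i) * En k)
      - (δ : ℂ) • 1).PosSemidef) :
    -(M * K) + (∑ i, ∑ k : Fin n, a i k * ld ((δ : ℂ) • (1 : Matrix {j : Fin n // j ≤ k} _ ℂ))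
      - c * ld ((R : ℂ) • (1 : Matrix (Fin n) (Fin n) ℂ)))
      ≤ ∑ j, phi a c (fun i => X0 i + z j • X1 i) (h j) := by
  obtain ⟨h', k1, k2, k3, k4⟩ := disc M F1 F2 hF hpd hR
  have hterm : ∀ i (k : Fin n), a i k * (∑ e : Fin M, ld ((X0 i * En k)ᴴ * h' e.castSucc * (X0 i * En k)))
      + a i k * ld ((δ : ℂ) • (1 : Matrix {j : Fin n // j ≤ k} _ ℂ))
      ≤ a i k * ∑ j, ld (((X0 i + z j • X1 i) * En k)ᴴ * h j * ((X0 i + z j • X1 i) * En k)) := by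
    intro i k
    have := k4 _ (X0 i * En k) (X1 i * En k) (hinj i k) δ hδ (by
      intro j
      have := hge i j k
      rwa [Matrix.add_mul, Matrix.smul_mul] at this)
    simp only [Matrix.add_mul, Matrix.smul_mul]
    rw [← mul_add]
    exact mul_le_mul_of_nonneg_left this (ha i k)
  have hsum := Finset.sum_le_sum fun i (_ : i ∈ Finset.univ) =>
    Finset.sum_le_sum fun k (_ : k ∈ Finset.univ) => hterm i k
  simp only [Finset.sum_add_distrib] at hsum
  have e1 : ∑ j, phi a c (fun i => X0 i + z j • X1 i) (h j)
      = ∑ i, ∑ k, a i k * ∑ j, ld (((X0 i + z j • X1 i) * En k)ᴴ * h j * ((X0 i + z j • X1 i) * En k))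
        - c * ∑ j, ld (h j) := by
    simp only [phi, Finset.sum_sub_distrib, Finset.mul_sum]
    congr 1
    rw [Finset.sum_comm]
    refine Finset.sum_congr rfl fun i _ => ?_
    rw [Finset.sum_comm]
  have e2 : ∑ e : Fin M, phi a c X0 (h' e.castSucc)
      = ∑ i, ∑ k, a i k * ∑ e : Fin M, ld ((X0 i * En k)ᴴ * h' e.castSucc * (X0 i * En k))
        - c * ∑ e : Fin M, ld (h' e.castSucc) := by
    simp only [phi, Finset.sum_sub_distrib, Finset.mul_sum]
    congr 1
    rw [Finset.sum_comm]
    refine Finset.sum_congr rfl fun i _ => ?_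
    rw [Finset.sum_comm]
  have e3 : -(M * K) ≤ ∑ e : Fin M, phi a c X0 (h' e.castSucc) := by
    have := Finset.sum_le_sum fun e (_ : e ∈ (Finset.univ : Finset (Fin M))) =>
      hK (h' e.castSucc) (k1 _)
    simpa using this
  rw [e1, k2, Fin.sum_univ_castSucc]
  have := mul_le_mul_of_nonneg_left k3 hc
  rw [mul_add]
  linarith

/-- the mixed matrices are uniformly invertible -/
lemma mix_bounds {U V : Matrix (Fin n) (Fin n) ℂ} (hU : Uᴴ * U = 1) (hV : Vᴴ * V = 1) {z : ℂ}
    (hz : ‖z‖ = 1) :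
    ((U + z • ((1 / 2 : ℝ) : ℂ) • V)ᴴ * (U + z • ((1 / 2 : ℝ) : ℂ) • V)
        - ((1 / 4 : ℝ) : ℂ) • 1).PosSemidef ∧
    (((9 / 4 : ℝ) : ℂ) • 1 - (U + z • ((1 / 2 : ℝ) : ℂ) • V)ᴴ
        * (U + z • ((1 / 2 : ℝ) : ℂ) • V)).PosSemidef := by
  have hzz : star z * z = 1 := by
    rw [RCLike.star_def, ← Complex.normSq_eq_conj_mul_self, Complex.normSq_eq_norm_sq, hz]; simp
  have hexp : ∀ t : ℝ, (U + z • (t : ℂ) • V)ᴴ * (U + z • (t : ℂ) • V)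
      = ((1 + t ^ 2 : ℝ) : ℂ) • 1 + (t : ℂ) • (z • (Uᴴ * V) + star z • (Vᴴ * U)) := by
    intro t
    simp only [conjTranspose_add, conjTranspose_smul, Matrix.add_mul, Matrix.mul_add,
      Matrix.smul_mul, Matrix.mul_smul, hU, hV, RCLike.star_def, Complex.conj_ofReal]
    rw [RCLike.star_def] at hzz
    have : ((t : ℂ) • (z • (starRingEnd ℂ) z • (t : ℂ) • (1 : Matrix (Fin n) (Fin n) ℂ)))
        = ((t : ℂ) ^ 2) • 1 := by
      simp only [smul_smul]; congr 1
      linear_combination (t : ℂ) ^ 2 * hzz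
    ext i j
    simp only [Matrix.add_apply, Matrix.smul_apply, smul_eq_mul]
    push_cast
    linear_combination ((t : ℂ) ^ 2 * (1 : Matrix (Fin n) (Fin n) ℂ) i j) * hzz
  constructor
  · have h1 := posSemidef_conjTranspose_mul_self (U + z • ((1 : ℝ) : ℂ) • V)
    have h2 := h1.smul (a := ((1 / 2 : ℝ) : ℂ)) (by
      rw [Complex.zero_le_real]; norm_num)
    convert h2 using 1
    rw [hexp, hexp]
    ext i j
    simp only [Matrix.add_apply, Matrix.smul_apply, smul_eq_mul, Matrix.sub_apply]
    push_cast
    ring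
  · have h1 := posSemidef_conjTranspose_mul_self (U + z • ((-1 : ℝ) : ℂ) • V)
    have h2 := h1.smul (a := ((1 / 2 : ℝ) : ℂ)) (by
      rw [Complex.zero_le_real]; norm_num)
    convert h2 using 1
    rw [hexp, hexp]
    ext i j
    simp only [Matrix.add_apply, Matrix.smul_apply, smul_eq_mul, Matrix.sub_apply]
    push_cast
    ring

lemma gram_lower {X h : Matrix (Fin n) (Fin n) ℂ} {r q : ℝ} (hr : 0 ≤ r)
    (hX : (Xᴴ * X - (q : ℂ) • 1).PosSemidef) (hh : (h - (r : ℂ) • 1).PosSemidef) (k : Fin n) :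
    ((X * En k)ᴴ * h * (X * En k) - ((r * q : ℝ) : ℂ) • 1).PosSemidef := by
  have h1 := hh.conjTranspose_mul_mul_same (X * En k)
  have h2 := (hX.conjTranspose_mul_mul_same (En k)).smul (a := (r : ℂ)) (by
      rw [Complex.zero_le_real]; exact hr)
  have h3 := h1.add h2
  convert h3 using 1
  have e1 : (En k)ᴴ * (Xᴴ * X - (q : ℂ) • 1) * En k = (X * En k)ᴴ * (X * En k) - (q : ℂ) • 1 := by
    rw [Matrix.mul_sub, Matrix.sub_mul, Matrix.mul_smul, Matrix.mul_one, Matrix.smul_mul,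
      En_isometry, conjTranspose_mul]
    simp only [Matrix.mul_assoc]
  rw [e1, Matrix.mul_sub, Matrix.sub_mul, Matrix.mul_smul, Matrix.mul_one, Matrix.smul_mul,
    smul_sub, smul_smul]
  push_cast
  abel

end avg


section goodz
variable {n : ℕ} {ι : Type*} [Fintype ι]

lemma pd_of_lower {m : Type*} [Fintype m] [DecidableEq m] {h : Matrix m m ℂ} {r : ℝ} (hr : 0 < r)
    (hh : (h - (r : ℂ) • 1).PosSemidef) : h.PosDef := by
  have := (pd_smul_one (m := m) hr).add_posSemidef hh
  rwa [add_sub_cancel] at this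

lemma isom_En {U : Matrix (Fin n) (Fin n) ℂ} (hU : Uᴴ * U = 1) (k : Fin n) :
    (U * En k)ᴴ * (U * En k) = 1 := by
  calc (U * En k)ᴴ * (U * En k) = (En k)ᴴ * (Uᴴ * U) * En k := by
        simp only [conjTranspose_mul, Matrix.mul_assoc]
    _ = 1 := by rw [hU, Matrix.mul_one, En_isometry]

lemma inj_half {U : Matrix (Fin n) (Fin n) ℂ} (hU : Uᴴ * U = 1) (k : Fin n) :
    Function.Injective ((((1 / 2 : ℝ) : ℂ) • U) * En k).mulVec := by
  refine inj_of_gram (H := 1) ?_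
  rw [Matrix.smul_mul, gram_half, Matrix.mul_one, isom_En hU]
  exact pd_smul_one (by norm_num)

lemma phi_half {a : ι → Fin n → ℝ} {c : ℝ} {U : ι → Matrix (Fin n) (Fin n) ℂ}
    (hU : ∀ i, (U i)ᴴ * U i = 1) {h : Matrix (Fin n) (Fin n) ℂ} (hh : h.PosDef) :
    phi a c (fun i => ((1 / 2 : ℝ) : ℂ) • U i) h
      = phi a c U h + ∑ i, ∑ k : Fin n,
        a i k * (Fintype.card {j : Fin n // j ≤ k} * Real.log (1 / 4)) := by
  have : ∀ i (k : Fin n), ld (((((1 / 2 : ℝ) : ℂ) • U i) * En k)ᴴ * h * ((((1 / 2 : ℝ) : ℂ) • U i) * En k))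
      = Fintype.card {j : Fin n // j ≤ k} * Real.log (1 / 4)
        + ld ((U i * En k)ᴴ * h * (U i * En k)) := by
    intro i k
    rw [Matrix.smul_mul, gram_half, ld_smul (by norm_num)]
    exact pd_det_ne (gram_pd hh (inj_of_isometry (isom_En (hU i) k)))
  simp only [phi, this, mul_add, Finset.sum_add_distrib]
  ring

lemma phi_unit_smul {a : ι → Fin n → ℝ} {c : ℝ} {X : ι → Matrix (Fin n) (Fin n) ℂ}
    {h : Matrix (Fin n) (Fin n) ℂ} {w : ℂ} (hw : ‖w‖ = 1) :
    phi a c (fun i => w • X i) h = phi a c X h := by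
  simp only [phi, Matrix.smul_mul, gram_unit_smul hw]

lemma good_z {a a' : ι → Fin n → ℝ} (ha : ∀ i k, 0 ≤ a i k) (ha' : ∀ i k, 0 ≤ a' i k)
    {c c' : ℝ} (hc : 0 ≤ c) (hc' : 0 ≤ c')
    {U U' : ι → Matrix (Fin n) (Fin n) ℂ} (hU : ∀ i, (U i)ᴴ * U i = 1)
    (hU' : ∀ i, (U' i)ᴴ * U' i = 1)
    (hsum : ∑ i, U i * Dg (a i) * (U i)ᴴ = (c : ℂ) • 1)
    (hsum' : ∑ i, U' i * Dg (a' i) * (U' i)ᴴ = (c' : ℂ) • 1) :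
    ∃ K : ℝ, ∀ r R : ℝ, 0 < r → 0 < R → ∃ X : ι → Matrix (Fin n) (Fin n) ℂ,
      (∀ i, ((X i)ᴴ * X i - ((1 / 4 : ℝ) : ℂ) • 1).PosSemidef) ∧
      (∀ i, (((9 / 4 : ℝ) : ℂ) • 1 - (X i)ᴴ * X i).PosSemidef) ∧
      ∀ h : Matrix (Fin n) (Fin n) ℂ, (h - (r : ℂ) • 1).PosSemidef →
        ((R : ℂ) • 1 - h).PosSemidef →
        -K ≤ phi (fun i k => a i k + a' i k) (c + c') X h := by
  set C1 : ℝ := -∑ i, ∑ k : Fin n,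
        a' i k * (Fintype.card {j : Fin n // j ≤ k} * Real.log (1 / 4)) with hC1
  have hC1n : 0 ≤ C1 := by
    rw [hC1, neg_nonneg]
    refine Finset.sum_nonpos fun i _ => Finset.sum_nonpos fun k _ => ?_
    refine mul_nonpos_of_nonneg_of_nonpos (ha' i k) ?_
    exact mul_nonpos_of_nonneg_of_nonpos (by positivity) (Real.log_nonpos (by norm_num) (by norm_num))
  refine ⟨C1 + 1, fun r R hr hR => ?_⟩
  by_contra hcon
  set X : ℂ → ι → Matrix (Fin n) (Fin n) ℂ := fun z i => U i + z • ((1 / 2 : ℝ) : ℂ) • U' i with hX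
  have hbad : ∀ z : ℂ, ‖z‖ = 1 → ∃ h : Matrix (Fin n) (Fin n) ℂ, (h - (r : ℂ) • 1).PosSemidef ∧
        ((R : ℂ) • 1 - h).PosSemidef ∧
        phi (fun i k => a i k + a' i k) (c + c') (X z) h < -(C1 + 1) := by
    intro z hz
    by_contra h2
    push Not at h2
    exact hcon ⟨X z, fun i => (mix_bounds (hU i) (hU' i) hz).1,
      fun i => (mix_bounds (hU i) (hU' i) hz).2, h2⟩
  set K0 : ℝ := (∑ i, ∑ k : Fin n, a i k * ld (((r * (1 / 4) : ℝ) : ℂ) • (1 : Matrix {j : Fin n // j ≤ k} _ ℂ))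
      - c * ld ((R : ℂ) • (1 : Matrix (Fin n) (Fin n) ℂ))) with hK0
  set K0' : ℝ := (∑ i, ∑ k : Fin n, a' i k * ld (((r * (1 / 4) : ℝ) : ℂ) • (1 : Matrix {j : Fin n // j ≤ k} _ ℂ))
      - c' * ld ((R : ℂ) • (1 : Matrix (Fin n) (Fin n) ℂ))) with hK0'
  obtain ⟨M, hM⟩ := exists_nat_gt (-(K0 + K0'))
  obtain ⟨F, z, F1, F2, hF, hz⟩ := dft_exists M
  choose h hh1 hh2 hh3 using fun j => hbad (z j) (hz j)
  have hpd : ∀ j, (h j).PosDef := fun j => pd_of_lower hr (hh1 j)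
  have hδ : 0 < r * (1 / 4) := by positivity
  have hge : ∀ i j (k : Fin n), ((X (z j) i * En k)ᴴ * h j * (X (z j) i * En k)
      - ((r * (1 / 4) : ℝ) : ℂ) • 1).PosSemidef := by
    intro i j k
    exact gram_lower hr.le (mix_bounds (hU i) (hU' i) (hz j)).1 (hh1 j) k
  have b1 := phi_avg (X0 := U) (X1 := fun i => ((1 / 2 : ℝ) : ℂ) • U' i) (K := 0) ha hc M F1 F2 hF
    (fun i k => inj_of_isometry (isom_En (hU i) k))
    (fun g hg => by simpa using phi_nonneg ha hU hsum hg) hpd hh2 hδ hge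
  have hzs : ∀ j, z j * star (z j) = 1 := by
    intro j
    rw [RCLike.star_def, mul_comm, ← Complex.normSq_eq_conj_mul_self, Complex.normSq_eq_norm_sq, hz]
    simp
  have hXs : ∀ j i, X (z j) i = z j • (((1 / 2 : ℝ) : ℂ) • U' i + star (z j) • U i) := by
    intro j i
    rw [hX, smul_add, smul_smul (z j) (star (z j)), hzs, one_smul, add_comm]
  have hFc : ∀ A B : Matrix (Fin (M + 1)) (Fin (M + 1)) ℂ, A * B = 1 →
      A.map (starRingEnd ℂ) * B.map (starRingEnd ℂ) = 1 := by
    intro A B hAB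
    rw [← Matrix.map_mul, hAB]
    exact Matrix.map_one _ (map_zero _) (map_one _)
  have hct : (F.map (starRingEnd ℂ))ᴴ = Fᴴ.map (starRingEnd ℂ) := by
    ext i j; simp
  have b2 := phi_avg (a := a') (c := c') (X0 := fun i => ((1 / 2 : ℝ) : ℂ) • U' i) (X1 := U)
    (K := C1) (F := F.map (starRingEnd ℂ)) (z := fun j => star (z j)) ha' hc' M
    (by rw [hct]; exact hFc _ _ F1) (by rw [hct]; exact hFc _ _ F2)
    (by intro j e; simp [hF])
    (fun i k => inj_half (hU' i) k)
    (fun g hg => by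
      rw [phi_half hU' hg]
      have := phi_nonneg ha' hU' hsum' hg
      linarith) hpd hh2 hδ (by
      intro i j k
      have := hge i j k
      rw [hXs, Matrix.smul_mul, gram_unit_smul (hz j)] at this
      exact this)
  have b3 : ∀ j, phi a' c' (fun i => ((1 / 2 : ℝ) : ℂ) • U' i + star (z j) • U i) (h j)
      = phi a' c' (X (z j)) (h j) := by
    intro j
    have : X (z j) = fun i => z j • (((1 / 2 : ℝ) : ℂ) • U' i + star (z j) • U i) := by
      funext i; exact hXs j i
    rw [this, phi_unit_smul (hz j)]
  rw [Finset.sum_congr rfl fun j _ => b3 j] at b2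
  have b4 : ∑ j, phi (fun i k => a i k + a' i k) (c + c') (X (z j)) (h j)
      ≤ ∑ j : Fin (M + 1), -(C1 + 1) := Finset.sum_le_sum fun j _ => (hh3 j).le
  simp only [phi_add, Finset.sum_add_distrib] at b4
  simp only [Finset.sum_const, Finset.card_univ, Fintype.card_fin, nsmul_eq_mul] at b4
  push_cast at b4
  change _ ≤ ∑ j, phi a c (X (z j)) (h j) at b1
  nlinarith

end goodz

section descent

variable {n : ℕ} {ι : Type*} [Fintype ι]

/-- QR decomposition, in flag form. -/
lemma qr_flag {A : Matrix (Fin n) (Fin n) ℂ} (hA : A.det ≠ 0) :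
    ∃ W : Matrix (Fin n) (Fin n) ℂ, Wᴴ * W = 1 ∧ ∀ k : Fin n,
      ∃ T : Matrix {j : Fin n // j ≤ k} {j : Fin n // j ≤ k} ℂ, T.det ≠ 0 ∧
        A * En k = W * En k * T := by
  let f : Fin n → EuclideanSpace ℂ (Fin n) := fun j => WithLp.toLp 2 (fun i => A i j)
  have hcard : Module.finrank ℂ (EuclideanSpace ℂ (Fin n)) = Fintype.card (Fin n) := by simp
  let b := InnerProductSpace.gramSchmidtOrthonormalBasis hcard f
  have htri : ∀ i j, i < j → inner ℂ (b j) (f i) = 0 := fun i j hij =>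
    InnerProductSpace.gramSchmidtOrthonormalBasis_inv_triangular hcard f hij
  let W : Matrix (Fin n) (Fin n) ℂ := Matrix.of fun i j => b j i
  have hin : ∀ j l, (Wᴴ * W) j l = inner ℂ (b j) (b l) := by
    intro j l
    rw [PiLp.inner_apply, Matrix.mul_apply]
    refine Finset.sum_congr rfl fun i _ => ?_
    simp [W, mul_comm]
  have hW : Wᴴ * W = 1 := by
    ext j l
    rw [hin, orthonormal_iff_ite.mp b.orthonormal, Matrix.one_apply]
  have hW' : W * Wᴴ = 1 := mul_eq_one_comm.mp hW
  have hT : ∀ j i, i < j → (Wᴴ * A) j i = 0 := by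
    intro j i hij
    rw [← htri i j hij, PiLp.inner_apply, Matrix.mul_apply]
    refine Finset.sum_congr rfl fun l _ => ?_
    simp [W, f, mul_comm]
  refine ⟨W, hW, fun k => ⟨(En k)ᴴ * (Wᴴ * A) * En k, ?_, ?_⟩⟩
  all_goals
    have key : A * En k = W * En k * ((En k)ᴴ * (Wᴴ * A) * En k) := by
      have h1 : (Wᴴ * A) * En k = En k * ((En k)ᴴ * (Wᴴ * A) * En k) := by
        ext j l
        have e1 : ∀ (M : Matrix (Fin n) (Fin n) ℂ) j (l : {j : Fin n // j ≤ k}), (M * En k) j l = M j l := by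
          intro M j l
          simp [En, Matrix.mul_apply, Matrix.one_apply]
        have e2 : ∀ (M : Matrix (Fin n) {j : Fin n // j ≤ k} ℂ) (j l : {j : Fin n // j ≤ k}),
            ((En k)ᴴ * M) j l = M j l := by
          intro M j l
          simp [En, Matrix.mul_apply, Matrix.one_apply]
        have e3 : ∀ x, ((En k)ᴴ * (Wᴴ * A) * En k) x l = (Wᴴ * A) x l := by
          intro x
          rw [Matrix.mul_assoc, e2, e1]
        rw [e1]
        refine Eq.trans ?_ (Matrix.mul_apply (M := En k)).symm
        simp only [e3]
        by_cases hj : j ≤ k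
        · rw [Finset.sum_eq_single (⟨j, hj⟩ : {j : Fin n // j ≤ k})]
          · change _ = (1 : Matrix (Fin n) (Fin n) ℂ) j j * _
            rw [Matrix.one_apply_eq, one_mul]
          · intro x _ hx
            have : j ≠ x.1 := fun h => hx (Subtype.ext h.symm)
            simp [En, Matrix.one_apply, this]
          · simp
        · rw [hT j l (lt_of_le_of_lt l.2 (not_le.mp hj)), Finset.sum_eq_zero]
          intro x _
          have : j ≠ x.1 := fun h => hj (h ▸ x.2)
          simp [En, Matrix.one_apply, this]
      rw [Matrix.mul_assoc, ← h1, ← Matrix.mul_assoc, ← Matrix.mul_assoc, hW', Matrix.one_mul]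
  · intro h0
    obtain ⟨v, hv, hv0⟩ := Matrix.exists_mulVec_eq_zero_iff.mpr h0
    have h2 : A *ᵥ (En k *ᵥ v) = 0 := by
      rw [Matrix.mulVec_mulVec, key, ← Matrix.mulVec_mulVec, hv0, Matrix.mulVec_zero]
    have h3 : En k *ᵥ v = 0 := by
      by_contra h4
      exact hA (Matrix.exists_mulVec_eq_zero_iff.mp ⟨_, h4, h2⟩)
    exact hv (inj_of_isometry (En_isometry k) (by rw [h3, Matrix.mulVec_zero]))
  · exact key

lemma trace_key (a : ι → Fin n → ℝ) (U : ι → Matrix (Fin n) (Fin n) ℂ)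
    (L : Matrix (Fin n) (Fin n) ℂ) :
    ∑ i, ∑ k, a i k * (((U i * En k)ᴴ * L * (U i * En k)).trace).re
      = ((L * ∑ i, U i * Dg (a i) * (U i)ᴴ).trace).re := by
  rw [Finset.mul_sum, trace_sum, Complex.re_sum]
  refine Finset.sum_congr rfl fun i _ => ?_
  rw [Dg, Finset.mul_sum, Finset.sum_mul, Finset.mul_sum, trace_sum, Complex.re_sum]
  refine Finset.sum_congr rfl fun k _ => ?_
  have h2 : ((U i * En k)ᴴ * L * (U i * En k)).trace
      = (L * (U i * (En k * (En k)ᴴ) * (U i)ᴴ)).trace := by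
    rw [Matrix.mul_assoc, trace_mul_comm]
    simp only [conjTranspose_mul, Matrix.mul_assoc]
  rw [h2]
  simp [trace_smul]

lemma isom_proj {l m : Type*} [Fintype l] [DecidableEq l] [Fintype m] [DecidableEq m]
    {V : Matrix l m ℂ} (hV : Vᴴ * V = 1) : (1 - V * Vᴴ).PosSemidef := by
  have : 1 - V * Vᴴ = (1 - V * Vᴴ)ᴴ * (1 - V * Vᴴ) := by
    have h : V * Vᴴ * (V * Vᴴ) = V * Vᴴ := by
      rw [Matrix.mul_assoc, ← Matrix.mul_assoc Vᴴ, hV, Matrix.one_mul]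
    rw [conjTranspose_sub, conjTranspose_mul, conjTranspose_conjTranspose, conjTranspose_one,
      Matrix.mul_sub, Matrix.sub_mul, Matrix.sub_mul, h]
    simp
  rw [this]
  exact Matrix.posSemidef_conjTranspose_mul_self _

/-- the error term -/
def Er (a : ι → Fin n → ℝ) (c : ℝ) (W : ι → Matrix (Fin n) (Fin n) ℂ) : Matrix (Fin n) (Fin n) ℂ :=
  ∑ i, W i * Dg (a i) * (W i)ᴴ - (c : ℂ) • 1

lemma Er_eq (a : ι → Fin n → ℝ) (c : ℝ) (W : ι → Matrix (Fin n) (Fin n) ℂ) :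
    Er a c W = ∑ i, ∑ k, (a i k : ℂ) • ((W i * En k) * (W i * En k)ᴴ) - (c : ℂ) • 1 := by
  rw [Er]
  congr 1
  refine Finset.sum_congr rfl fun i _ => ?_
  rw [Dg, Finset.mul_sum, Finset.sum_mul]
  refine Finset.sum_congr rfl fun k _ => ?_
  simp only [conjTranspose_mul, Matrix.mul_assoc, Matrix.mul_smul, Matrix.smul_mul]

lemma Er_herm (a : ι → Fin n → ℝ) (c : ℝ) (W : ι → Matrix (Fin n) (Fin n) ℂ) :
    (Er a c W).IsHermitian := by
  rw [Er_eq, Matrix.IsHermitian]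
  simp [conjTranspose_sub, conjTranspose_sum, conjTranspose_smul]

lemma psd_real_smul {m : Type*} [Fintype m] {A : Matrix m m ℂ} (hA : A.PosSemidef) {r : ℝ} (hr : 0 ≤ r) :
    ((r : ℂ) • A).PosSemidef :=
  hA.smul (a := (r : ℂ)) (by rw [Complex.zero_le_real]; exact hr)

lemma Er_lower {a : ι → Fin n → ℝ} (ha : ∀ i k, 0 ≤ a i k) {c : ℝ}
    (W : ι → Matrix (Fin n) (Fin n) ℂ) :
    (Er a c W + (c : ℂ) • 1).PosSemidef := by
  rw [Er_eq, sub_add_cancel]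
  refine Matrix.posSemidef_sum _ fun i _ => Matrix.posSemidef_sum _ fun k _ => ?_
  exact psd_real_smul (Matrix.posSemidef_self_mul_conjTranspose _) (ha i k)

lemma Er_upper {a : ι → Fin n → ℝ} (ha : ∀ i k, 0 ≤ a i k) {c : ℝ} (hc : 0 ≤ c)
    {W : ι → Matrix (Fin n) (Fin n) ℂ} (hW : ∀ i, (W i)ᴴ * W i = 1) :
    (((∑ i, ∑ k, a i k : ℝ) : ℂ) • 1 - Er a c W).PosSemidef := by
  have : ((∑ i, ∑ k, a i k : ℝ) : ℂ) • 1 - Er a c W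
      = ∑ i, ∑ k, (a i k : ℂ) • (1 - (W i * En k) * (W i * En k)ᴴ) + (c : ℂ) • 1 := by
    rw [Er_eq]
    simp only [smul_sub, Finset.sum_sub_distrib, Complex.ofReal_sum, Finset.sum_smul]
    abel
  rw [this]
  refine Matrix.PosSemidef.add ?_ (psd_real_smul Matrix.PosSemidef.one hc)
  refine Matrix.posSemidef_sum _ fun i _ => Matrix.posSemidef_sum _ fun k _ => ?_
  exact psd_real_smul (isom_proj (isom_En (hW i) k)) (ha i k)

end descent

section descent2

variable {n : ℕ} {ι : Type*} [Fintype ι]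

lemma trace_sq_nonneg {E : Matrix (Fin n) (Fin n) ℂ} (hE : E.IsHermitian) :
    0 ≤ ((E * E).trace).re := by
  have h := (Matrix.posSemidef_conjTranspose_mul_self E).trace_nonneg
  rw [hE.eq] at h
  exact (Complex.le_def.mp h).1

lemma descent_step {a : ι → Fin n → ℝ} (ha : ∀ i k, 0 ≤ a i k) {c : ℝ} (hc : 0 ≤ c)
    {s : ℝ} (hs0 : 0 < s) (hsB : 2 * s * (∑ i, ∑ k, a i k) ≤ 1) (hsc : 4 * s * c ≤ 1)
    {X : ι → Matrix (Fin n) (Fin n) ℂ} (hX : ∀ i, (X i).det ≠ 0)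
    {h : Matrix (Fin n) (Fin n) ℂ} (hh : h.PosDef) :
    ∃ W : ι → Matrix (Fin n) (Fin n) ℂ, (∀ i, (W i)ᴴ * W i = 1) ∧
      ∃ h' : Matrix (Fin n) (Fin n) ℂ, (h' - ((1 / 2 : ℝ) : ℂ) • h).PosSemidef ∧
        (((3 / 2 : ℝ) : ℂ) • h - h').PosSemidef ∧
        phi a c X h' ≤ phi a c X h - s / 2 * ((Er a c W * Er a c W).trace).re := by
  obtain ⟨b, hb, rfl⟩ := pd_factor hh
  choose W hW T hT hWT using fun i => qr_flag (A := b * X i) (by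
    rw [det_mul]; exact mul_ne_zero hb (hX i))
  refine ⟨W, hW, ?_⟩
  set E := Er a c W with hE
  have hEh : E.IsHermitian := Er_herm a c W
  set B := ∑ i, ∑ k, a i k with hB
  have p1 : (1 - (2 * s : ℂ) • E).PosSemidef := by
    have h1 := (psd_real_smul (Er_upper ha hc hW) (r := 2 * s) (by positivity)).add
      (psd_real_smul (Matrix.PosSemidef.one (n := Fin n) (R := ℂ)) (r := 1 - 2 * s * B) (by linarith))
    rw [← hB] at h1
    convert h1 using 1
    push_cast
    module
  have p2 : (1 + (2 * s : ℂ) • E).PosSemidef := by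
    have h1 := (psd_real_smul (Er_lower (c := c) ha W) (r := 2 * s) (by positivity)).add
      (psd_real_smul (Matrix.PosSemidef.one (n := Fin n) (R := ℂ)) (r := 1 - 2 * s * c)
        (by nlinarith [mul_nonneg hs0.le hc]))
    convert h1 using 1
    push_cast
    module
  set D : Matrix (Fin n) (Fin n) ℂ := 1 + ((-s : ℝ) : ℂ) • E with hD
  have hDpd : D.PosDef := by
    refine pd_of_lower (r := 1 / 2) (by norm_num) ?_
    have h1 := psd_real_smul p1 (r := 1 / 2) (by norm_num)
    convert h1 using 1
    rw [hD]
    push_cast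
    module
  refine ⟨bᴴ * D * b, ?_, ?_, ?_⟩
  · have h1 := (psd_real_smul p1 (r := 1 / 2) (by norm_num)).conjTranspose_mul_mul_same b
    convert h1 using 1
    have : ((1 / 2 : ℝ) : ℂ) • (1 - (2 * s : ℂ) • E) = D - ((1 / 2 : ℝ) : ℂ) • 1 := by
      rw [hD]; push_cast; module
    rw [this, Matrix.mul_sub, Matrix.sub_mul]
    simp
  · have h1 := (psd_real_smul p2 (r := 1 / 2) (by norm_num)).conjTranspose_mul_mul_same b
    convert h1 using 1
    have : ((1 / 2 : ℝ) : ℂ) • (1 + (2 * s : ℂ) • E) = ((3 / 2 : ℝ) : ℂ) • 1 - D := by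
      rw [hD]; push_cast; module
    rw [this, Matrix.mul_sub, Matrix.sub_mul]
    simp
  · have hl1 : ld (bᴴ * D * b) = 2 * ld b + ld D := ld_conj (pd_det_ne hDpd) hb
    have hl2 : ld (bᴴ * b) = 2 * ld b := by
      have := ld_conj (A := (1 : Matrix (Fin n) (Fin n) ℂ)) (B := b) (by simp) hb
      rw [Matrix.mul_one, ld_one] at this
      linarith
    have hl3 : -s * (E.trace).re - 2 * s ^ 2 * ((E * E).trace).re ≤ ld D := by
      have := ld_one_add_ge hEh (-s) (by
        convert p1 using 1; push_cast; module) (by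
        convert p2 using 1; push_cast; module)
      rw [← hD] at this
      nlinarith
    have hterm : ∀ i (k : Fin n), ld ((X i * En k)ᴴ * (bᴴ * D * b) * (X i * En k))
        ≤ ld ((X i * En k)ᴴ * (bᴴ * b) * (X i * En k))
          + -s * (((W i * En k)ᴴ * E * (W i * En k)).trace).re := by
      intro i k
      set V := W i * En k with hV
      have hVi : Vᴴ * V = 1 := isom_En (hW i) k
      have e0 : b * (X i * En k) = V * T i k := by rw [← Matrix.mul_assoc, hWT]
      have e1 : (X i * En k)ᴴ * (bᴴ * D * b) * (X i * En k) = (T i k)ᴴ * (Vᴴ * D * V) * T i k := by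
        calc _ = (b * (X i * En k))ᴴ * D * (b * (X i * En k)) := by
              simp only [conjTranspose_mul, Matrix.mul_assoc]
          _ = _ := by rw [e0]; simp only [conjTranspose_mul, Matrix.mul_assoc]
      have e2 : (X i * En k)ᴴ * (bᴴ * b) * (X i * En k) = (T i k)ᴴ * 1 * T i k := by
        calc _ = (b * (X i * En k))ᴴ * (b * (X i * En k)) := by
              simp only [conjTranspose_mul, Matrix.mul_assoc]
          _ = (T i k)ᴴ * (Vᴴ * V) * T i k := by
              rw [e0]; simp only [conjTranspose_mul, Matrix.mul_assoc]
          _ = _ := by rw [hVi]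
      have hpd : (Vᴴ * D * V).PosDef := gram_pd hDpd (inj_of_isometry hVi)
      have e3 : Vᴴ * D * V = 1 + ((-s : ℝ) : ℂ) • (Vᴴ * E * V) := by
        rw [hD, Matrix.mul_add, Matrix.add_mul, Matrix.mul_one, hVi]
        simp only [Matrix.mul_smul, Matrix.smul_mul]
      rw [e1, e2, ld_conj (pd_det_ne hpd) (hT i k), ld_conj (by simp) (hT i k), ld_one]
      have hH : (Vᴴ * E * V).IsHermitian := by
        rw [Matrix.IsHermitian]
        simp only [conjTranspose_mul, conjTranspose_conjTranspose, hEh.eq, Matrix.mul_assoc]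
      rw [e3] at hpd ⊢
      have := ld_one_add_le hH (-s) hpd
      linarith
    have hsum : ∑ i, ∑ k, a i k * ld ((X i * En k)ᴴ * (bᴴ * D * b) * (X i * En k))
        ≤ ∑ i, ∑ k, a i k * ld ((X i * En k)ᴴ * (bᴴ * b) * (X i * En k))
          + -s * ∑ i, ∑ k, a i k * (((W i * En k)ᴴ * E * (W i * En k)).trace).re := by
      rw [Finset.mul_sum, ← Finset.sum_add_distrib]
      refine Finset.sum_le_sum fun i _ => ?_
      rw [Finset.mul_sum, ← Finset.sum_add_distrib]
      refine Finset.sum_le_sum fun k _ => ?_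
      have := mul_le_mul_of_nonneg_left (hterm i k) (ha i k)
      linarith
    have htr : ∑ i, ∑ k, a i k * (((W i * En k)ᴴ * E * (W i * En k)).trace).re
        = ((E * E).trace).re + c * (E.trace).re := by
      rw [trace_key]
      have : ∑ i, W i * Dg (a i) * (W i)ᴴ = E + (c : ℂ) • 1 := by rw [hE, Er, sub_add_cancel]
      rw [this, Matrix.mul_add, trace_add]
      simp [trace_smul]
    rw [htr] at hsum
    rw [phi, phi, hl1, hl2]
    have ht := trace_sq_nonneg hEh
    have h5 := mul_le_mul_of_nonneg_left hl3 hc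
    have h6 : 2 * c * s ^ 2 * ((E * E).trace).re ≤ s / 2 * ((E * E).trace).re := by
      refine mul_le_mul_of_nonneg_right ?_ ht
      nlinarith
    nlinarith

lemma descent_iter {a : ι → Fin n → ℝ} (ha : ∀ i k, 0 ≤ a i k) {c : ℝ} (hc : 0 ≤ c)
    {s : ℝ} (hs0 : 0 < s) (hsB : 2 * s * (∑ i, ∑ k, a i k) ≤ 1) (hsc : 4 * s * c ≤ 1)
    {X : ι → Matrix (Fin n) (Fin n) ℂ} (hX : ∀ i, (X i).det ≠ 0) {ε : ℝ}
    (hε : ∀ W : ι → Matrix (Fin n) (Fin n) ℂ, (∀ i, (W i)ᴴ * W i = 1) →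
      ε ≤ ((Er a c W * Er a c W).trace).re) (t : ℕ) :
    ∃ h : Matrix (Fin n) (Fin n) ℂ, (h - (((1 / 2) ^ t : ℝ) : ℂ) • 1).PosSemidef ∧
      ((((3 / 2) ^ t : ℝ) : ℂ) • 1 - h).PosSemidef ∧
      phi a c X h ≤ phi a c X 1 - t * (s / 2 * ε) := by
  induction t with
  | zero => exact ⟨1, by simp [Matrix.PosSemidef.zero], by simp [Matrix.PosSemidef.zero], by simp⟩
  | succ t ih =>
    obtain ⟨h, h1, h2, h3⟩ := ih
    obtain ⟨W, hW, h', g1, g2, g3⟩ := descent_step ha hc hs0 hsB hsc hX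
      (pd_of_lower (r := (1 / 2) ^ t) (by positivity) h1)
    refine ⟨h', ?_, ?_, ?_⟩
    · have := g1.add (psd_real_smul h1 (r := 1 / 2) (by norm_num))
      convert this using 1
      rw [pow_succ]; push_cast; module
    · have := g2.add (psd_real_smul h2 (r := 3 / 2) (by norm_num))
      convert this using 1
      rw [pow_succ]; push_cast; module
    · have := mul_le_mul_of_nonneg_left (hε W hW) (by positivity : 0 ≤ s / 2)
      push_cast
      linarith

lemma approx_sol {a a' : ι → Fin n → ℝ} (ha : ∀ i k, 0 ≤ a i k) (ha' : ∀ i k, 0 ≤ a' i k)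
    {c c' : ℝ} (hc : 0 ≤ c) (hc' : 0 ≤ c')
    {U U' : ι → Matrix (Fin n) (Fin n) ℂ} (hU : ∀ i, (U i)ᴴ * U i = 1)
    (hU' : ∀ i, (U' i)ᴴ * U' i = 1)
    (hsum : ∑ i, U i * Dg (a i) * (U i)ᴴ = (c : ℂ) • 1)
    (hsum' : ∑ i, U' i * Dg (a' i) * (U' i)ᴴ = (c' : ℂ) • 1) {ε : ℝ} (hε : 0 < ε) :
    ∃ W : ι → Matrix (Fin n) (Fin n) ℂ, (∀ i, (W i)ᴴ * W i = 1) ∧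
      ((Er (fun i k => a i k + a' i k) (c + c') W * Er (fun i k => a i k + a' i k) (c + c') W).trace).re
        < ε := by
  by_contra hcon
  push Not at hcon
  obtain ⟨K, hK⟩ := good_z ha ha' hc hc' hU hU' hsum hsum'
  set α : ι → Fin n → ℝ := fun i k => a i k + a' i k with hα
  have hα0 : ∀ i k, 0 ≤ α i k := fun i k => add_nonneg (ha i k) (ha' i k)
  set d := c + c' with hd
  have hd0 : 0 ≤ d := add_nonneg hc hc'
  set B := ∑ i, ∑ k, α i k with hB
  have hB0 : 0 ≤ B := Finset.sum_nonneg fun i _ => Finset.sum_nonneg fun k _ => hα0 i k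
  set s : ℝ := 1 / (4 * (B + d + 1)) with hs
  have hpos : 0 < B + d + 1 := by linarith
  have hs0 : 0 < s := by rw [hs]; positivity
  have hsmul : s * (4 * (B + d + 1)) = 1 := by rw [hs]; field_simp
  set C3 : ℝ := ∑ i, ∑ k : Fin n, α i k * ld (((9 / 4 : ℝ) : ℂ) • (1 : Matrix {j : Fin n // j ≤ k} _ ℂ))
    with hC3
  obtain ⟨t, ht⟩ := exists_nat_gt ((C3 + K) / (s / 2 * ε))
  rw [div_lt_iff₀ (by positivity)] at ht
  obtain ⟨X, hX1, hX2, hX3⟩ := hK ((1 / 2) ^ t) ((3 / 2) ^ t) (by positivity) (by positivity)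
  have hXpd : ∀ i, ((X i)ᴴ * X i).PosDef := fun i => pd_of_lower (by norm_num) (hX1 i)
  have hXd : ∀ i, (X i).det ≠ 0 := by
    intro i h0
    exact pd_det_ne (hXpd i) (by rw [det_mul, h0, mul_zero])
  obtain ⟨h, h1, h2, h3⟩ := descent_iter hα0 hd0 hs0 (by nlinarith [mul_nonneg hs0.le hB0, mul_nonneg hs0.le hd0])
    (by nlinarith [mul_nonneg hs0.le hB0, mul_nonneg hs0.le hd0]) hXd hcon t
  have h4 := hX3 h h1 h2
  have h5 : phi α d X 1 ≤ C3 := by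
    rw [phi, ld_one, mul_zero, sub_zero]
    refine Finset.sum_le_sum fun i _ => Finset.sum_le_sum fun k _ => ?_
    refine mul_le_mul_of_nonneg_left ?_ (hα0 i k)
    have e1 : (X i * En k)ᴴ * (1 : Matrix (Fin n) (Fin n) ℂ) * (X i * En k) = (En k)ᴴ * ((X i)ᴴ * X i) * En k := by
      simp only [conjTranspose_mul, Matrix.mul_assoc, Matrix.one_mul]
    rw [e1]
    refine ld_mono (gram_pd (hXpd i) (inj_of_isometry (En_isometry k))) ?_
    have := (hX2 i).conjTranspose_mul_mul_same (En k)
    convert this using 1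
    rw [Matrix.mul_sub, Matrix.sub_mul]
    simp [En_isometry]
  linarith

end descent2

section core

variable {n : ℕ} {ι : Type*} [Fintype ι]

lemma compact_unitary : IsCompact {W : ι → Matrix (Fin n) (Fin n) ℂ | ∀ i, (W i)ᴴ * W i = 1} := by
  have hK : IsCompact (Set.univ.pi fun _ : ι => Set.univ.pi fun _ : Fin n =>
      Set.univ.pi fun _ : Fin n => Metric.closedBall (0 : ℂ) 1) :=
    isCompact_univ_pi fun _ => isCompact_univ_pi fun _ => isCompact_univ_pi fun _ =>
      isCompact_closedBall _ _
  refine IsCompact.of_isClosed_subset hK ?_ ?_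
  · have : {W : ι → Matrix (Fin n) (Fin n) ℂ | ∀ i, (W i)ᴴ * W i = 1}
        = ⋂ i, {W : ι → Matrix (Fin n) (Fin n) ℂ | (W i)ᴴ * W i = 1} := by
      ext W; simp
    rw [this]
    refine isClosed_iInter fun i => isClosed_eq ?_ continuous_const
    have h : Continuous fun W : ι → Matrix (Fin n) (Fin n) ℂ => W i := continuous_apply i
    exact h.matrix_conjTranspose.matrix_mul h
  · intro W hW i _ j _ k _
    rw [mem_closedBall_zero_iff]
    exact entry_norm_bound_of_unitary (mem_unitaryGroup_iff'.mpr (hW i)) j k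

lemma Er_cont (a : ι → Fin n → ℝ) (c : ℝ) : Continuous (Er a c) := by
  unfold Er
  refine Continuous.sub (continuous_finsetSum _ fun i _ => ?_) continuous_const
  have h : Continuous fun W : ι → Matrix (Fin n) (Fin n) ℂ => W i := continuous_apply i
  exact (h.matrix_mul continuous_const).matrix_mul h.matrix_conjTranspose

theorem core {a a' : ι → Fin n → ℝ} (ha : ∀ i k, 0 ≤ a i k) (ha' : ∀ i k, 0 ≤ a' i k)
    {c c' : ℝ} (hc : 0 ≤ c) (hc' : 0 ≤ c')
    {U U' : ι → Matrix (Fin n) (Fin n) ℂ} (hU : ∀ i, (U i)ᴴ * U i = 1)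
    (hU' : ∀ i, (U' i)ᴴ * U' i = 1)
    (hsum : ∑ i, U i * Dg (a i) * (U i)ᴴ = (c : ℂ) • 1)
    (hsum' : ∑ i, U' i * Dg (a' i) * (U' i)ᴴ = (c' : ℂ) • 1) :
    ∃ W : ι → Matrix (Fin n) (Fin n) ℂ, (∀ i, (W i)ᴴ * W i = 1) ∧
      ∑ i, W i * Dg (fun k => a i k + a' i k) * (W i)ᴴ = ((c + c' : ℝ) : ℂ) • 1 := by
  set α : ι → Fin n → ℝ := fun i k => a i k + a' i k with hα
  have hcont : Continuous fun W : ι → Matrix (Fin n) (Fin n) ℂ =>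
      ((Er α (c + c') W * Er α (c + c') W).trace).re :=
    Complex.continuous_re.comp ((Er_cont α _).matrix_mul (Er_cont α _)).matrix_trace
  obtain ⟨W, hW, hmin⟩ := compact_unitary.exists_isMinOn ⟨U, hU⟩ hcont.continuousOn
  refine ⟨W, hW, ?_⟩
  have hE := Er_herm α (c + c') W
  have h0 : ((Er α (c + c') W * Er α (c + c') W).trace).re = 0 := by
    refine le_antisymm ?_ (trace_sq_nonneg hE)
    by_contra hlt
    push Not at hlt
    obtain ⟨V, hV, hVlt⟩ := approx_sol ha ha' hc hc' hU hU' hsum hsum' hlt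
    exact absurd (hmin hV) (not_le.mpr hVlt)
  have h1 : ((Er α (c + c') W)ᴴ * Er α (c + c') W).trace = 0 := by
    have hp := (Matrix.posSemidef_conjTranspose_mul_self (Er α (c + c') W)).trace_nonneg
    have hi := (Complex.le_def.mp hp).2
    refine Complex.ext ?_ ?_
    · rw [hE.eq]; exact h0
    · exact hi.symm
  rw [trace_conjTranspose_mul_self_eq_zero_iff] at h1
  exact sub_eq_zero.mp h1

/-- flag coordinates of a diagonal matrix -/
lemma Dg_eq (a : Fin n → ℝ) :
    Dg a = diagonal (fun j => ((∑ k, if j ≤ k then a k else 0 : ℝ) : ℂ)) := by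
  ext i j
  rw [Dg, Matrix.sum_apply, diagonal_apply]
  have h : ∀ k : Fin n, (En k * (En k)ᴴ) i j = if i = j ∧ j ≤ k then 1 else 0 := by
    intro k
    rw [Matrix.mul_apply]
    by_cases hj : j ≤ k
    · rw [Finset.sum_eq_single (⟨j, hj⟩ : {j : Fin n // j ≤ k})]
      · simp [En, Matrix.one_apply, hj]
      · intro x _ hx
        have : j ≠ x.1 := fun h => hx (Subtype.ext h.symm)
        simp [En, Matrix.one_apply, this]
      · simp
    · rw [Finset.sum_eq_zero]
      · simp [hj]
      · intro x _
        have : j ≠ x.1 := fun h => hj (h ▸ x.2)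
        simp [En, Matrix.one_apply, this]
  simp only [Matrix.smul_apply, h]
  by_cases hij : i = j
  · subst hij
    simp [apply_ite]
  · simp [hij]

lemma flag_coeffs (L : Fin n → ℝ) (hL : Antitone L) (h0 : ∀ j, 0 ≤ L j) :
    ∃ a : Fin n → ℝ, (∀ k, 0 ≤ a k) ∧ ∀ j, ∑ k, (if j ≤ k then a k else 0) = L j := by
  let f : ℕ → ℝ := fun i => if h : i < n then L ⟨i, h⟩ else 0
  have hf : ∀ i, f (i + 1) ≤ f i := by
    intro i
    by_cases h1 : i + 1 < n
    · have h2 : i < n := by omega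
      simp only [f, h1, h2, dif_pos]
      exact hL (by simp)
    · by_cases h2 : i < n
      · simp only [f, h1, h2, dif_pos, dif_neg, not_false_eq_true]
        exact h0 _
      · simp [f, h1, h2]
  refine ⟨fun k => f k - f (k + 1), fun k => sub_nonneg.mpr (hf k), fun j => ?_⟩
  have h1 : ∑ k : Fin n, (if j ≤ k then f k - f (k + 1) else 0)
      = ∑ k ∈ Finset.range n, (if (j : ℕ) ≤ k then f k - f (k + 1) else 0) := by
    rw [Finset.sum_range]
    rfl
  rw [h1, ← Finset.sum_filter]
  have h2 : (Finset.range n).filter (fun k => (j : ℕ) ≤ k) = Finset.Ico (j : ℕ) n := by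
    ext k; simp; omega
  rw [h2]
  have h3 := Finset.sum_Ico_sub f (le_of_lt j.2)
  have h4 : f n = 0 := by simp [f]
  have h5 : f j = L j := by simp [f]
  have h6 : ∑ k ∈ Finset.Ico (j : ℕ) n, (f k - f (k + 1)) = -∑ k ∈ Finset.Ico (j : ℕ) n, (f (k + 1) - f k) := by
    rw [← Finset.sum_neg_distrib]
    exact Finset.sum_congr rfl fun _ _ => by ring
  rw [h6, h3, h4, h5]; ring

lemma psd_flag {A : Matrix (Fin n) (Fin n) ℂ} (hA : A.PosSemidef) :
    ∃ (W : Matrix (Fin n) (Fin n) ℂ) (a : Fin n → ℝ), Wᴴ * W = 1 ∧ (∀ k, 0 ≤ a k) ∧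
      A = W * Dg a * Wᴴ := by
  obtain ⟨W, e, w1, w2, he, hW⟩ := psd_spectral hA
  let τ : Equiv.Perm (Fin n) := Tuple.sort (fun i => - e i)
  have hmono : Monotone ((fun i => - e i) ∘ τ) := Tuple.monotone_sort _
  have hanti : Antitone (e ∘ τ) := by
    intro i j hij
    have := hmono hij
    simp only [Function.comp] at this ⊢
    linarith
  obtain ⟨a, ha, hae⟩ := flag_coeffs (e ∘ τ) hanti (fun j => he _)
  refine ⟨W.submatrix id τ, a, ?_, ha, ?_⟩
  · rw [conjTranspose_submatrix]
    have := Matrix.submatrix_mul_equiv Wᴴ W τ (Equiv.refl _) τ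
    simp only [Equiv.coe_refl] at this
    rw [this, w1]
    simp
  · rw [Dg_eq]
    simp only [hae]
    rw [hW, conjTranspose_submatrix]
    ext i j
    rw [Matrix.mul_apply, Matrix.mul_apply]
    simp only [Matrix.mul_diagonal, Matrix.submatrix_apply, id]
    exact (Equiv.sum_comp τ (fun x => W i x * (e x : ℂ) * Wᴴ x j)).symm

end core

section feas

variable {n N : ℕ}

/-- weights for which `σ` is a mixture of unitary conjugates of `ρ` -/
def Feas (ρ σ : Matrix (Fin n) (Fin n) ℂ) : Set (Fin N → ℝ) :=
  {p | (∀ i, 0 ≤ p i) ∧ ∑ i, p i = 1 ∧ ∃ U : Fin N → Matrix (Fin n) (Fin n) ℂ,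
    (∀ i, (U i)ᴴ * U i = 1) ∧ σ = ∑ i, (p i : ℂ) • (U i * ρ * (U i)ᴴ)}

lemma exists_shift {A : Matrix (Fin n) (Fin n) ℂ} (hA : A.IsHermitian) :
    ∃ x : ℝ, 0 ≤ x ∧ (A + (x : ℂ) • 1).PosSemidef := by
  obtain ⟨W, e, w1, w2, hW⟩ := herm_spectral hA
  refine ⟨∑ i, |e i|, Finset.sum_nonneg fun i _ => abs_nonneg _, ?_⟩
  have h1 : A + ((∑ i, |e i| : ℝ) : ℂ) • 1
      = W * diagonal (fun i => ((e i + ∑ i, |e i| : ℝ) : ℂ)) * Wᴴ := by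
    have h2 : diagonal (fun i => ((e i + ∑ i, |e i| : ℝ) : ℂ))
        = diagonal (fun i => (e i : ℂ)) + ((∑ i, |e i| : ℝ) : ℂ) • (1 : Matrix (Fin n) (Fin n) ℂ) := by
      ext i j
      by_cases hij : i = j
      · subst hij; simp
      · simp [hij]
    rw [h2, Matrix.mul_add, Matrix.add_mul, ← hW]
    simp [w2]
  rw [h1]
  refine Matrix.PosSemidef.mul_mul_conjTranspose_same (Matrix.PosSemidef.diagonal ?_) W
  intro i
  change (0 : ℂ) ≤ _
  rw [Complex.zero_le_real]
  have := Finset.single_le_sum (f := fun i => |e i|) (fun i _ => abs_nonneg _) (Finset.mem_univ i)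
  have := neg_abs_le (e i)
  linarith

lemma Dg_smul (r : ℝ) (a : Fin n → ℝ) : Dg (fun k => r * a k) = (r : ℂ) • Dg a := by
  rw [Dg, Dg, Finset.smul_sum]
  refine Finset.sum_congr rfl fun k _ => ?_
  rw [smul_smul, Complex.ofReal_mul]

lemma uni_mul {A B : Matrix (Fin n) (Fin n) ℂ} (hA : Aᴴ * A = 1) (hB : Bᴴ * B = 1) :
    (A * B)ᴴ * (A * B) = 1 := by
  rw [conjTranspose_mul, Matrix.mul_assoc, ← Matrix.mul_assoc Aᴴ, hA, Matrix.one_mul, hB]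

lemma uni_ct {A : Matrix (Fin n) (Fin n) ℂ} (hA : Aᴴ * A = 1) : (Aᴴ)ᴴ * Aᴴ = 1 := by
  rw [conjTranspose_conjTranspose]; exact mul_eq_one_comm.mp hA

lemma feas_to {ρ σ V V0 : Matrix (Fin n) (Fin n) ℂ} {x y : ℝ} {α ν : Fin n → ℝ}
    (hρ : ρ + (x : ℂ) • 1 = V * Dg α * Vᴴ) (hσ : -σ + (y : ℂ) • 1 = V0 * Dg ν * V0ᴴ)
    {p : Fin N → ℝ} (hps : ∑ i, p i = 1) {U : Fin N → Matrix (Fin n) (Fin n) ℂ}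
    (hU : ∀ i, (U i)ᴴ * U i = 1) (h : σ = ∑ i, (p i : ℂ) • (U i * ρ * (U i)ᴴ)) (t : ℝ) :
    ∑ i : Option (Fin N), (Option.elim i V0 (fun i => U i * V)) *
        Dg (Option.elim i (fun k => t * ν k) (fun i k => (t * p i) * α k)) *
        (Option.elim i V0 (fun i => U i * V))ᴴ = ((t * (x + y) : ℝ) : ℂ) • 1 := by
  rw [Fintype.sum_option]
  simp only [Option.elim]
  have h1 : ∀ i, U i * V * Dg (fun k => t * p i * α k) * (U i * V)ᴴ
      = ((t * p i : ℝ) : ℂ) • (U i * ρ * (U i)ᴴ) + ((t * p i : ℝ) : ℂ) • (x : ℂ) • 1 := by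
    intro i
    have e1 : U i * (V * Dg α * Vᴴ) * (U i)ᴴ = U i * ρ * (U i)ᴴ + (x : ℂ) • 1 := by
      rw [← hρ, Matrix.mul_add, Matrix.add_mul]
      simp [mul_eq_one_comm.mp (hU i)]
    rw [Dg_smul, ← smul_add, ← e1]
    simp only [conjTranspose_mul, Matrix.mul_assoc, Matrix.mul_smul, Matrix.smul_mul]
  simp only [h1]
  have h2 : V0 * Dg (fun k => t * ν k) * V0ᴴ = (t : ℂ) • (-σ + (y : ℂ) • 1) := by
    rw [Dg_smul, hσ]
    simp only [Matrix.mul_smul, Matrix.smul_mul]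
  rw [h2, Finset.sum_add_distrib, ← Finset.sum_smul]
  have h3 : ∑ i, ((t * p i : ℝ) : ℂ) = t := by
    rw [← Complex.ofReal_sum, ← Finset.mul_sum, hps, mul_one]
  have h4 : ∑ i, ((t * p i : ℝ) : ℂ) • (U i * ρ * (U i)ᴴ) = (t : ℂ) • σ := by
    rw [h, Finset.smul_sum]
    exact Finset.sum_congr rfl fun i _ => by rw [smul_smul, Complex.ofReal_mul]
  rw [h3, h4]
  push_cast
  module

theorem feas_convex {ρ σ : Matrix (Fin n) (Fin n) ℂ} (hρ : ρ.IsHermitian) (hσ : σ.IsHermitian) :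
    Convex ℝ (Feas (N := N) ρ σ) := by
  rintro p ⟨hp, hps, U, hU, hUe⟩ p' ⟨hp', hps', U', hU', hUe'⟩ t t' ht ht' htt
  obtain ⟨x, hx, hx1⟩ := exists_shift hρ
  obtain ⟨y, hy, hy1⟩ := exists_shift hσ.neg
  obtain ⟨V, α, hV, hα, hVe⟩ := psd_flag hx1
  obtain ⟨V0, ν, hV0, hν, hVe0⟩ := psd_flag hy1
  obtain ⟨W, hW, hWs⟩ := core (ι := Option (Fin N))
    (a := fun i => Option.elim i (fun k => t * ν k) (fun i k => (t * p i) * α k))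
    (a' := fun i => Option.elim i (fun k => t' * ν k) (fun i k => (t' * p' i) * α k))
    (by
      rintro (_ | i) k
      · exact mul_nonneg ht (hν k)
      · exact mul_nonneg (mul_nonneg ht (hp i)) (hα k))
    (by
      rintro (_ | i) k
      · exact mul_nonneg ht' (hν k)
      · exact mul_nonneg (mul_nonneg ht' (hp' i)) (hα k))
    (mul_nonneg ht (add_nonneg hx hy)) (mul_nonneg ht' (add_nonneg hx hy))
    (by
      rintro (_ | i)
      · exact hV0
      · exact uni_mul (hU i) hV)
    (by
      rintro (_ | i)
      · exact hV0
      · exact uni_mul (hU' i) hV)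
    (feas_to hVe hVe0 hps hU hUe t) (feas_to hVe hVe0 hps' hU' hUe' t')
  set r : Fin N → ℝ := t • p + t' • p' with hr
  have hrs : ∑ i, r i = 1 := by
    simp [hr, Finset.sum_add_distrib, ← Finset.mul_sum, hps, hps', htt]
  have hc : t * (x + y) + t' * (x + y) = x + y := by rw [← add_mul, htt, one_mul]
  rw [hc, Fintype.sum_option] at hWs
  simp only [Option.elim] at hWs
  have e0 : (fun k => t * ν k + t' * ν k) = ν := by
    funext k; rw [← add_mul, htt, one_mul]
  have e1 : ∀ i, (fun k => t * p i * α k + t' * p' i * α k) = fun k => r i * α k := by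
    intro i; funext k; simp [hr, add_mul]
  simp only [e0, e1, Dg_smul] at hWs
  set Y := W none * V0ᴴ with hY
  have hYu : Yᴴ * Y = 1 := uni_mul (hW _) (uni_ct hV0)
  have f0 : W none * Dg ν * (W none)ᴴ = Y * (-σ + (y : ℂ) • 1) * Yᴴ := by
    rw [hVe0, hY]
    have : W none * V0ᴴ * (V0 * Dg ν * V0ᴴ) * (W none * V0ᴴ)ᴴ
        = W none * (V0ᴴ * V0) * Dg ν * (V0ᴴ * V0) * (W none)ᴴ := by
      simp only [conjTranspose_mul, conjTranspose_conjTranspose, Matrix.mul_assoc]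
    rw [this, hV0]; simp
  have f1 : ∀ i, W (some i) * Dg α * (W (some i))ᴴ
      = (W (some i) * Vᴴ) * ρ * (W (some i) * Vᴴ)ᴴ + (x : ℂ) • 1 := by
    intro i
    have g1 : W (some i) * Vᴴ * (V * Dg α * Vᴴ) * (W (some i) * Vᴴ)ᴴ
        = W (some i) * (Vᴴ * V) * Dg α * (Vᴴ * V) * (W (some i))ᴴ := by
      simp only [conjTranspose_mul, conjTranspose_conjTranspose, Matrix.mul_assoc]
    rw [hV, ← hVe, Matrix.mul_add, Matrix.add_mul] at g1
    have g2 := mul_eq_one_comm.mp (uni_mul (hW (some i)) (uni_ct hV))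
    simp only [Matrix.mul_one, Matrix.mul_smul, Matrix.smul_mul, g2] at g1
    exact g1.symm
  have hYY := mul_eq_one_comm.mp hYu
  refine ⟨fun i => ?_, hrs, fun i => Yᴴ * (W (some i) * Vᴴ), fun i =>
    uni_mul (uni_ct hYu) (uni_mul (hW _) (uni_ct hV)), ?_⟩
  · exact add_nonneg (mul_nonneg ht (hp i)) (mul_nonneg ht' (hp' i))
  · have g0 : ∑ i, (r i : ℂ) • ((W (some i) * Vᴴ) * ρ * (W (some i) * Vᴴ)ᴴ) = Y * σ * Yᴴ := by
      rw [f0] at hWs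
      simp only [Matrix.mul_smul, Matrix.smul_mul, f1, smul_add, Finset.sum_add_distrib] at hWs
      rw [← Finset.sum_smul, ← Complex.ofReal_sum, hrs, Matrix.mul_add, Matrix.add_mul] at hWs
      simp only [Matrix.mul_smul, Matrix.smul_mul, Matrix.mul_one, hYY, Matrix.mul_neg,
        Matrix.neg_mul, Complex.ofReal_one, one_smul, Complex.ofReal_add, add_smul] at hWs
      rw [← sub_eq_zero] at hWs ⊢
      rw [← hWs]
      abel
    have g1 : σ = Yᴴ * (Y * σ * Yᴴ) * Y := by
      have : Yᴴ * (Y * σ * Yᴴ) * Y = (Yᴴ * Y) * σ * (Yᴴ * Y) := by simp only [Matrix.mul_assoc]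
      rw [this, hYu]; simp
    rw [g1, ← g0, Finset.mul_sum, Finset.sum_mul]
    refine Finset.sum_congr rfl fun i _ => ?_
    simp only [conjTranspose_mul, conjTranspose_conjTranspose, Matrix.mul_assoc, Matrix.mul_smul,
      Matrix.smul_mul]

lemma feas_perm {ρ σ : Matrix (Fin n) (Fin n) ℂ} {p : Fin N → ℝ} (hp : p ∈ Feas ρ σ)
    (τ : Equiv.Perm (Fin N)) : p ∘ τ ∈ Feas ρ σ := by
  obtain ⟨h1, h2, U, hU, h3⟩ := hp
  refine ⟨fun i => h1 _, ?_, fun i => U (τ i), fun i => hU _, ?_⟩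
  · rw [← h2]; exact Equiv.sum_comp τ p
  · rw [h3]; exact (Equiv.sum_comp τ (fun i => (p i : ℂ) • (U i * ρ * (U i)ᴴ))).symm

end feas

section rado

variable {N : ℕ}

lemma abel_nonneg {y v : Fin N → ℝ} (hy : Antitone y)
    (hv : ∀ k < N, 0 ≤ ∑ i ∈ Finset.univ.filter (fun i : Fin N => (i : ℕ) < k), v i)
    (hvN : ∑ i ∈ Finset.univ.filter (fun i : Fin N => (i : ℕ) < N), v i = 0) :
    0 ≤ ∑ i, v i * y i := by
  have hv0 : ∑ i, v i = 0 := by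
    rw [← hvN]; congr 1; ext i; simp
  set m := ∑ i, |y i| with hm
  obtain ⟨a, ha, hae⟩ := flag_coeffs (fun j => y j + m) (fun i j hij => by
    have := hy hij
    simp only
    linarith) (fun j => by
      have h1 := Finset.single_le_sum (f := fun i => |y i|) (fun i _ => abs_nonneg _)
        (Finset.mem_univ j)
      have h2 := neg_abs_le (y j)
      rw [← hm] at h1
      linarith)
  have h1 : ∑ i, v i * y i = ∑ i, v i * (y i + m) := by
    simp only [mul_add, Finset.sum_add_distrib, ← Finset.sum_mul, hv0]
    simp
  have h2 : ∑ i, v i * (y i + m) = ∑ k, a k * ∑ i, (if i ≤ k then v i else 0) := by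
    simp only [← hae, Finset.mul_sum]
    rw [Finset.sum_comm]
    refine Finset.sum_congr rfl fun k _ => Finset.sum_congr rfl fun i _ => ?_
    split_ifs <;> ring
  rw [h1, h2]
  refine Finset.sum_nonneg fun k _ => mul_nonneg (ha k) ?_
  rw [← Finset.sum_filter]
  have h3 : Finset.univ.filter (fun i : Fin N => i ≤ k)
      = Finset.univ.filter (fun i : Fin N => (i : ℕ) < (k : ℕ) + 1) := by
    refine Finset.filter_congr fun i _ => ?_
    rw [Fin.le_def]
    omega
  rw [h3]
  rcases Nat.lt_or_ge ((k : ℕ) + 1) N with h | h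
  · exact hv _ h
  · have : (k : ℕ) + 1 = N := by omega
    rw [this, hvN]

lemma rado {p q : Fin N → ℝ} (σ τ : Equiv.Perm (Fin N))
    (hq : Antitone (q ∘ σ)) (hp : Antitone (p ∘ τ))
    (h : ∀ k < N, ∑ i ∈ Finset.univ.filter (fun i : Fin N => (i : ℕ) < k), (q ∘ σ) i
      ≤ ∑ i ∈ Finset.univ.filter (fun i : Fin N => (i : ℕ) < k), (p ∘ τ) i)
    (hN : ∑ i ∈ Finset.univ.filter (fun i : Fin N => (i : ℕ) < N), (q ∘ σ) i
      = ∑ i ∈ Finset.univ.filter (fun i : Fin N => (i : ℕ) < N), (p ∘ τ) i) :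
    q ∈ convexHull ℝ (Set.range fun κ : Equiv.Perm (Fin N) => p ∘ κ) := by
  by_contra hcon
  have hclosed : IsClosed (convexHull ℝ (Set.range fun κ : Equiv.Perm (Fin N) => p ∘ κ)) :=
    ((Set.finite_range _).isCompact_convexHull ℝ).isClosed
  obtain ⟨f, u, hf1, hf2⟩ := geometric_hahn_banach_closed_point (convex_convexHull ℝ _) hclosed hcon
  set w : Fin N → ℝ := fun i => f (Pi.single i 1) with hw
  have hf : ∀ v : Fin N → ℝ, f v = ∑ i, v i * w i := by
    intro v
    conv_lhs => rw [pi_eq_sum_univ' v]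
    rw [map_sum]
    refine Finset.sum_congr rfl fun i _ => ?_
    rw [map_smul, smul_eq_mul, hw]
  let κ : Equiv.Perm (Fin N) := Tuple.sort (fun i => - w i)
  have hmono : Monotone ((fun i => - w i) ∘ κ) := Tuple.monotone_sort _
  have hanti : Antitone (w ∘ κ) := by
    intro i j hij
    have := hmono hij
    simp only [Function.comp] at this ⊢
    linarith
  have h1 : f q ≤ ∑ i, (q ∘ σ) i * (w ∘ κ) i := by
    rw [hf, ← Equiv.sum_comp κ]
    have := (hq.monovary hanti).sum_comp_perm_mul_le_sum_mul (σ := κ.trans σ.symm)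
    simpa using this
  have h2 := abel_nonneg (v := fun i => (p ∘ τ) i - (q ∘ σ) i) hanti (fun k hk => by
    rw [Finset.sum_sub_distrib]; exact sub_nonneg.mpr (h k hk)) (by
    rw [Finset.sum_sub_distrib, hN, sub_self])
  simp only [sub_mul, Finset.sum_sub_distrib] at h2
  have h3 := hf1 (p ∘ (κ.symm.trans τ)) (subset_convexHull ℝ _ ⟨_, rfl⟩)
  rw [hf, ← Equiv.sum_comp κ] at h3
  simp only [Function.comp, Equiv.trans_apply, Equiv.coe_trans, Equiv.symm_apply_apply] at h1 h2 h3
  linarith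

end rado

end

theorem convex_combination_isospectral {n N : ℕ}
    (ρ σ : Matrix (Fin n) (Fin n) ℂ) (hρ : ρ.IsHermitian) (hσ : σ.IsHermitian)
    (p : Fin N → ℝ) (hp : ∀ i, 0 ≤ p i) (hps : ∑ i, p i = 1)
    (U : Fin N → Matrix (Fin n) (Fin n) ℂ)
    (hU : ∀ i, U i ∈ Matrix.unitaryGroup (Fin n) ℂ)
    (hσeq : σ = ∑ i, (p i : ℂ) • (U i * ρ * (U i)ᴴ))
    (q : Fin N → ℝ) (hq : ∀ i, 0 ≤ q i) (hqs : ∑ i, q i = 1)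
    (hmaj : Majorizes q p) :
    ∃ V : Fin N → Matrix (Fin n) (Fin n) ℂ,
      (∀ i, V i ∈ Matrix.unitaryGroup (Fin n) ℂ) ∧
      σ = ∑ i, (q i : ℂ) • (V i * ρ * (V i)ᴴ) := by
  obtain ⟨qs, ps, ⟨σ1, rfl⟩, hqa, ⟨τ1, rfl⟩, hpa, h1, h2⟩ := hmaj
  have hmem : p ∈ Feas ρ σ :=
    ⟨hp, hps, U, fun i => mem_unitaryGroup_iff'.mp (hU i), hσeq⟩
  have hsub : convexHull ℝ (Set.range fun κ : Equiv.Perm (Fin N) => p ∘ κ) ⊆ Feas ρ σ := by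
    refine convexHull_min ?_ (feas_convex hρ hσ)
    rintro _ ⟨κ, rfl⟩
    exact feas_perm hmem κ
  obtain ⟨_, _, V, hV, hVe⟩ := hsub (rado σ1 τ1 hqa hpa h1 h2)
  exact ⟨V, fun i => mem_unitaryGroup_iff'.mpr (hV i), hVe⟩
end

section
/- Suppose an $n \times n$ Hermitian matrix $\sigma$ can be written as a convex combination of unitary conjugates of a fixed $n \times n$ Hermitian matrix $\rho$ with $N$ terms: $\sigma = \sum_{i=1}^N p_i U_i \rho U_i^\dagger$, where each $U_i$ is unitary, $p_i \geq 0$, and $\sum_{i=1}^N p_i = 1$. Then there exist $n \times n$ unitary matrices $V_1, \ldots, V_N$ such that $\sigma = \frac{1}{N} \sum_{i=1}^N V_i \rho V_i^\dagger$. -/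
open Matrix


namespace CCEW

set_option linter.unusedSectionVars false
set_option linter.unusedDecidableInType false
set_option linter.unusedFintypeInType false

/-- Existence of a `k`-dimensional subspace in prescribed position to flags moved by `g i`. -/
def Sol {ι m : Type*} [Fintype m] {R : Type*} [CommRing R] {k : ℕ}
    (pat : ι → m → Fin k → Prop) (g : ι → Matrix m m R) : Prop :=
  ∃ (X : Matrix m (Fin k) R) (L : Matrix (Fin k) m R) (E : ι → Matrix m (Fin k) R)
    (M M' : ι → Matrix (Fin k) (Fin k) R),
    L * X = 1 ∧ (∀ i, M i * M' i = 1) ∧ (∀ i, X * M i = g i * E i) ∧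
      ∀ i r j, ¬ pat i r j → E i r j = 0

section alg
variable {ι m : Type*} [Fintype m] [DecidableEq m] {k : ℕ} {pat : ι → m → Fin k → Prop}

theorem Sol.map {R S : Type*} [CommRing R] [CommRing S] (f : R →+* S) {g : ι → Matrix m m R}
    (h : Sol pat g) : Sol pat (fun i => (g i).map f) := by
  obtain ⟨X, L, E, M, M', h1, h2, h3, h4⟩ := h
  refine ⟨X.map f, L.map f, fun i => (E i).map f, fun i => (M i).map f, fun i => (M' i).map f,
    ?_, fun i => ?_, fun i => ?_, fun i r j hp => ?_⟩
  · rw [← Matrix.map_mul, h1, Matrix.map_one _ f.map_zero f.map_one]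
  · rw [← Matrix.map_mul, h2, Matrix.map_one _ f.map_zero f.map_one]
  · simp only [← Matrix.map_mul, h3]
  · simp [h4 i r j hp]

theorem Sol.pi {U R : Type*} [CommRing R] {g : U → ι → Matrix m m R}
    (h : ∀ u, Sol pat (g u)) :
    Sol (R := U → R) pat (fun i => Matrix.of fun r s u => g u i r s) := by
  choose X L E M M' h1 h2 h3 h4 using h
  refine ⟨Matrix.of fun r s u => X u r s, Matrix.of fun r s u => L u r s,
    fun i => Matrix.of fun r s u => E u i r s, fun i => Matrix.of fun r s u => M u i r s,
    fun i => Matrix.of fun r s u => M' u i r s, ?_, fun i => ?_, fun i => ?_, fun i r j hp => ?_⟩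
  · ext r s u
    have := congrFun (congrFun (h1 u) r) s
    simp only [Matrix.mul_apply] at this ⊢
    simp only [Matrix.of_apply, Finset.sum_apply, Pi.mul_apply, this]
    by_cases hrs : r = s <;> simp [Matrix.one_apply, hrs]
  · ext r s u
    have := congrFun (congrFun (h2 u i) r) s
    simp only [Matrix.mul_apply] at this ⊢
    simp only [Matrix.of_apply, Finset.sum_apply, Pi.mul_apply, this]
    by_cases hrs : r = s <;> simp [Matrix.one_apply, hrs]
  · ext r s u
    have := congrFun (congrFun (h3 u i) r) s
    simp only [Matrix.mul_apply] at this ⊢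
    simpa only [Matrix.of_apply, Finset.sum_apply, Pi.mul_apply] using this
  · ext u
    simp [h4 u i r j hp]

theorem elim_aux {K : Type*} [Field K] (O : ValuationSubring K) (k : ℕ) :
    ∀ (v : Fin k → m → K), LinearIndependent K v →
    ∃ (w : Fin k → m → K) (r : Fin k → m), (∀ j, w j ∈ Submodule.span K (v '' Set.Iic j)) ∧
      (∀ j a, w j a ∈ O) ∧ (∀ j, w j (r j) = 1) ∧ ∀ i j, i < j → w j (r i) = 0 := by
  induction k with
  | zero => intro v _; exact ⟨v, fun j => j.elim0, fun j => j.elim0, fun j => j.elim0,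
      fun j => j.elim0, fun j => j.elim0⟩
  | succ k ih =>
    intro v hv
    have hv' := hv.comp Fin.castSucc (Fin.castSucc_injective k)
    obtain ⟨w, r, h1, h2, h3, h4⟩ := ih _ hv'
    let T : Matrix (Fin k) (Fin k) K := Matrix.of fun i j => w j (r i)
    have hT : T.det = 1 := by
      rw [Matrix.det_of_isLowerTriangular]
      · simp [T, h3]
      · intro i j hij
        exact h4 i j hij
    let c : Fin k → K := T⁻¹ *ᵥ (fun i => v (Fin.last k) (r i))
    have hc : T *ᵥ c = fun i => v (Fin.last k) (r i) := by
      simp only [c, Matrix.mulVec_mulVec]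
      rw [Matrix.mul_nonsing_inv _ (by simp [hT]), Matrix.one_mulVec]
    let u : m → K := v (Fin.last k) - ∑ j, c j • w j
    have hu0 : ∀ i, u (r i) = 0 := by
      intro i
      have := congrFun hc i
      simp only [Matrix.mulVec, dotProduct, T, Matrix.of_apply] at this
      simp only [u, Pi.sub_apply, Finset.sum_apply, Pi.smul_apply, smul_eq_mul]
      rw [← this, sub_eq_zero]
      exact Finset.sum_congr rfl fun j _ => mul_comm _ _
    have hspan : ∀ j, w j ∈ Submodule.span K (Set.range (v ∘ Fin.castSucc)) := fun j =>
      Submodule.span_mono (Set.image_subset_range _ _) (h1 j)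
    have hune : u ≠ 0 := by
      intro h
      have h' : v (Fin.last k) = ∑ j, c j • w j := sub_eq_zero.1 h
      have hmem : v (Fin.last k) ∈ Submodule.span K (Set.range (v ∘ Fin.castSucc)) := by
        rw [h']
        exact Submodule.sum_mem _ fun j _ => Submodule.smul_mem _ _ (hspan j)
      have := linearIndependent_finSucc'.1 hv
      exact this.2 hmem
    obtain ⟨a0, ha0⟩ := Function.ne_iff.1 hune
    have : Nonempty m := ⟨a0⟩
    obtain ⟨a, ha⟩ := Finite.exists_max (fun a => O.valuation (u a))
    have hua : u a ≠ 0 := by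
      intro h
      have := ha a0
      rw [h, map_zero, le_zero_iff, map_eq_zero] at this
      exact ha0 this
    refine ⟨Fin.snoc w ((u a)⁻¹ • u), Fin.snoc r a, ?_, ?_, ?_, ?_⟩
    · intro j
      refine Fin.lastCases ?_ (fun j => ?_) j
      · simp only [Fin.snoc_last]
        refine Submodule.smul_mem _ _ (Submodule.sub_mem _ (Submodule.subset_span ⟨_, by simp, rfl⟩)
          (Submodule.sum_mem _ fun i _ => Submodule.smul_mem _ _ ?_))
        refine Submodule.span_mono ?_ (hspan i)
        rintro _ ⟨b, rfl⟩
        exact ⟨b.castSucc, by simp [Fin.le_last], rfl⟩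
      · simp only [Fin.snoc_castSucc]
        refine Submodule.span_mono ?_ (h1 j)
        rintro _ ⟨b, hb, rfl⟩
        exact ⟨b.castSucc, by simpa using hb, rfl⟩
    · intro j b
      refine Fin.lastCases ?_ (fun j => ?_) j
      · simp only [Fin.snoc_last]
        rw [← ValuationSubring.valuation_le_one_iff]
        simp only [Pi.smul_apply, smul_eq_mul, map_mul, map_inv₀]
        have hpos : 0 < O.valuation (u a) := by
          rw [zero_lt_iff]; simpa using hua
        rw [inv_mul_le_iff₀ hpos, mul_one]
        exact ha b
      · simp only [Fin.snoc_castSucc]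
        exact h2 j b
    · intro j
      refine Fin.lastCases ?_ (fun j => ?_) j
      · simp [hua]
      · simpa using h3 j
    · intro i j
      refine Fin.lastCases ?_ (fun j => ?_) j
      · refine Fin.lastCases ?_ (fun i => ?_) i
        · intro h; exact absurd h (lt_irrefl _)
        · intro _; simp [hu0]
      · refine Fin.lastCases ?_ (fun i => ?_) i
        · intro h
          exact absurd h (not_lt.2 (Fin.le_last _))
        · intro h; simpa using h4 i j (by simpa using h)

theorem elim_mat {K : Type*} [Field K] (O : ValuationSubring K) {k : ℕ}
    (E : Matrix m (Fin k) K) (L : Matrix (Fin k) m K) (hL : L * E = 1) :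
    ∃ (E' : Matrix m (Fin k) O) (L' : Matrix (Fin k) m O) (N N' : Matrix (Fin k) (Fin k) K),
      L' * E' = 1 ∧ E'.map O.subtype = E * N ∧ N * N' = 1 ∧
      ∀ r j, (∀ i, i ≤ j → E r i = 0) → E' r j = 0 := by
  have hli : LinearIndependent K (fun j => E.col j) := by
    have : Function.Injective E.mulVec := by
      intro x y hxy
      have := congrArg (L *ᵥ ·) hxy
      simpa [Matrix.mulVec_mulVec, hL] using this
    exact Matrix.mulVec_injective_iff.1 this
  obtain ⟨w, r, h1, h2, h3, h4⟩ := elim_aux O k _ hli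
  let E' : Matrix m (Fin k) O := Matrix.of fun a j => ⟨w j a, h2 j a⟩
  let T : Matrix (Fin k) (Fin k) O := E'.submatrix r id
  have hT : T.det = 1 := by
    rw [Matrix.det_of_isLowerTriangular]
    · refine Finset.prod_eq_one fun i _ => ?_
      apply Subtype.ext
      exact h3 i
    · intro i j hij
      apply Subtype.ext
      exact h4 i j hij
  let L' : Matrix (Fin k) m O := T⁻¹ * (1 : Matrix m m O).submatrix r id
  have hL' : L' * E' = 1 := by
    simp only [L', Matrix.mul_assoc]
    have : (1 : Matrix m m O).submatrix r id * E' = T := by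
      ext i j
      simp [Matrix.mul_apply, Matrix.one_apply, T]
    rw [this, Matrix.nonsing_inv_mul _ (by simp [hT])]
  have hN : ∀ j, ∃ c : Fin k → K, ∑ i, c i • E.col i = w j := by
    intro j
    have : w j ∈ Submodule.span K (Set.range fun j => E.col j) :=
      Submodule.span_mono (Set.image_subset_range _ _) (h1 j)
    exact (Submodule.mem_span_range_iff_exists_fun K).1 this
  choose c hc using hN
  let N : Matrix (Fin k) (Fin k) K := Matrix.of fun i j => c j i
  have hEN : E'.map O.subtype = E * N := by
    ext a j
    have := congrFun (hc j) a
    simp only [Finset.sum_apply, Pi.smul_apply, smul_eq_mul, Matrix.col_apply] at this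
    simp only [Matrix.map_apply, Matrix.mul_apply, N, Matrix.of_apply, E']
    change w j a = _
    rw [← this]
    exact Finset.sum_congr rfl fun _ _ => mul_comm _ _
  refine ⟨E', L', N, L'.map O.subtype * E, hL', hEN, ?_, ?_⟩
  · rw [mul_eq_one_comm, Matrix.mul_assoc, ← hEN, ← Matrix.map_mul, hL']
    exact Matrix.map_one _ (map_zero _) (map_one _)
  · intro a j hz
    apply Subtype.ext
    change w j a = 0
    have := h1 j
    refine Submodule.span_induction (p := fun x _ => x a = 0) ?_ rfl ?_ ?_ this
    · rintro _ ⟨i, hi, rfl⟩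
      exact hz i hi
    · intro x y _ _ hx hy; simp [hx, hy]
    · intro t x _ hx; simp [hx]

theorem Sol.valuation {K : Type*} [Field K] (O : ValuationSubring K)
    (hpat : ∀ i r j j', j ≤ j' → pat i r j → pat i r j')
    (g : ι → Matrix m m O) (hg : ∀ i, IsUnit (g i).det)
    (h : Sol pat (fun i => (g i).map O.subtype)) : Sol pat g := by
  obtain ⟨X, L, E, M, M', h1, h2, h3, h4⟩ := h
  obtain ⟨X', LX, NX, NX', hX1, hX2, hX3, -⟩ := elim_mat O X L h1
  have hE : ∀ i, (M' i * L * (g i).map O.subtype) * E i = 1 := by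
    intro i
    rw [Matrix.mul_assoc, ← h3, Matrix.mul_assoc, ← Matrix.mul_assoc L, h1, Matrix.one_mul,
      mul_eq_one_comm, h2]
  choose E' LE N N' hE1 hE2 hE3 hE4 using fun i => elim_mat O (E i) _ (hE i)
  have hinj : Function.Injective (O.subtype) := Subtype.val_injective
  have key : ∀ i, X' * (LX * g i * E' i) = g i * E' i := by
    intro i
    apply Matrix.map_injective hinj
    have hX : X'.map O.subtype * NX' = X := by
      rw [hX2, Matrix.mul_assoc, hX3, Matrix.mul_one]
    have hQ : X'.map O.subtype * (NX' * M i * N i) = (g i).map O.subtype * (E' i).map O.subtype := by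
      rw [hE2, ← Matrix.mul_assoc _ (E i), ← h3, ← hX]
      simp only [Matrix.mul_assoc]
    simp only [Matrix.map_mul, Matrix.mul_assoc]
    rw [← hQ, ← Matrix.mul_assoc (LX.map _), ← Matrix.map_mul, hX1,
      Matrix.map_one _ (map_zero _) (map_one _), Matrix.one_mul]
  refine ⟨X', LX, E', fun i => LX * g i * E' i, fun i => LE i * (g i)⁻¹ * X', hX1, ?_, key, ?_⟩
  · intro i
    rw [mul_eq_one_comm, Matrix.mul_assoc, key, Matrix.mul_assoc, ← Matrix.mul_assoc (g i)⁻¹,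
      Matrix.nonsing_inv_mul _ (hg i), Matrix.one_mul, hE1]
  · intro i r j hp
    exact hE4 i r j fun i' hi' => h4 i r i' fun hh => hp (hpat i r i' j hi' hh)


theorem exists_algHom {κ : Type*} [Field κ] [Algebra ℂ κ] (s : Set κ) (hs : s.Finite) :
    Nonempty (Algebra.adjoin ℂ s →ₐ[ℂ] ℂ) := by
  obtain ⟨I, hI⟩ := Ideal.exists_maximal (Algebra.adjoin ℂ s)
  have hft : Algebra.FiniteType ℂ (Algebra.adjoin ℂ s) := by
    rw [← Subalgebra.fg_iff_finiteType]
    exact Subalgebra.fg_def.2 ⟨s, hs, rfl⟩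
  let _ : Field (Algebra.adjoin ℂ s ⧸ I) := Ideal.Quotient.field I
  have hft' : Algebra.FiniteType ℂ (Algebra.adjoin ℂ s ⧸ I) :=
    Algebra.FiniteType.of_surjective (Ideal.Quotient.mkₐ ℂ I) (Ideal.Quotient.mkₐ_surjective ℂ I)
  have hfin : Module.Finite ℂ (Algebra.adjoin ℂ s ⧸ I) :=
    finite_of_finite_type_of_isJacobsonRing _ _
  have hb := IsAlgClosed.algebraMap_bijective_of_isIntegral (k := ℂ) (K := Algebra.adjoin ℂ s ⧸ I)
  exact ⟨((AlgEquiv.ofBijective (Algebra.ofId ℂ _) hb).symm : _ →ₐ[ℂ] ℂ).comp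
    (Ideal.Quotient.mkₐ ℂ I)⟩

theorem Sol.descent [Finite ι] {κ : Type*} [Field κ] [Algebra ℂ κ] (g : ι → Matrix m m ℂ)
    (h : Sol pat (fun i => (g i).map (algebraMap ℂ κ))) : Sol pat g := by
  obtain ⟨X, L, E, M, M', h1, h2, h3, h4⟩ := h
  let s : Set κ := (Set.range fun q : m × Fin k => X q.1 q.2) ∪
    (Set.range fun q : Fin k × m => L q.1 q.2) ∪
    (Set.range fun q : ι × m × Fin k => E q.1 q.2.1 q.2.2) ∪
    (Set.range fun q : ι × Fin k × Fin k => M q.1 q.2.1 q.2.2) ∪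
    (Set.range fun q : ι × Fin k × Fin k => M' q.1 q.2.1 q.2.2)
  have hs : s.Finite := by
    refine ((((Set.finite_range _).union (Set.finite_range _)).union (Set.finite_range _)).union
      (Set.finite_range _)).union (Set.finite_range _)
  obtain ⟨f⟩ := exists_algHom s hs
  have sub : s ⊆ Algebra.adjoin ℂ s := Algebra.subset_adjoin
  have mX : ∀ a j, X a j ∈ Algebra.adjoin ℂ s := fun a j =>
    sub (Or.inl (Or.inl (Or.inl (Or.inl ⟨(a, j), rfl⟩))))
  have mL : ∀ a j, L a j ∈ Algebra.adjoin ℂ s := fun a j =>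
    sub (Or.inl (Or.inl (Or.inl (Or.inr ⟨(a, j), rfl⟩))))
  have mE : ∀ i a j, E i a j ∈ Algebra.adjoin ℂ s := fun i a j =>
    sub (Or.inl (Or.inl (Or.inr ⟨(i, a, j), rfl⟩)))
  have mM : ∀ i a j, M i a j ∈ Algebra.adjoin ℂ s := fun i a j =>
    sub (Or.inl (Or.inr ⟨(i, a, j), rfl⟩))
  have mM' : ∀ i a j, M' i a j ∈ Algebra.adjoin ℂ s := fun i a j =>
    sub (Or.inr ⟨(i, a, j), rfl⟩)
  let v : Algebra.adjoin ℂ s →+* κ := (Algebra.adjoin ℂ s).val.toRingHom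
  have hv : Function.Injective v := Subtype.val_injective
  have hB : Sol pat (fun i => (g i).map (algebraMap ℂ (Algebra.adjoin ℂ s))) := by
    refine ⟨Matrix.of fun a j => ⟨X a j, mX a j⟩, Matrix.of fun a j => ⟨L a j, mL a j⟩,
      fun i => Matrix.of fun a j => ⟨E i a j, mE i a j⟩,
      fun i => Matrix.of fun a j => ⟨M i a j, mM i a j⟩,
      fun i => Matrix.of fun a j => ⟨M' i a j, mM' i a j⟩, ?_, fun i => ?_, fun i => ?_,
      fun i r j hp => ?_⟩
    · apply Matrix.map_injective hv
      dsimp only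
      rw [Matrix.map_mul, Matrix.map_one _ (map_zero _) (map_one _)]
      exact h1
    · apply Matrix.map_injective hv
      dsimp only
      rw [Matrix.map_mul, Matrix.map_one _ (map_zero _) (map_one _)]
      exact h2 i
    · apply Matrix.map_injective hv
      dsimp only
      rw [Matrix.map_mul, Matrix.map_mul]
      exact h3 i
    · apply Subtype.ext
      exact h4 i r j hp
  have := hB.map f.toRingHom
  convert this using 2 with i
  ext a b
  simp

theorem Sol.line [Finite ι] (hpat : ∀ i r j j', j ≤ j' → pat i r j → pat i r j')
    (A G : ι → Matrix m m ℂ) (hG : ∀ i, IsUnit (G i).det) (U : Set ℂ)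
    (hUinf : U.Infinite) (hU : ∀ z ∈ U, Sol pat (fun i => A i + z • (G i - A i))) :
    Sol pat G := by
  classical
  have : Infinite U := hUinf.to_subtype
  let φ : Ultrafilter U := Filter.hyperfilter U
  let K := Filter.Germ (φ : Filter U) ℂ
  let coe : (U → ℂ) →+* K := Filter.Germ.coeRingHom _
  have h1 : Sol (R := U → ℂ) pat
      (fun i => Matrix.of fun r s u => (A i + (u : ℂ) • (G i - A i)) r s) :=
    Sol.pi (fun u : U => hU u u.2)
  have h2 := h1.map coe
  -- evaluation of polynomials at the generic point
  let ev : Polynomial ℂ →+* (U → ℂ) := RingHom.pi fun u => Polynomial.evalRingHom (u : ℂ)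
  let evK : Polynomial ℂ →+* K := coe.comp ev
  have hev : ∀ p : Polynomial ℂ, p ≠ 0 → evK p ≠ 0 := by
    intro p hp h0
    have h0' : ((ev p : U → ℂ) : K) = ((0 : U → ℂ) : K) := h0
    rw [Filter.Germ.coe_eq] at h0'
    have hfin : {u : U | (ev p) u = 0}.Finite := by
      have : Set.Finite {z : ℂ | p.eval z = 0} := by
        have := Polynomial.finite_setOfPred_isRoot hp
        exact this
      exact this.preimage (Subtype.val_injective.injOn)
    exact hfin.notMem_hyperfilter h0'
  let P : Ideal (Polynomial ℂ) := RingHom.ker (Polynomial.evalRingHom (1 : ℂ))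
  have hP : P.IsPrime := RingHom.ker_isPrime _
  let Loc := Localization.AtPrime P
  have hunit : ∀ y : P.primeCompl, IsUnit (evK y) := by
    intro y
    refine IsUnit.mk0 _ (hev _ ?_)
    intro h
    exact y.2 (by rw [h]; exact P.zero_mem)
  let f : Loc →+* K := IsLocalization.lift (M := P.primeCompl) hunit
  obtain ⟨O, hO, hloc⟩ := IsLocalRing.exists_factor_valuationRing f
  let f' : Loc →+* O := f.codRestrict O.toSubring hO
  have hloc' : IsLocalHom f' := hloc
  let q : Polynomial ℂ →+* O := f'.comp (algebraMap _ Loc)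
  have hq : ∀ p, O.subtype (q p) = evK p := by
    intro p
    exact IsLocalization.lift_eq hunit p
  let gp : ι → Matrix m m (Polynomial ℂ) := fun i => Matrix.of fun r s =>
    Polynomial.C (A i r s) + Polynomial.X * (Polynomial.C (G i r s) - Polynomial.C (A i r s))
  have hgpeval : ∀ i, (gp i).map (Polynomial.evalRingHom (1 : ℂ)) = G i := by
    intro i; ext r s; simp [gp]
  have hdet : ∀ i, IsUnit ((gp i).map q).det := by
    intro i
    have : ((gp i).map q).det = q (gp i).det := (RingHom.map_det q _).symm
    rw [this]
    apply IsUnit.map f'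
    apply IsLocalization.map_units Loc (⟨(gp i).det, ?_⟩ : P.primeCompl)
    intro hmem
    have h0 : Polynomial.evalRingHom (1 : ℂ) (gp i).det = 0 := hmem
    have h1' := RingHom.map_det (Polynomial.evalRingHom (1 : ℂ)) (gp i)
    have h2' : (Polynomial.evalRingHom (1 : ℂ)).mapMatrix (gp i) = G i := hgpeval i
    rw [h0, h2'] at h1'
    exact (hG i).ne_zero h1'.symm
  have h3 : Sol pat (fun i => (gp i).map q) := by
    apply Sol.valuation O hpat _ hdet
    have e : (fun i => ((gp i).map q).map O.subtype) = fun i =>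
        (Matrix.of fun r s (u : U) => (A i + (u : ℂ) • (G i - A i)) r s).map coe := by
      funext i
      ext r s
      simp only [Matrix.map_apply, hq]
      change coe (ev _) = coe _
      congr 1
      ext u
      simp [ev, gp]
    rw [e]
    exact h2
  have h4 := h3.map (IsLocalRing.residue O)
  let _ : Algebra ℂ (IsLocalRing.ResidueField O) :=
    ((IsLocalRing.residue O).comp (q.comp Polynomial.C)).toAlgebra
  apply Sol.descent (κ := IsLocalRing.ResidueField O)
  have e : (fun i => (G i).map (algebraMap ℂ (IsLocalRing.ResidueField O))) =
      fun i => ((gp i).map q).map (IsLocalRing.residue O) := by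
    funext i
    ext r s
    simp only [Matrix.map_apply]
    change IsLocalRing.residue O (q (Polynomial.C (G i r s))) = _
    rw [← sub_eq_zero, ← map_sub, ← map_sub, IsLocalRing.residue_eq_zero_iff]
    have hm : Polynomial.C (G i r s) - gp i r s ∈ P := by
      change Polynomial.evalRingHom (1 : ℂ) _ = 0
      simp [gp]
    rw [IsLocalRing.mem_maximalIdeal, mem_nonunits_iff]
    intro hu
    have hu' : IsUnit (algebraMap _ Loc (Polynomial.C (G i r s) - gp i r s)) := IsUnit.of_map f' _ hu
    exact (IsLocalization.AtPrime.isUnit_to_map_iff Loc P _).1 hu' hm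
  rw [e]
  exact h4

end alg

section trace
variable {m : Type*} [Fintype m] [DecidableEq m] {k : ℕ}

theorem gs_mat (E : Matrix m (Fin k) ℂ) (L : Matrix (Fin k) m ℂ) (hL : L * E = 1) :
    ∃ N : Matrix (Fin k) (Fin k) ℂ, (E * N)ᴴ * (E * N) = 1 ∧
      ∀ r j, (∀ i, i ≤ j → E r i = 0) → (E * N) r j = 0 := by
  have hli0 : LinearIndependent ℂ (fun j => E.col j) := by
    have : Function.Injective E.mulVec := by
      intro x y hxy
      have := congrArg (L *ᵥ ·) hxy
      simpa [Matrix.mulVec_mulVec, hL] using this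
    exact Matrix.mulVec_injective_iff.1 this
  let v : Fin k → EuclideanSpace ℂ m := fun j => WithLp.toLp 2 (E.col j)
  have hli : LinearIndependent ℂ v :=
    hli0.map' (WithLp.linearEquiv 2 ℂ (m → ℂ)).symm.toLinearMap (LinearEquiv.ker _)
  let o := InnerProductSpace.gramSchmidtNormed ℂ v
  have ho : Orthonormal ℂ o := InnerProductSpace.gramSchmidtNormed_orthonormal hli
  have hspan : ∀ j, o j ∈ Submodule.span ℂ (v '' Set.Iic j) := by
    intro j
    have h1 : o j ∈ Submodule.span ℂ (o '' Set.Iic j) :=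
      Submodule.subset_span ⟨j, by simp, rfl⟩
    rw [InnerProductSpace.span_gramSchmidtNormed] at h1
    rwa [InnerProductSpace.span_gramSchmidt_Iic] at h1
  have hN : ∀ j, ∃ c : Fin k → ℂ, ∑ i, c i • v i = o j := by
    intro j
    have : o j ∈ Submodule.span ℂ (Set.range v) :=
      Submodule.span_mono (Set.image_subset_range _ _) (hspan j)
    exact (Submodule.mem_span_range_iff_exists_fun ℂ).1 this
  choose c hc using hN
  have hEN : ∀ r j, (E * Matrix.of fun i j => c j i) r j = o j r := by
    intro r j
    rw [← hc j]
    simp only [Matrix.mul_apply, Matrix.of_apply, WithLp.ofLp_sum, Finset.sum_apply,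
      WithLp.ofLp_smul, Pi.smul_apply, smul_eq_mul, v, Matrix.col_apply]
    exact Finset.sum_congr rfl fun _ _ => mul_comm _ _
  refine ⟨Matrix.of fun i j => c j i, ?_, ?_⟩
  · ext i j
    rw [Matrix.mul_apply]
    simp only [Matrix.conjTranspose_apply, hEN]
    have := orthonormal_iff_ite.1 ho i j
    rw [Matrix.one_apply, ← this, PiLp.inner_apply]
    refine Finset.sum_congr rfl fun r _ => ?_
    simp [mul_comm]
  · intro r j hz
    rw [hEN]
    refine Submodule.span_induction (p := fun x _ => x r = 0) ?_ rfl ?_ ?_ (hspan j)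
    · rintro _ ⟨i, hi, rfl⟩
      exact hz i hi
    · intro x y _ _ hx hy; simp [hx, hy]
    · intro t x _ hx; simp [hx]

theorem trace_ineq (X : Matrix m (Fin k) ℂ) (L : Matrix (Fin k) m ℂ) (hL : L * X = 1)
    (G : Matrix m m ℂ) (hG : G ∈ Matrix.unitaryGroup m ℂ) (E : Matrix m (Fin k) ℂ)
    (M M' : Matrix (Fin k) (Fin k) ℂ) (hM : M * M' = 1) (hX : X * M = G * E)
    (α : m → ℝ) (τ : Fin k → ℝ) (hτ : Antitone τ) (hE : ∀ r j, ¬ (τ j ≤ α r) → E r j = 0) :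
    ∑ j, τ j ≤ (Matrix.trace (X * (Xᴴ * X)⁻¹ * Xᴴ *
      (G * Matrix.diagonal (fun r => (α r : ℂ)) * Gᴴ))).re := by
  have hGG : Gᴴ * G = 1 := Matrix.mem_unitaryGroup_iff'.1 hG
  have hLE : (M' * L * G) * E = 1 := by
    rw [Matrix.mul_assoc, ← hX, Matrix.mul_assoc, ← Matrix.mul_assoc L, hL, Matrix.one_mul,
      mul_eq_one_comm, hM]
  obtain ⟨N, hN1, hN2⟩ := gs_mat E _ hLE
  set O := E * N with hO
  have hXQ : X * (M * N) = G * O := by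
    rw [← Matrix.mul_assoc, hX, Matrix.mul_assoc]
  have hQ : (M * N)ᴴ * ((Xᴴ * X) * (M * N)) = 1 := by
    have : (X * (M * N))ᴴ * (X * (M * N)) = 1 := by
      rw [hXQ, Matrix.conjTranspose_mul, Matrix.mul_assoc, ← Matrix.mul_assoc Gᴴ, hGG,
        Matrix.one_mul, hN1]
    rw [Matrix.conjTranspose_mul] at this
    simpa only [Matrix.mul_assoc] using this
  rw [mul_eq_one_comm, Matrix.mul_assoc] at hQ
  have hinv : (Xᴴ * X)⁻¹ = (M * N) * (M * N)ᴴ := Matrix.inv_eq_right_inv hQ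
  have hP : X * (Xᴴ * X)⁻¹ * Xᴴ = G * O * Oᴴ * Gᴴ := by
    rw [hinv]
    have : X * ((M * N) * (M * N)ᴴ) * Xᴴ = (X * (M * N)) * (X * (M * N))ᴴ := by
      rw [Matrix.conjTranspose_mul X]; simp only [Matrix.mul_assoc]
    rw [this, hXQ, Matrix.conjTranspose_mul]
    simp only [Matrix.mul_assoc]
  have htr : Matrix.trace (X * (Xᴴ * X)⁻¹ * Xᴴ *
      (G * Matrix.diagonal (fun r => (α r : ℂ)) * Gᴴ)) =
      Matrix.trace (Oᴴ * (Matrix.diagonal (fun r => (α r : ℂ)) * O)) := by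
    rw [hP]
    have : G * O * Oᴴ * Gᴴ * (G * Matrix.diagonal (fun r => (α r : ℂ)) * Gᴴ) =
        (G * O) * (Oᴴ * (Gᴴ * G) * Matrix.diagonal (fun r => (α r : ℂ)) * Gᴴ) := by
      simp only [Matrix.mul_assoc]
    rw [this, Matrix.trace_mul_comm, hGG, Matrix.mul_one]
    have : Oᴴ * Matrix.diagonal (fun r => (α r : ℂ)) * Gᴴ * (G * O) =
        Oᴴ * Matrix.diagonal (fun r => (α r : ℂ)) * (Gᴴ * G) * O := by
      simp only [Matrix.mul_assoc]
    rw [this, hGG, Matrix.mul_one, Matrix.mul_assoc]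
  rw [htr, Matrix.trace, Complex.re_sum]
  refine Finset.sum_le_sum fun j _ => ?_
  have hnorm : ∑ r, Complex.normSq (O r j) = 1 := by
    have := congrFun (congrFun hN1 j) j
    rw [Matrix.mul_apply, Matrix.one_apply_eq] at this
    have h2 := congrArg Complex.re this
    rw [Complex.re_sum, Complex.one_re] at h2
    rw [← h2]
    refine Finset.sum_congr rfl fun r _ => ?_
    simp [Complex.normSq_apply]
  rw [Matrix.diag_apply, Matrix.mul_apply, Complex.re_sum]
  calc τ j = ∑ r, τ j * Complex.normSq (O r j) := by rw [← Finset.mul_sum, hnorm, mul_one]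
    _ ≤ _ := by
      refine Finset.sum_le_sum fun r _ => ?_
      have e : (Oᴴ j r * (Matrix.diagonal (fun r => (α r : ℂ)) * O) r j).re =
          α r * Complex.normSq (O r j) := by
        rw [Matrix.diagonal_mul, Matrix.conjTranspose_apply]
        simp [Complex.normSq_apply]
        ring
      rw [e]
      by_cases h : τ j ≤ α r
      · exact mul_le_mul_of_nonneg_right h (Complex.normSq_nonneg _)
      · have : O r j = 0 := hN2 r j fun i hi => hE r i fun hh => h ((hτ hi).trans hh)
        simp [this]

end trace

section opening
variable {ι m : Type*} [Fintype m] [DecidableEq m] {k : ℕ}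

/-- Keep the entries allowed by `p`, and replace the others by zero. -/
noncomputable def mask (p : m → m → Prop) : Matrix m m ℂ →ₗ[ℂ] Matrix m m ℂ where
  toFun A := by classical exact Matrix.of fun r s => if p r s then A r s else 0
  map_add' A B := by ext r s; by_cases h : p r s <;> simp [h]
  map_smul' c A := by ext r s; by_cases h : p r s <;> simp [h]

theorem mask_pos {p : m → m → Prop} {r s : m} (h : p r s) (A : Matrix m m ℂ) :
    mask p A r s = A r s := by simp [mask, h]

theorem mask_neg {p : m → m → Prop} {r s : m} (h : ¬ p r s) (A : Matrix m m ℂ) :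
    mask p A r s = 0 := by simp [mask, h]

theorem mask_single {p : m → m → Prop} {r s : m} (h : p r s) (c : ℂ) :
    mask p (Matrix.single r s c) = Matrix.single r s c := by
  ext a b
  by_cases hp : p a b
  · rw [mask_pos hp]
  · rw [mask_neg hp]
    rw [Matrix.single_apply_of_ne]
    rintro ⟨rfl, rfl⟩
    exact hp h

theorem sq_zero_of_low {pos : m → Prop} {A : Matrix m m ℂ}
    (hA : ∀ r s, ¬ (¬ pos r ∧ pos s) → A r s = 0) : A * A = 0 := by
  ext r s
  rw [Matrix.mul_apply]
  refine Finset.sum_eq_zero fun t _ => ?_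
  by_cases h : pos t
  · rw [hA t s (by tauto), mul_zero]
  · rw [hA r t (by tauto), zero_mul]

theorem sol_of_factor (pos : m → Prop) (α : ι → m → ℝ) (e0 : Fin k ≃ {r // pos r})
    (e : ι → Fin k ≃ {r // pos r}) (φ : Matrix m m ℂ) (h s : ι → Matrix m m ℂ)
    (hφ : ∀ r s, ¬ (¬ pos r ∧ pos s) → φ r s = 0)
    (hh : ∀ i r s, (¬ pos r ∧ pos s) → h i r s = 0)
    (hs : ∀ i r c, ¬ (¬ pos r ∧ pos c ∧ α i c ≤ α i r) → s i r c = 0)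
    (g : ι → Matrix m m ℂ) (hg : ∀ i, g i = (1 + φ) * h i * (1 - s i))
    (hdet : ∀ i, IsUnit (g i).det) :
    Sol (fun i r j => α i (e i j) ≤ α i r) g := by
  let J : (Fin k ≃ {r // pos r}) → Matrix m (Fin k) ℂ := fun e =>
    (1 : Matrix m m ℂ).submatrix id (fun j => (e j : m))
  let J' : (Fin k ≃ {r // pos r}) → Matrix (Fin k) m ℂ := fun e =>
    (1 : Matrix m m ℂ).submatrix (fun j => (e j : m)) id
  have hJ : ∀ e (A : Matrix m m ℂ) r j, (A * J e) r j = A r (e j) := by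
    intro e A r j
    simp [J, Matrix.mul_apply, Matrix.one_apply]
  have hJ' : ∀ e (A : Matrix m (Fin k) ℂ) i j, (J' e * A) i j = A (e i) j := by
    intro e A r j
    simp [J', Matrix.mul_apply, Matrix.one_apply]
  have hJJ : ∀ e, J' e * J e = 1 := by
    intro e
    ext i j
    rw [hJ']
    simp only [J, Matrix.submatrix_apply, id, Matrix.one_apply]
    have : ((e i : m) = e j) ↔ i = j := by
      rw [Subtype.val_inj, e.injective.eq_iff]
    simp [this]
  have hproj : ∀ (B : Matrix m (Fin k) ℂ), (∀ r j, ¬ pos r → B r j = 0) → J e0 * (J' e0 * B) = B := by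
    intro B hB
    ext r j
    rw [Matrix.mul_apply]
    simp only [hJ']
    simp only [J, Matrix.submatrix_apply, id, Matrix.one_apply]
    by_cases hr : pos r
    · obtain ⟨i, hi⟩ := e0.surjective ⟨r, hr⟩
      rw [Finset.sum_eq_single i]
      · simp [hi]
      · intro b _ hb
        have : r ≠ e0 b := by
          intro h
          apply hb
          apply e0.injective
          rw [hi]; exact Subtype.ext h.symm
        simp [this]
      · simp
    · rw [hB r j hr]
      refine Finset.sum_eq_zero fun i _ => ?_
      have : r ≠ e0 i := by rintro rfl; exact hr (e0 i).2
      simp [this]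
  have hφ2 := sq_zero_of_low hφ
  have hs2 : ∀ i, s i * s i = 0 := fun i => sq_zero_of_low (pos := pos)
    fun r c hrc => hs i r c (by tauto)
  have hφinv : (1 - φ) * (1 + φ) = 1 := by
    rw [Matrix.sub_mul, Matrix.mul_add, Matrix.mul_add, hφ2]; simp
  have hsinv : ∀ i, (1 - s i) * (1 + s i) = 1 := by
    intro i; rw [Matrix.sub_mul, Matrix.mul_add, Matrix.mul_add, hs2]; simp
  have hL : (J' e0 * (1 - φ)) * ((1 + φ) * J e0) = 1 := by
    rw [Matrix.mul_assoc, ← Matrix.mul_assoc (1 - φ), hφinv, Matrix.one_mul, hJJ]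
  have key : ∀ i, ((1 + φ) * J e0) * (J' e0 * (h i * J (e i))) = g i * ((1 + s i) * J (e i)) := by
    intro i
    rw [Matrix.mul_assoc, hproj, hg]
    · have : (1 + φ) * h i * (1 - s i) * ((1 + s i) * J (e i)) =
        (1 + φ) * (h i * (((1 - s i) * (1 + s i)) * J (e i))) := by simp only [Matrix.mul_assoc]
      rw [this, hsinv, Matrix.one_mul]
    · intro r j hr
      rw [hJ]
      exact hh i r _ ⟨hr, (e i j).2⟩
  have hEl : ∀ i, (J' (e i) * (1 - s i)) * ((1 + s i) * J (e i)) = 1 := by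
    intro i
    rw [Matrix.mul_assoc, ← Matrix.mul_assoc (1 - s i), hsinv, Matrix.one_mul, hJJ]
  refine ⟨(1 + φ) * J e0, J' e0 * (1 - φ), fun i => (1 + s i) * J (e i),
    fun i => J' e0 * (h i * J (e i)),
    fun i => (J' (e i) * (1 - s i)) * ((g i)⁻¹ * ((1 + φ) * J e0)), hL, ?_, key, ?_⟩
  · intro i
    rw [mul_eq_one_comm, Matrix.mul_assoc, Matrix.mul_assoc (g i)⁻¹, key,
      ← Matrix.mul_assoc (g i)⁻¹, Matrix.nonsing_inv_mul _ (hdet i), Matrix.one_mul, hEl]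
  · intro i r j hp
    change ¬ (α i (e i j) ≤ α i r) at hp
    change ((1 + s i) * J (e i) : Matrix m (Fin k) ℂ) r j = 0
    rw [hJ, Matrix.add_apply, Matrix.one_apply, hs i r _ (by tauto), add_zero, if_neg]
    rintro rfl
    exact hp le_rfl

theorem strict_deriv_aux {V 𝔸 : Type*} [NormedAddCommGroup V] [NormedSpace ℂ V] [NormedRing 𝔸]
    [NormedAlgebra ℂ 𝔸] (l1 l2 l3 : V →L[ℂ] 𝔸) (R : 𝔸) :
    ∃ f' : V →L[ℂ] 𝔸, HasStrictFDerivAt (fun v => (1 + l1 v) * (R * (1 + l2 v)) * (1 - l3 v)) f' 0 ∧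
      ∀ v, f' v = l1 v * R + R * l2 v - R * l3 v := by
  have h1 : HasStrictFDerivAt (fun v => 1 + l1 v) l1 0 := l1.hasStrictFDerivAt.const_add 1
  have h2 : HasStrictFDerivAt (fun v => 1 + l2 v) l2 0 := l2.hasStrictFDerivAt.const_add 1
  have h3 : HasStrictFDerivAt (fun v => 1 - l3 v) (-l3) 0 := l3.hasStrictFDerivAt.const_sub 1
  refine ⟨_, (h1.mul' ((hasStrictFDerivAt_const R 0).mul' h2)).mul' h3, fun v => ?_⟩
  simp
  abel

theorem open_aux {ι 𝔸 : Type*} [Fintype ι] [NormedRing 𝔸] [NormedAlgebra ℂ 𝔸]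
    [FiniteDimensional ℂ 𝔸] (μ1 μ2 : 𝔸 →ₗ[ℂ] 𝔸) (μ3 : ι → 𝔸 →ₗ[ℂ] 𝔸) (R G : ι → 𝔸)
    (hs : ∀ C : ι → 𝔸, ∃ v : 𝔸 × (ι → 𝔸) × (ι → 𝔸),
      ∀ i, μ1 v.1 * R i + R i * μ2 (v.2.1 i) - R i * μ3 i (v.2.2 i) = C i) :
    ∀ᶠ z in nhds (0 : ℂ), ∃ v : 𝔸 × (ι → 𝔸) × (ι → 𝔸),
      ∀ i, (1 + μ1 v.1) * (R i * (1 + μ2 (v.2.1 i))) * (1 - μ3 i (v.2.2 i))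
        = R i + z • (G i - R i) := by
  let V := 𝔸 × (ι → 𝔸) × (ι → 𝔸)
  have : CompleteSpace 𝔸 := FiniteDimensional.complete ℂ 𝔸
  let l1 : V →L[ℂ] 𝔸 :=
    (LinearMap.toContinuousLinearMap μ1).comp (ContinuousLinearMap.fst ℂ _ _)
  let l2 : ι → V →L[ℂ] 𝔸 := fun i =>
    (LinearMap.toContinuousLinearMap μ2).comp
      ((ContinuousLinearMap.proj (R := ℂ) (φ := fun _ : ι => 𝔸) i).comp
        ((ContinuousLinearMap.fst ℂ _ _).comp (ContinuousLinearMap.snd ℂ _ _)))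
  let l3 : ι → V →L[ℂ] 𝔸 := fun i =>
    (LinearMap.toContinuousLinearMap (μ3 i)).comp
      ((ContinuousLinearMap.proj (R := ℂ) (φ := fun _ : ι => 𝔸) i).comp
        ((ContinuousLinearMap.snd ℂ _ _).comp (ContinuousLinearMap.snd ℂ _ _)))
  have hl1 : ∀ v : V, l1 v = μ1 v.1 := fun _ => rfl
  have hl2 : ∀ i (v : V), l2 i v = μ2 (v.2.1 i) := fun _ _ => rfl
  have hl3 : ∀ i (v : V), l3 i v = μ3 i (v.2.2 i) := fun _ _ => rfl
  choose f' hf' hf'v using fun i => strict_deriv_aux l1 (l2 i) (l3 i) (R i)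
  let Ψ : V → ι → 𝔸 := fun v i => (1 + l1 v) * (R i * (1 + l2 i v)) * (1 - l3 i v)
  have hΨ : HasStrictFDerivAt Ψ (ContinuousLinearMap.pi f') 0 := hasStrictFDerivAt_pi.2 hf'
  have hsurj : (ContinuousLinearMap.pi f').range = ⊤ := by
    rw [LinearMap.range_eq_top]
    intro C
    obtain ⟨v, hv⟩ := hs C
    refine ⟨v, funext fun i => ?_⟩
    rw [← hv i]
    exact hf'v i v
  have hmap := hΨ.map_nhds_eq_of_surj hsurj
  have hΨ0 : Ψ 0 = R := by
    funext i
    simp [Ψ]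
  rw [hΨ0] at hmap
  have hrange : Set.range Ψ ∈ nhds R := by
    rw [← hmap]; exact Filter.range_mem_map
  have hcont : Continuous (fun z : ℂ => fun i => R i + z • (G i - R i)) := by fun_prop
  have hR0 : (fun i => R i + (0 : ℂ) • (G i - R i)) = R := by simp
  have hev1 : ∀ᶠ z in nhds (0 : ℂ), (fun i => R i + z • (G i - R i)) ∈ Set.range Ψ := by
    apply hcont.continuousAt.eventually
    beta_reduce
    rw [hR0]; exact hrange
  refine hev1.mono ?_
  rintro z ⟨v, hv⟩
  exact ⟨v, fun i => congrFun hv i⟩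

open scoped Matrix.Norms.Operator in
theorem open_aux_mat [Fintype ι] (μ1 μ2 : Matrix m m ℂ →ₗ[ℂ] Matrix m m ℂ)
    (μ3 : ι → Matrix m m ℂ →ₗ[ℂ] Matrix m m ℂ) (R G : ι → Matrix m m ℂ)
    (hs : ∀ C : ι → Matrix m m ℂ,
      ∃ v : Matrix m m ℂ × (ι → Matrix m m ℂ) × (ι → Matrix m m ℂ),
      ∀ i, μ1 v.1 * R i + R i * μ2 (v.2.1 i) - R i * μ3 i (v.2.2 i) = C i) :
    ∀ᶠ z in nhds (0 : ℂ), ∃ v : Matrix m m ℂ × (ι → Matrix m m ℂ) × (ι → Matrix m m ℂ),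
      ∀ i, (1 + μ1 v.1) * (R i * (1 + μ2 (v.2.1 i))) * (1 - μ3 i (v.2.2 i))
        = R i + z • (G i - R i) :=
  open_aux μ1 μ2 μ3 R G hs

theorem infinite_sol [Fintype ι] [DecidableEq ι] (pos : m → Prop) (α : ι → m → ℝ)
    (e0 : Fin k ≃ {r // pos r}) (e : ι → Fin k ≃ {r // pos r}) (R G : ι → Matrix m m ℂ)
    (hR : ∀ i, R i ∈ Matrix.unitaryGroup m ℂ)
    (hRb : ∀ i r s, ¬ (pos r ↔ pos s) → R i r s = 0)
    (hind : ∀ Z : ι → Matrix m m ℂ,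
      (∀ i r s, ¬ (pos r ∧ ¬ pos s ∧ α i s < α i r) → Z i r s = 0) →
      ∑ i, R i * Z i * (R i)ᴴ = 0 → ∀ i, Z i = 0) :
    {z : ℂ | Sol (fun i r j => α i (e i j) ≤ α i r) (fun i => R i + z • (G i - R i))}.Infinite := by
  have hRR : ∀ i, (R i)ᴴ * R i = 1 := fun i => Matrix.mem_unitaryGroup_iff'.1 (hR i)
  have hRR' : ∀ i, R i * (R i)ᴴ = 1 := fun i => Matrix.mem_unitaryGroup_iff.1 (hR i)
  let low : m → m → Prop := fun r s => ¬ pos r ∧ pos s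
  let pt : ι → m → m → Prop := fun i r s => ¬ pos r ∧ pos s ∧ α i s ≤ α i r
  let nl : m → m → Prop := fun r s => ¬ low r s
  let T : (Matrix m m ℂ × (ι → Matrix m m ℂ) × (ι → Matrix m m ℂ)) →ₗ[ℂ] (ι → Matrix m m ℂ) :=
    { toFun := fun v i => mask low v.1 * R i + R i * mask nl (v.2.1 i) - R i * mask (pt i) (v.2.2 i)
      map_add' := by
        intro v w; funext i
        simp only [Prod.fst_add, Prod.snd_add, Pi.add_apply, map_add, Matrix.add_mul, Matrix.mul_add]
        abel
      map_smul' := by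
        intro c v; funext i
        simp [smul_sub, smul_add] }
  have hf'v : ∀ i v, T v i =
    mask low v.1 * R i + R i * mask nl (v.2.1 i) - R i * mask (pt i) (v.2.2 i) := fun _ _ => rfl
  have hsurj : LinearMap.range T = ⊤ := by
    by_contra hne
    obtain ⟨ψ, hψ0, hψ⟩ := Submodule.exists_le_ker_of_lt_top _ (lt_top_iff_ne_top.2 hne)
    apply hψ0
    have hψ' : ∀ v, ψ (T v) = 0 := fun v => hψ ⟨v, rfl⟩
    let Z : ι → Matrix m m ℂ := fun i => Matrix.of fun c r =>
      ψ (Pi.single i (R i * Matrix.single r c 1))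
    have hZtr : ∀ C : ι → Matrix m m ℂ, ψ (fun i => R i * C i) = ∑ i, Matrix.trace (Z i * C i) := by
      intro C
      have h1 : (fun i => R i * C i) = ∑ i, Pi.single i (R i * C i) :=
        (Finset.univ_sum_single _).symm
      rw [h1, map_sum]
      refine Finset.sum_congr rfl fun i _ => ?_
      let χ : Matrix m m ℂ →ₗ[ℂ] ℂ := ψ ∘ₗ (LinearMap.single ℂ (fun _ : ι => Matrix m m ℂ) i) ∘ₗ
        (LinearMap.mulLeft ℂ (R i))
      have hχ : ∀ B, χ B = ψ (Pi.single i (R i * B)) := fun B => rfl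
      rw [← hχ]
      conv_lhs => rw [Matrix.matrix_eq_sum_single (C i)]
      simp only [map_sum]
      rw [Matrix.trace]
      simp only [Matrix.diag_apply, Matrix.mul_apply]
      rw [Finset.sum_comm]
      refine Finset.sum_congr rfl fun c _ => Finset.sum_congr rfl fun r _ => ?_
      have : Matrix.single r c (C i r c) = (C i r c) • Matrix.single r c (1 : ℂ) := by
        simp
      rw [this, map_smul, hχ, smul_eq_mul, mul_comm]
      rfl
    have hZ0 : ∀ i c r, ¬ (pos c ∧ ¬ pos r ∧ α i r < α i c) → Z i c r = 0 := by
      intro i c r hcr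
      by_cases hl : low r c
      · have hp : pt i r c := ⟨hl.1, hl.2, by
          by_contra hlt
          exact hcr ⟨hl.2, hl.1, not_le.1 hlt⟩⟩
        have := hψ' (0, 0, Pi.single i (Matrix.single r c 1))
        have e1 : (T (0, 0, Pi.single i (Matrix.single r c 1))) =
            - Pi.single i (R i * Matrix.single r c 1) := by
          funext j
          rw [hf'v]
          by_cases hj : j = i
          · subst hj; simp [mask_single (p := pt _) hp]
          · simp [hj]
        rw [e1, map_neg, neg_eq_zero] at this
        exact this
      · have := hψ' (0, Pi.single i (Matrix.single r c 1), 0)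
        have e1 : (T (0, Pi.single i (Matrix.single r c 1), 0)) =
            Pi.single i (R i * Matrix.single r c 1) := by
          funext j
          rw [hf'v]
          by_cases hj : j = i
          · subst hj; simp [mask_single (p := nl) hl]
          · simp [hj]
        rw [e1] at this
        exact this
    have hS : ∑ i, R i * Z i * (R i)ᴴ = 0 := by
      ext c r
      by_cases hl : low r c
      · have := hψ' (Matrix.single r c 1, 0, 0)
        have e1 : (T (Matrix.single r c 1, 0, 0)) =
            fun j => R j * ((R j)ᴴ * Matrix.single r c 1 * R j) := by
          funext j
          rw [hf'v]
          simp [mask_single (p := low) hl, ← Matrix.mul_assoc, hRR']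
        rw [e1, hZtr] at this
        rw [Matrix.zero_apply, ← this, Matrix.sum_apply]
        refine Finset.sum_congr rfl fun i _ => ?_
        have e2 : Z i * ((R i)ᴴ * Matrix.single r c 1 * R i) =
          (Z i * (R i)ᴴ * Matrix.single r c 1) * R i := by simp only [Matrix.mul_assoc]
        rw [e2, Matrix.trace_mul_comm, ← Matrix.mul_assoc, ← Matrix.mul_assoc,
          Matrix.trace_mul_single]
        simp
      · rw [Matrix.zero_apply, Matrix.sum_apply]
        refine Finset.sum_eq_zero fun i _ => ?_
        rw [Matrix.mul_apply]
        refine Finset.sum_eq_zero fun b _ => ?_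
        rw [Matrix.mul_apply, Finset.sum_mul]
        refine Finset.sum_eq_zero fun a _ => ?_
        by_cases h1 : pos c ↔ pos a
        · by_cases h2 : pos r ↔ pos b
          · rw [hZ0 i a b (by simp only [low] at hl; tauto)]; simp
          · rw [Matrix.conjTranspose_apply, hRb i r b h2]; simp
        · rw [hRb i c a h1]; simp
    have hZ := hind Z hZ0 hS
    apply LinearMap.ext
    intro B
    have : B = fun i => R i * ((R i)ᴴ * B i) := by
      funext i; rw [← Matrix.mul_assoc, hRR', Matrix.one_mul]
    rw [this, hZtr]
    simp [hZ]
  have hev1 := open_aux_mat (mask low) (mask nl) (fun i => mask (pt i)) R G (by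
    intro C
    obtain ⟨v, hv⟩ := LinearMap.range_eq_top.1 hsurj C
    exact ⟨v, fun i => by rw [← hv, hf'v]⟩)
  have hev2 : ∀ᶠ z in nhds (0 : ℂ), ∀ i, (R i + z • (G i - R i)).det ≠ 0 := by
    rw [Filter.eventually_all]
    intro i
    have hc : Continuous (fun z : ℂ => (R i + z • (G i - R i)).det) := by
      apply Continuous.matrix_det
      fun_prop
    apply hc.continuousAt.eventually_ne
    have := congrArg Matrix.det (hRR i)
    rw [Matrix.det_mul, Matrix.det_one] at this
    simpa using right_ne_zero_of_mul_eq_one this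
  refine (infinite_of_mem_nhds (0 : ℂ) (hev1.and hev2)).mono ?_
  rintro z ⟨⟨v, hv⟩, hd⟩
  refine sol_of_factor pos α e0 e (mask low v.1)
    (fun i => R i * (1 + mask nl (v.2.1 i))) (fun i => mask (pt i) (v.2.2 i))
    ?_ ?_ ?_ _ ?_ ?_
  · intro r s h; exact mask_neg (p := low) h _
  · intro i r s h
    rw [Matrix.mul_apply]
    refine Finset.sum_eq_zero fun t _ => ?_
    by_cases ht : pos t
    · rw [hRb i r t (by tauto), zero_mul]
    · have : (mask nl (v.2.1 i)) t s = 0 := mask_neg (p := nl) (not_not.2 ⟨ht, h.2⟩) _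
      rw [Matrix.add_apply, this, Matrix.one_apply_ne (by rintro rfl; exact ht h.2)]
      simp
  · intro i r s h; exact mask_neg (p := pt i) h _
  · intro i
    exact (hv i).symm
  · intro i; exact (hd i).isUnit

end opening

section deriv

theorem curve_deriv {𝔸 : Type*} [NormedRing 𝔸] [NormedAlgebra ℝ 𝔸] [CompleteSpace 𝔸] (X A : 𝔸)
    (t : ℝ) : HasDerivAt (fun t : ℝ => NormedSpace.exp (t • X) * A * NormedSpace.exp (t • (-X)))
      (NormedSpace.exp (t • X) * (X * A - A * X) * NormedSpace.exp (t • (-X))) t := by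
  have h1 := hasDerivAt_exp_smul_const (𝕂 := ℝ) X t
  have h2 := hasDerivAt_exp_smul_const' (𝕂 := ℝ) (-X) t
  have h3 := (h1.mul_const A).mul h2
  refine h3.congr_deriv ?_
  simp only [mul_sub, sub_mul, mul_assoc, neg_mul, mul_neg]
  abel

theorem second_order {ι 𝔸 : Type*} [Fintype ι] [NormedRing 𝔸] [NormedAlgebra ℝ 𝔸]
    [CompleteSpace 𝔸] (T : 𝔸 →L[ℝ] ℝ) (hT : ∀ a b, T (a * b) = T (b * a)) (w : ι → ℝ)
    (X A : ι → 𝔸)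
    (hmin : ∀ t : ℝ, T ((∑ i, w i • A i) * (∑ i, w i • A i)) ≤
      T ((∑ i, w i • (NormedSpace.exp (t • X i) * A i * NormedSpace.exp (t • (-X i)))) *
        (∑ i, w i • (NormedSpace.exp (t • X i) * A i * NormedSpace.exp (t • (-X i)))))) :
    T ((∑ i, w i • A i) * (∑ i, w i • (X i * A i - A i * X i))) = 0 ∧
    ((∑ i, w i • (X i * A i - A i * X i)) = 0 →
      0 ≤ T ((∑ i, w i • A i) *
        (∑ i, w i • (X i * (X i * A i - A i * X i) - (X i * A i - A i * X i) * X i)))) := by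
  let c : 𝔸 → 𝔸 → ℝ → 𝔸 := fun X A t => NormedSpace.exp (t • X) * A * NormedSpace.exp (t • (-X))
  have hc : ∀ X A t, HasDerivAt (c X A) (c X (X * A - A * X) t) t := curve_deriv
  have hc0 : ∀ X A, c X A 0 = A := by intro X A; simp [c]
  let S : (ι → 𝔸) → ℝ → 𝔸 := fun A t => ∑ i, w i • c (X i) (A i) t
  let ad : (ι → 𝔸) → ι → 𝔸 := fun A i => X i * A i - A i * X i
  have hS : ∀ A t, HasDerivAt (S A) (S (ad A) t) t := by
    intro A t
    exact HasDerivAt.fun_sum fun i _ => (hc (X i) (A i) t).const_smul (w i)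
  have hS0 : ∀ A, S A 0 = ∑ i, w i • A i := by intro A; simp [S, hc0]
  let f : ℝ → ℝ := fun t => T (S A t * S A t)
  have hf1 : ∀ t, HasDerivAt f (2 * T (S A t * S (ad A) t)) t := by
    intro t
    have h := T.hasFDerivAt.comp_hasDerivAt t ((hS A t).mul (hS A t))
    refine h.congr_deriv ?_
    rw [map_add, hT (S (ad A) t)]; ring
  have hf2 : HasDerivAt (fun t => 2 * T (S A t * S (ad A) t))
      (2 * (T (S (ad A) 0 * S (ad A) 0) + T (S A 0 * S (ad (ad A)) 0))) 0 := by
    have h := (T.hasFDerivAt.comp_hasDerivAt 0 ((hS A 0).mul (hS (ad A) 0))).const_mul 2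
    refine h.congr_deriv ?_
    rw [map_add]
  have hm : ∀ t, f 0 ≤ f t := by
    intro t
    have := hmin t
    simp only [f, hS0]
    exact this
  have hlm : IsLocalMin f 0 := Filter.Eventually.of_forall hm
  have hd0 : 2 * T (S A 0 * S (ad A) 0) = 0 := hlm.hasDerivAt_eq_zero (hf1 0)
  refine ⟨?_, ?_⟩
  · have : T (S A 0 * S (ad A) 0) = 0 := by linarith
    rwa [hS0, hS0] at this
  · intro hL
    change 0 ≤ T ((∑ i, w i • A i) * (∑ i, w i • ad (ad A) i))
    have hL' : S (ad A) 0 = 0 := by rw [hS0]; exact hL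
    rw [hL', hS0, hS0, zero_mul, map_zero, zero_add] at hf2
    by_contra hneg
    rw [not_le] at hneg
    have hdf : deriv f = fun t => 2 * T (S A t * S (ad A) t) := funext fun t => (hf1 t).deriv
    have hng : deriv (fun t => - f t) = fun t => - (2 * T (S A t * S (ad A) t)) :=
      funext fun t => (hf1 t).fun_neg.deriv
    have hlm2 : IsLocalMin (fun t => - f t) 0 := by
      apply isLocalMin_of_deriv_deriv_pos
      · rw [hng, hf2.fun_neg.deriv]; linarith
      · rw [hng]; simp only [hd0, neg_zero]
      · exact (hf1 0).fun_neg.continuousAt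
    have hconst : f =ᶠ[nhds 0] fun _ => f 0 := by
      filter_upwards [hlm2] with t ht
      have := hm t
      linarith
    have h0 : deriv f =ᶠ[nhds 0] fun _ => 0 := by
      have := hconst.deriv
      simpa using this
    have h1 := h0.deriv_eq
    rw [hdf, hf2.deriv] at h1
    simp at h1
    rw [h1] at hneg
    exact lt_irrefl _ hneg

variable {ι m : Type*} [Fintype ι] [Fintype m] [DecidableEq m]

open scoped Matrix.Norms.Operator in
theorem second_order_mat (w : ι → ℝ) (A : ι → Matrix m m ℂ)
    (hmin : ∀ W : ι → Matrix m m ℂ, (∀ i, W i ∈ Matrix.unitaryGroup m ℂ) →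
      (trace ((∑ i, (w i : ℂ) • A i) * (∑ i, (w i : ℂ) • A i))).re ≤
      (trace ((∑ i, (w i : ℂ) • (W i * A i * (W i)ᴴ)) *
        (∑ i, (w i : ℂ) • (W i * A i * (W i)ᴴ)))).re)
    (X : ι → Matrix m m ℂ) (hX : ∀ i, (X i)ᴴ = - X i) :
    (trace ((∑ i, (w i : ℂ) • A i) * (∑ i, (w i : ℂ) • (X i * A i - A i * X i)))).re = 0 ∧
    ((∑ i, (w i : ℂ) • (X i * A i - A i * X i)) = 0 →
      0 ≤ (trace ((∑ i, (w i : ℂ) • A i) *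
        (∑ i, (w i : ℂ) • (X i * (X i * A i - A i * X i) - (X i * A i - A i * X i) * X i)))).re) := by
  have hsm : ∀ i (B : Matrix m m ℂ), (w i : ℂ) • B = w i • B := by
    intro i B; ext r s; simp
  simp only [hsm] at hmin ⊢
  let T0 : Matrix m m ℂ →ₗ[ℝ] ℝ :=
    { toFun := fun B => (trace B).re
      map_add' := by intro a b; simp
      map_smul' := by intro a b; simp [Matrix.trace_smul] }
  have : CompleteSpace (Matrix m m ℂ) := FiniteDimensional.complete ℝ _
  refine second_order (LinearMap.toContinuousLinearMap T0) ?_ w X A ?_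
  · intro a b
    change (trace (a * b)).re = (trace (b * a)).re
    rw [Matrix.trace_mul_comm]
  · intro t
    have key : ∀ i, NormedSpace.exp (t • (-X i)) = (NormedSpace.exp (t • X i))ᴴ := by
      intro i
      rw [← Matrix.exp_conjTranspose, Matrix.conjTranspose_smul, hX]
      simp
    have hu : ∀ i, NormedSpace.exp (t • X i) ∈ Matrix.unitaryGroup m ℂ := by
      intro i
      rw [Matrix.mem_unitaryGroup_iff, Matrix.star_eq_conjTranspose, ← key, smul_neg,
        Matrix.exp_neg]
      exact Matrix.mul_nonsing_inv _ ((Matrix.isUnit_iff_isUnit_det _).1 (Matrix.isUnit_exp _))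
    have := hmin (fun i => NormedSpace.exp (t • X i)) hu
    simp only [← key] at this
    exact this

theorem exists_min (w : ι → ℝ) (A : ι → Matrix m m ℂ) :
    ∃ V : ι → Matrix m m ℂ, (∀ i, V i ∈ Matrix.unitaryGroup m ℂ) ∧
      ∀ W : ι → Matrix m m ℂ, (∀ i, W i ∈ Matrix.unitaryGroup m ℂ) →
      (trace ((∑ i, (w i : ℂ) • (V i * A i * (V i)ᴴ)) *
        (∑ i, (w i : ℂ) • (V i * A i * (V i)ᴴ)))).re ≤
      (trace ((∑ i, (w i : ℂ) • (W i * A i * (W i)ᴴ)) *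
        (∑ i, (w i : ℂ) • (W i * A i * (W i)ᴴ)))).re := by
  have hcl : IsClosed {V : Matrix m m ℂ | V ∈ Matrix.unitaryGroup m ℂ} := by
    simp only [Matrix.mem_unitaryGroup_iff]
    exact isClosed_eq (by fun_prop) continuous_const
  have hbd : {V : Matrix m m ℂ | V ∈ Matrix.unitaryGroup m ℂ} ⊆
      Set.univ.pi fun _ => Set.univ.pi fun _ => Metric.closedBall (0 : ℂ) 1 := by
    intro V hV r _ s _
    simpa using entry_norm_bound_of_unitary hV r s
  have hK : IsCompact {V : Matrix m m ℂ | V ∈ Matrix.unitaryGroup m ℂ} :=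
    IsCompact.of_isClosed_subset (isCompact_univ_pi fun _ => isCompact_univ_pi fun _ =>
      isCompact_closedBall _ _) hcl hbd
  have hK' : IsCompact (Set.univ.pi fun _ : ι => {V : Matrix m m ℂ | V ∈ Matrix.unitaryGroup m ℂ}) :=
    isCompact_univ_pi fun _ => hK
  obtain ⟨V, hV, hm⟩ := hK'.exists_isMinOn ⟨fun _ => 1, fun i _ => one_mem (Matrix.unitaryGroup m ℂ)⟩
    (f := fun W : ι → Matrix m m ℂ => (trace ((∑ i, (w i : ℂ) • (W i * A i * (W i)ᴴ)) *
        (∑ i, (w i : ℂ) • (W i * A i * (W i)ᴴ)))).re) (by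
      apply Continuous.continuousOn
      apply Complex.continuous_re.comp
      apply Continuous.matrix_trace
      fun_prop)
  exact ⟨V, fun i => hV i trivial, fun W hW => hm (fun i _ => hW i)⟩

end deriv

section diag
variable {ι m : Type*} [Fintype ι] [Fintype m] [DecidableEq m]

theorem herm_diag {m : Type*} [Fintype m] [DecidableEq m] (B : Matrix m m ℂ) (hB : B.IsHermitian) :
    ∃ (U : Matrix m m ℂ) (α : m → ℝ), Uᴴ * U = 1 ∧ U * Uᴴ = 1 ∧
      B * U = U * diagonal (fun r => (α r : ℂ)) := by
  refine ⟨hB.eigenvectorUnitary, hB.eigenvalues, ?_, ?_, ?_⟩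
  · exact Matrix.mem_unitaryGroup_iff'.1 hB.eigenvectorUnitary.2
  · exact Matrix.mem_unitaryGroup_iff.1 hB.eigenvectorUnitary.2
  · ext r s
    have h := congrFun (hB.mulVec_eigenvectorBasis s) r
    rw [Matrix.mul_diagonal, Matrix.mul_apply]
    simp only [Matrix.IsHermitian.eigenvectorUnitary_apply]
    simpa [Matrix.mulVec, dotProduct, mul_comm] using h

theorem block_diag (δ : m → ℝ) (B : Matrix m m ℂ) (hB : B.IsHermitian)
    (hBδ : ∀ r s, δ r ≠ δ s → B r s = 0) :
    ∃ (R : Matrix m m ℂ) (α : m → ℝ), Rᴴ * R = 1 ∧ R * Rᴴ = 1 ∧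
      (∀ r s, δ r ≠ δ s → R r s = 0) ∧ B * R = R * diagonal (fun r => (α r : ℂ)) := by
  classical
  choose U a h1 h2 h3 using fun c : ℝ => herm_diag
    (B.submatrix (fun x : {x // δ x = c} => (x : m)) (fun x : {x // δ x = c} => (x : m)))
    (hB.submatrix _)
  let R : Matrix m m ℂ := Matrix.of fun x y =>
    if h : δ x = δ y then U (δ y) ⟨x, h⟩ ⟨y, rfl⟩ else 0
  have hR0 : ∀ r s, δ r ≠ δ s → R r s = 0 := by
    intro r s h; simp [R, h]
  have hRc : ∀ c (z x : {x // δ x = c}), R z x = U c z x := by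
    rintro c ⟨z, hz⟩ ⟨x, rfl⟩
    simp [R, hz]
  have hsum : ∀ c (y : {x // δ x = c}) (f : m → ℂ),
      ∑ z, f z * R z y = ∑ z : {x // δ x = c}, f z * U c z y := by
    intro c y f
    have e1 : ∑ z, f z * R z y = ∑ z ∈ Finset.univ.filter (fun z => δ z = c), f z * R z y := by
      symm
      apply Finset.sum_filter_of_ne
      intro z _ hz
      by_contra hne
      apply hz
      rw [hR0 z y (by rw [y.2]; exact hne), mul_zero]
    rw [e1, Finset.sum_subtype (p := fun z => δ z = c) (F := inferInstance) _ (by simp)]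
    simp only [hRc]
  have hRR : Rᴴ * R = 1 := by
    ext x y
    rw [Matrix.mul_apply]
    simp only [Matrix.conjTranspose_apply]
    rw [hsum (δ y) ⟨y, rfl⟩]
    by_cases h : δ x = δ y
    · have := congrFun (congrFun (h1 (δ y)) ⟨x, h⟩) ⟨y, rfl⟩
      rw [Matrix.mul_apply] at this
      simp only [Matrix.conjTranspose_apply] at this
      have e : ∀ z : {x // δ x = δ y}, R z x = U (δ y) z ⟨x, h⟩ := fun z => hRc _ z ⟨x, h⟩
      simp only [e, this, Matrix.one_apply, Subtype.mk.injEq]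
    · rw [Matrix.one_apply_ne (by rintro rfl; exact h rfl)]
      refine Finset.sum_eq_zero fun z _ => ?_
      rw [hR0 z x (by rw [z.2]; exact fun h' => h h'.symm)]
      simp
  refine ⟨R, fun y => a (δ y) ⟨y, rfl⟩, hRR, mul_eq_one_comm.1 hRR, hR0, ?_⟩
  ext x y
  rw [Matrix.mul_apply, Matrix.mul_diagonal, hsum (δ y) ⟨y, rfl⟩]
  by_cases h : δ x = δ y
  · have := congrFun (congrFun (h3 (δ y)) ⟨x, h⟩) ⟨y, rfl⟩
    rw [Matrix.mul_apply, Matrix.mul_diagonal] at this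
    simp only [Matrix.submatrix_apply] at this
    rw [this, ← hRc]
  · rw [hR0 x y h, zero_mul]
    refine Finset.sum_eq_zero fun z _ => ?_
    rw [hBδ x z (by rw [z.2]; exact h), zero_mul]

theorem re_trace_nonneg (C : Matrix m m ℂ) : 0 ≤ (trace (Cᴴ * C)).re ∧
    ((trace (Cᴴ * C)).re ≤ 0 → C = 0) := by
  have h : (trace (Cᴴ * C)).re = ∑ i, ∑ j, Complex.normSq (C j i) := by
    simp [Matrix.trace, Matrix.mul_apply, Complex.normSq_apply]
  rw [h]
  have h0 : ∀ i, 0 ≤ ∑ j, Complex.normSq (C j i) :=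
    fun i => Finset.sum_nonneg fun j _ => Complex.normSq_nonneg _
  refine ⟨Finset.sum_nonneg fun i _ => h0 i, fun hle => ?_⟩
  have h1 := le_antisymm hle (Finset.sum_nonneg fun i _ => h0 i)
  rw [Finset.sum_eq_zero_iff_of_nonneg fun i _ => h0 i] at h1
  ext j i
  have h2 := h1 i (Finset.mem_univ _)
  rw [Finset.sum_eq_zero_iff_of_nonneg fun j _ => Complex.normSq_nonneg _] at h2
  simpa using h2 j (Finset.mem_univ _)

theorem comm_of_first (w : ι → ℝ) (hw : ∀ i, 0 < w i) (A : ι → Matrix m m ℂ)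
    (hA : ∀ i, (A i).IsHermitian) (D : Matrix m m ℂ) (hD : D.IsHermitian)
    (h1 : ∀ X : ι → Matrix m m ℂ, (∀ i, (X i)ᴴ = - X i) →
      (trace (D * (∑ i, (w i : ℂ) • (X i * A i - A i * X i)))).re = 0) :
    ∀ i, D * A i = A i * D := by
  have hC : ∀ i, (A i * D - D * A i)ᴴ = - (A i * D - D * A i) := by
    intro i
    rw [Matrix.conjTranspose_sub, Matrix.conjTranspose_mul, Matrix.conjTranspose_mul,
      (hA i).eq, hD.eq, neg_sub]
  have h := h1 (fun i => A i * D - D * A i) hC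
  have e : ∀ i, trace (D * ((A i * D - D * A i) * A i - A i * (A i * D - D * A i))) =
      - trace ((A i * D - D * A i)ᴴ * (A i * D - D * A i)) := by
    intro i
    rw [hC]
    generalize hE : A i * D - D * A i = C
    have e1 : trace (D * (C * A i)) = trace (C * (A i * D)) := by
      rw [← Matrix.mul_assoc C, Matrix.trace_mul_comm]
    have e2 : trace (D * (A i * C)) = trace (C * (D * A i)) := by
      rw [← Matrix.mul_assoc, Matrix.trace_mul_comm]
    rw [Matrix.mul_sub, Matrix.trace_sub, e1, e2, ← Matrix.trace_sub, ← Matrix.mul_sub, hE,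
      Matrix.neg_mul, Matrix.trace_neg, neg_neg]
  rw [Matrix.mul_sum, Matrix.trace_sum, Complex.re_sum] at h
  simp only [Matrix.mul_smul, Matrix.trace_smul, e, smul_eq_mul, Complex.re_ofReal_mul,
    Complex.neg_re, mul_neg, Finset.sum_neg_distrib, neg_eq_zero] at h
  rw [Finset.sum_eq_zero_iff_of_nonneg fun i _ =>
    mul_nonneg (hw i).le (re_trace_nonneg _).1] at h
  intro i
  have h2 := h i (Finset.mem_univ _)
  have h3 := (re_trace_nonneg (A i * D - D * A i)).2 (by
    rcases mul_eq_zero.1 h2 with h | h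
    · exact absurd h (hw i).ne'
    · exact h.le)
  exact (sub_eq_zero.1 h3).symm

end diag
section hess
variable {ι m : Type*} [Fintype ι] [Fintype m] [DecidableEq m]

theorem hess_term (δ α : m → ℝ) (w : ℝ) (hw : 0 < w) (Z : Matrix m m ℂ)
    (hZ : ∀ r s, ¬ (0 < δ r ∧ ¬ 0 < δ s ∧ α s < α r) → Z r s = 0) :
    ∃ Y : Matrix m m ℂ,
      (w : ℂ) • (Y * diagonal (fun r => (α r : ℂ)) - diagonal (fun r => (α r : ℂ)) * Y) = Z ∧
      (trace (diagonal (fun r => (δ r : ℂ)) *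
        ((Y - Yᴴ) * (Z + Zᴴ) - (Z + Zᴴ) * (Y - Yᴴ)))).re ≤ 0 ∧
      (0 ≤ (trace (diagonal (fun r => (δ r : ℂ)) *
        ((Y - Yᴴ) * (Z + Zᴴ) - (Z + Zᴴ) * (Y - Yᴴ)))).re → Z = 0) := by
  let q : m → m → ℝ := fun r s => (w * (α s - α r))⁻¹
  let Y : Matrix m m ℂ := Matrix.of fun r s => Z r s * (q r s : ℂ)
  let T : m → m → ℝ := fun r s => Complex.normSq (Z r s) * q r s
  have hq : ∀ r s, Z r s ≠ 0 → 0 < δ r - δ s ∧ q r s < 0 := by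
    intro r s h
    have h' : 0 < δ r ∧ ¬ 0 < δ s ∧ α s < α r := by
      by_contra hc; exact h (hZ r s hc)
    obtain ⟨h1, h2, h3⟩ := h'
    refine ⟨by linarith, ?_⟩
    apply inv_lt_zero.2
    nlinarith
  have hcross : ∀ r s, Z r s * Z s r = 0 := by
    intro r s
    by_cases h : 0 < δ r ∧ ¬ 0 < δ s
    · rw [hZ s r (by tauto), mul_zero]
    · rw [hZ r s (by tauto), zero_mul]
  have hcross' : ∀ r s, star (Z r s) * star (Z s r) = 0 := by
    intro r s
    rw [← star_mul, hcross, star_zero]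
  have hzz : ∀ r s, Z r s * star (Z r s) = (Complex.normSq (Z r s) : ℂ) := by
    intro r s
    exact Complex.mul_conj _
  have hsum : (trace (diagonal (fun r => (δ r : ℂ)) *
        ((Y - Yᴴ) * (Z + Zᴴ) - (Z + Zᴴ) * (Y - Yᴴ)))).re =
        ∑ r, ∑ s, 2 * ((δ r - δ s) * T r s) := by
    have e1 : trace (diagonal (fun r => (δ r : ℂ)) *
        ((Y - Yᴴ) * (Z + Zᴴ) - (Z + Zᴴ) * (Y - Yᴴ))) =
        ∑ r, ∑ s, ((δ r * (2 * (T r s - T s r)) : ℝ) : ℂ) := by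
      rw [Matrix.trace]
      refine Finset.sum_congr rfl fun r _ => ?_
      rw [Matrix.diag_apply, Matrix.diagonal_mul, Matrix.sub_apply, Matrix.mul_apply,
        Matrix.mul_apply, ← Finset.sum_sub_distrib, Finset.mul_sum]
      refine Finset.sum_congr rfl fun s _ => ?_
      simp only [Matrix.sub_apply, Matrix.add_apply, Matrix.conjTranspose_apply, Y,
        Matrix.of_apply, T]
      have c1 := hcross r s
      have c2 := hcross' r s
      have c3 := hzz r s
      have c4 := hzz s r
      have s1 : ∀ x : ℝ, star (x : ℂ) = x := Complex.conj_ofReal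
      simp only [star_mul, s1]
      push_cast
      rw [← c3, ← c4]
      linear_combination (δ r : ℂ) * ((q r s : ℂ) - q s r) * (c1 + c2)
    rw [e1]
    simp only [Complex.re_sum, Complex.ofReal_re]
    have e2 : ∑ r, ∑ s, δ r * (2 * (T r s - T s r)) =
        ∑ r, ∑ s, 2 * (δ r * T r s) - ∑ r, ∑ s, 2 * (δ r * T s r) := by
      simp only [← Finset.sum_sub_distrib]
      refine Finset.sum_congr rfl fun r _ => Finset.sum_congr rfl fun s _ => ?_
      ring
    rw [e2, Finset.sum_comm (f := fun r s => 2 * (δ r * T s r))]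
    simp only [← Finset.sum_sub_distrib]
    refine Finset.sum_congr rfl fun r _ => Finset.sum_congr rfl fun s _ => ?_
    ring
  have hterm : ∀ r s, 2 * ((δ r - δ s) * T r s) ≤ 0 := by
    intro r s
    by_cases h : Z r s = 0
    · simp [T, h]
    · obtain ⟨h1, h2⟩ := hq r s h
      have h3 : T r s ≤ 0 := mul_nonpos_of_nonneg_of_nonpos (Complex.normSq_nonneg _) h2.le
      nlinarith
  refine ⟨Y, ?_, ?_, ?_⟩
  · ext r s
    rw [Matrix.smul_apply, Matrix.sub_apply, Matrix.mul_diagonal, Matrix.diagonal_mul]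
    by_cases h : Z r s = 0
    · simp [Y, h]
    · have hne : w * (α s - α r) ≠ 0 := by
        intro h0
        have := (hq r s h).2
        simp only [q, h0, _root_.inv_zero, lt_irrefl] at this
      have : (w : ℂ) * ((α s : ℂ) - α r) ≠ 0 := by exact_mod_cast hne
      simp only [Y, q, Matrix.of_apply, smul_eq_mul]
      push_cast
      field_simp
      exact div_self this
  · rw [hsum]
    exact Finset.sum_nonpos fun r _ => Finset.sum_nonpos fun s _ => hterm r s
  · rw [hsum]
    intro hge
    have h0 := le_antisymm (Finset.sum_nonpos fun r _ => Finset.sum_nonpos fun s _ => hterm r s) hge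
    rw [Finset.sum_eq_zero_iff_of_nonpos
      fun r _ => Finset.sum_nonpos fun s _ => hterm r s] at h0
    ext r s
    have h1 := h0 r (Finset.mem_univ _)
    rw [Finset.sum_eq_zero_iff_of_nonpos fun s _ => hterm r s] at h1
    have h2 := h1 s (Finset.mem_univ _)
    by_contra hne
    obtain ⟨h3, h4⟩ := hq r s hne
    have h5 : T r s < 0 := mul_neg_of_pos_of_neg (Complex.normSq_pos.2 hne) h4
    nlinarith

theorem hind_of_second (δ : m → ℝ) (α : ι → m → ℝ) (w : ι → ℝ) (hw : ∀ i, 0 < w i)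
    (R A : ι → Matrix m m ℂ) (hR1 : ∀ i, (R i)ᴴ * R i = 1)
    (hRD : ∀ i, diagonal (fun r => (δ r : ℂ)) * R i = R i * diagonal (fun r => (δ r : ℂ)))
    (hA : ∀ i, A i = R i * diagonal (fun r => (α i r : ℂ)) * (R i)ᴴ)
    (h2 : ∀ X : ι → Matrix m m ℂ, (∀ i, (X i)ᴴ = - X i) →
      (∑ i, (w i : ℂ) • (X i * A i - A i * X i)) = 0 →
      0 ≤ (trace (diagonal (fun r => (δ r : ℂ)) *
        (∑ i, (w i : ℂ) • (X i * (X i * A i - A i * X i) - (X i * A i - A i * X i) * X i)))).re)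
    (Z : ι → Matrix m m ℂ)
    (hZ : ∀ i r s, ¬ (0 < δ r ∧ ¬ 0 < δ s ∧ α i s < α i r) → Z i r s = 0)
    (hsum : ∑ i, R i * Z i * (R i)ᴴ = 0) : ∀ i, Z i = 0 := by
  choose Y hY1 hY2 hY3 using fun i => hess_term δ (α i) (w i) (hw i) (Z i) (hZ i)
  let c : ι → Matrix m m ℂ → Matrix m m ℂ := fun i B => R i * B * (R i)ᴴ
  have hcm : ∀ i B B', c i B * c i B' = c i (B * B') := by
    intro i B B'
    have : c i B * c i B' = R i * B * ((R i)ᴴ * R i) * (B' * (R i)ᴴ) := by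
      simp only [c, Matrix.mul_assoc]
    rw [this, hR1, Matrix.mul_one]
    simp only [c, Matrix.mul_assoc]
  have hcs : ∀ i B B', c i B - c i B' = c i (B - B') := by
    intro i B B'; simp only [c, Matrix.mul_sub, Matrix.sub_mul]
  have hcsm : ∀ i (z : ℂ) B, z • c i B = c i (z • B) := by
    intro i z B; simp only [c, Matrix.mul_smul, Matrix.smul_mul]
  have hct : ∀ i B, trace (diagonal (fun r => (δ r : ℂ)) * c i B) =
      trace (diagonal (fun r => (δ r : ℂ)) * B) := by
    intro i B
    have : diagonal (fun r => (δ r : ℂ)) * c i B =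
      R i * (diagonal (fun r => (δ r : ℂ)) * B) * (R i)ᴴ := by
      simp only [c, ← Matrix.mul_assoc, hRD]
    rw [this, Matrix.trace_mul_comm, ← Matrix.mul_assoc, hR1, Matrix.one_mul]
  let X : ι → Matrix m m ℂ := fun i => c i (Y i - (Y i)ᴴ)
  have hA' : ∀ i, A i = c i (diagonal (fun r => (α i r : ℂ))) := hA
  have hXs : ∀ i, (X i)ᴴ = - X i := by
    intro i
    simp only [X, c, Matrix.conjTranspose_mul, Matrix.conjTranspose_sub,
      Matrix.conjTranspose_conjTranspose, Matrix.mul_assoc]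
    rw [← Matrix.mul_neg, ← Matrix.neg_mul, neg_sub]
  have hH : ∀ i, (w i : ℂ) • ((Y i - (Y i)ᴴ) * diagonal (fun r => (α i r : ℂ)) -
      diagonal (fun r => (α i r : ℂ)) * (Y i - (Y i)ᴴ)) = Z i + (Z i)ᴴ := by
    intro i
    conv_rhs => rw [← hY1 i]
    have hd : (diagonal (fun r => (α i r : ℂ)))ᴴ = diagonal (fun r => (α i r : ℂ)) := by
      rw [Matrix.diagonal_conjTranspose]
      congr 1
      funext r
      exact Complex.conj_ofReal _
    rw [Matrix.conjTranspose_smul, Matrix.conjTranspose_sub, Matrix.conjTranspose_mul,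
      Matrix.conjTranspose_mul, hd]
    have : star (w i : ℂ) = w i := Complex.conj_ofReal _
    rw [this, ← smul_add, Matrix.sub_mul, Matrix.mul_sub]
    congr 1
    abel
  have hXA : ∀ i, (w i : ℂ) • (X i * A i - A i * X i) = c i (Z i + (Z i)ᴴ) := by
    intro i
    rw [hA']
    simp only [X]
    rw [hcm, hcm, hcs, hcsm, hH]
  have hXXA : ∀ i, (w i : ℂ) • (X i * (X i * A i - A i * X i) - (X i * A i - A i * X i) * X i) =
      c i ((Y i - (Y i)ᴴ) * (Z i + (Z i)ᴴ) - (Z i + (Z i)ᴴ) * (Y i - (Y i)ᴴ)) := by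
    intro i
    rw [smul_sub, ← Matrix.mul_smul, ← Matrix.smul_mul, hXA]
    simp only [X]
    rw [hcm, hcm, hcs]
  have hL : ∑ i, (w i : ℂ) • (X i * A i - A i * X i) = 0 := by
    simp only [hXA, c, Matrix.mul_add, Matrix.add_mul, Finset.sum_add_distrib]
    rw [hsum, zero_add]
    have := congrArg Matrix.conjTranspose hsum
    rw [Matrix.conjTranspose_sum, Matrix.conjTranspose_zero] at this
    rw [← this]
    refine Finset.sum_congr rfl fun i _ => ?_
    simp [Matrix.mul_assoc]
  have hpos := h2 X hXs hL
  simp only [hXXA] at hpos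
  rw [Matrix.mul_sum, Matrix.trace_sum, Complex.re_sum] at hpos
  simp only [hct] at hpos
  have h0 := le_antisymm (Finset.sum_nonpos fun i _ => hY2 i) hpos
  rw [Finset.sum_eq_zero_iff_of_nonpos fun i _ => hY2 i] at h0
  intro i
  exact hY3 i (h0 i (Finset.mem_univ _)).ge

end hess
section main
variable {ι m : Type*} [Fintype ι] [Fintype m] [DecidableEq m]

theorem diag_comm_of (δ : m → ℝ) (f : m → ℂ) (hf : ∀ r s, δ r = δ s → f r = f s)
    (R : Matrix m m ℂ) (hR : ∀ r s, δ r ≠ δ s → R r s = 0) :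
    diagonal f * R = R * diagonal f := by
  ext r s
  rw [Matrix.diagonal_mul, Matrix.mul_diagonal]
  by_cases h : δ r = δ s
  · rw [hf r s h, mul_comm]
  · rw [hR r s h]; simp

theorem zero_of_diag_comm (δ : m → ℝ) (A : Matrix m m ℂ)
    (h : diagonal (fun r => (δ r : ℂ)) * A = A * diagonal (fun r => (δ r : ℂ))) (r s : m)
    (hrs : δ r ≠ δ s) : A r s = 0 := by
  have := congrFun (congrFun h r) s
  rw [Matrix.diagonal_mul, Matrix.mul_diagonal, mul_comm, ← sub_eq_zero, ← mul_sub,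
    mul_eq_zero] at this
  rcases this with h | h
  · exact h
  · exact absurd (by exact_mod_cast sub_eq_zero.1 h) hrs

theorem diag_herm (δ : m → ℝ) : (diagonal (fun r => (δ r : ℂ))).IsHermitian := by
  rw [Matrix.IsHermitian, Matrix.diagonal_conjTranspose]
  congr 1
  funext r
  exact Complex.conj_ofReal _

theorem conj_herm (V ρ : Matrix m m ℂ) (hρ : ρ.IsHermitian) : (V * ρ * Vᴴ).IsHermitian := by
  rw [Matrix.IsHermitian]
  simp [Matrix.conjTranspose_mul, hρ.eq, Matrix.mul_assoc]

theorem zero_or_sep (w : ι → ℝ) (hw : ∀ i, 0 < w i) (ρ : ι → Matrix m m ℂ)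
    (hρ : ∀ i, (ρ i).IsHermitian) (htr : ∑ i, (w i : ℂ) * trace (ρ i) = 0) :
    (∃ V : ι → Matrix m m ℂ, (∀ i, V i ∈ Matrix.unitaryGroup m ℂ) ∧
      ∑ i, (w i : ℂ) • (V i * ρ i * (V i)ᴴ) = 0) ∨
    (∃ t : ι → ℝ, 0 < ∑ i, w i * t i ∧
      ∀ W : ι → Matrix m m ℂ, (∀ i, W i ∈ Matrix.unitaryGroup m ℂ) →
        ∃ P : Matrix m m ℂ, ∀ i, t i ≤ (trace (P * (W i * ρ i * (W i)ᴴ))).re) := by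
  classical
  obtain ⟨V0, hV0, hmin0⟩ := exists_min w ρ
  have hD0 : (∑ i, (w i : ℂ) • (V0 i * ρ i * (V0 i)ᴴ)).IsHermitian := by
    rw [Matrix.IsHermitian, Matrix.conjTranspose_sum]
    refine Finset.sum_congr rfl fun i _ => ?_
    rw [Matrix.conjTranspose_smul, (conj_herm _ _ (hρ i)).eq]
    congr 1
    exact Complex.conj_ofReal _
  obtain ⟨Q, δ, hQ1, hQ2, hQ3⟩ := herm_diag _ hD0
  generalize hD : diagonal (fun r => (δ r : ℂ)) = D at hQ3
  -- rotate the minimizer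
  let V : ι → Matrix m m ℂ := fun i => Qᴴ * V0 i
  have hQu : Qᴴ ∈ Matrix.unitaryGroup m ℂ := by
    rw [Matrix.mem_unitaryGroup_iff, Matrix.star_eq_conjTranspose,
      Matrix.conjTranspose_conjTranspose, hQ1]
  have hV : ∀ i, V i ∈ Matrix.unitaryGroup m ℂ := fun i => mul_mem hQu (hV0 i)
  have hV1 : ∀ i, (V i)ᴴ * V i = 1 := fun i => Matrix.mem_unitaryGroup_iff'.1 (hV i)
  let A : ι → Matrix m m ℂ := fun i => V i * ρ i * (V i)ᴴ
  have hAh : ∀ i, (A i).IsHermitian := fun i => conj_herm _ _ (hρ i)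
  have hAD : ∑ i, (w i : ℂ) • A i = D := by
    have e1 : ∑ i, (w i : ℂ) • A i = Qᴴ * (∑ i, (w i : ℂ) • (V0 i * ρ i * (V0 i)ᴴ)) * Q := by
      rw [Matrix.mul_sum, Matrix.sum_mul]
      refine Finset.sum_congr rfl fun i _ => ?_
      simp [A, V, Matrix.mul_assoc]
    rw [e1, Matrix.mul_assoc, hQ3, ← Matrix.mul_assoc, hQ1, Matrix.one_mul]
  have hD0D : trace ((∑ i, (w i : ℂ) • (V0 i * ρ i * (V0 i)ᴴ)) *
      (∑ i, (w i : ℂ) • (V0 i * ρ i * (V0 i)ᴴ))) = trace (D * D) := by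
    generalize (∑ i, (w i : ℂ) • (V0 i * ρ i * (V0 i)ᴴ)) = B at hQ3
    have : B = Q * D * Qᴴ := by rw [← hQ3, Matrix.mul_assoc, hQ2, Matrix.mul_one]
    rw [this]
    have e2 : Q * D * Qᴴ * (Q * D * Qᴴ) = Q * D * (Qᴴ * Q) * (D * Qᴴ) := by
      simp only [Matrix.mul_assoc]
    rw [e2, hQ1, Matrix.mul_one, Matrix.trace_mul_comm]
    have e3 : D * Qᴴ * (Q * D) = D * (Qᴴ * Q) * D := by simp only [Matrix.mul_assoc]
    rw [e3, hQ1, Matrix.mul_one]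
  have hmin : ∀ W : ι → Matrix m m ℂ, (∀ i, W i ∈ Matrix.unitaryGroup m ℂ) →
      (trace ((∑ i, (w i : ℂ) • A i) * (∑ i, (w i : ℂ) • A i))).re ≤
      (trace ((∑ i, (w i : ℂ) • (W i * A i * (W i)ᴴ)) *
        (∑ i, (w i : ℂ) • (W i * A i * (W i)ᴴ)))).re := by
    intro W hW
    have h := hmin0 (fun i => W i * V i) (fun i => mul_mem (hW i) (hV i))
    rw [hD0D] at h
    rw [hAD]
    have e : ∀ i, W i * V i * ρ i * (W i * V i)ᴴ = W i * A i * (W i)ᴴ := by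
      intro i; simp [A, Matrix.mul_assoc]
    simpa only [e] using h
  by_cases hDz : D = 0
  · exact Or.inl ⟨V, hV, by rw [← hDz]; exact hAD⟩
  right
  have hso := second_order_mat w A hmin
  rw [hAD] at hso
  have hDh : D.IsHermitian := by rw [← hD]; exact diag_herm δ
  have hcomm := comm_of_first w hw A hAh D hDh (fun X hX => (hso X hX).1)
  have hA0 : ∀ i r s, δ r ≠ δ s → A i r s = 0 := by
    intro i r s
    exact zero_of_diag_comm δ (A i) (by rw [hD]; exact hcomm i) r s
  choose R α hR1 hR2 hR0 hR3 using fun i => block_diag δ (A i) (hAh i) (hA0 i)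
  have hAR : ∀ i, A i = R i * diagonal (fun r => (α i r : ℂ)) * (R i)ᴴ := by
    intro i
    rw [← hR3, Matrix.mul_assoc, hR2, Matrix.mul_one]
  have hRD : ∀ i, diagonal (fun r => (δ r : ℂ)) * R i = R i * diagonal (fun r => (δ r : ℂ)) :=
    fun i => diag_comm_of δ _ (fun r s h => by rw [h]) (R i) (hR0 i)
  have hind := hind_of_second δ α w hw R A hR1 hRD hAR
    (fun X hX => by rw [hD]; exact (hso X hX).2)
  let pos : m → Prop := fun r => 0 < δ r
  let e0 : Fin (Fintype.card {r // pos r}) ≃ {r // pos r} := (Fintype.equivFin _).symm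
  let e : ι → Fin (Fintype.card {r // pos r}) ≃ {r // pos r} := fun i =>
    (Tuple.sort (fun j => - α i (e0 j))).trans e0
  have hanti : ∀ i, Antitone (fun j => α i (e i j)) := by
    intro i j j' hjj
    have := Tuple.monotone_sort (fun j => - α i (e0 j)) hjj
    simp only [Function.comp] at this
    exact neg_le_neg_iff.1 this
  have hRu : ∀ i, R i ∈ Matrix.unitaryGroup m ℂ := fun i => Matrix.mem_unitaryGroup_iff.2 (hR2 i)
  refine ⟨fun i => ∑ j, α i (e i j), ?_, ?_⟩
  · -- positivity
    let Pj : Matrix m m ℂ := diagonal (fun r => if pos r then (1 : ℂ) else 0)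
    have hPjR : ∀ i, Pj * R i = R i * Pj := fun i =>
      diag_comm_of δ _ (fun r s h => by simp only [pos, h]) (R i) (hR0 i)
    have hPjd : ∀ f : m → ℝ, trace (Pj * diagonal (fun r => (f r : ℂ))) =
        ((∑ r : {r // pos r}, f r : ℝ) : ℂ) := by
      intro f
      rw [Matrix.diagonal_mul_diagonal, Matrix.trace_diagonal]
      rw [← Finset.sum_subtype (Finset.univ.filter pos) (by simp) f, Finset.sum_filter]
      rw [Complex.ofReal_sum]
      refine Finset.sum_congr rfl fun r _ => ?_
      by_cases h : pos r
      · rw [if_pos h, if_pos h, one_mul]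
      · rw [if_neg h, if_neg h, zero_mul, Complex.ofReal_zero]
    have hPjA : ∀ i, trace (Pj * A i) = ((∑ j, α i (e i j) : ℝ) : ℂ) := by
      intro i
      rw [hAR, Equiv.sum_comp (e i) (fun r => α i r), ← hPjd, ← Matrix.mul_assoc,
        ← Matrix.mul_assoc, hPjR, Matrix.mul_assoc (R i), Matrix.trace_mul_comm,
        ← Matrix.mul_assoc, hR1, Matrix.one_mul]
    have h1 : ((∑ i, w i * ∑ j, α i (e i j) : ℝ) : ℂ) = ((∑ r : {r // pos r}, δ r : ℝ) : ℂ) := by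
      rw [← hPjd, hD, ← hAD, Matrix.mul_sum, Matrix.trace_sum]
      push_cast
      refine Finset.sum_congr rfl fun i _ => ?_
      rw [Matrix.mul_smul, Matrix.trace_smul, hPjA]
      push_cast
      rfl
    rw [Complex.ofReal_inj] at h1
    rw [h1]
    have htrD : ∑ r, δ r = 0 := by
      have h2 : trace D = 0 := by
        rw [← hAD, Matrix.trace_sum, ← htr]
        refine Finset.sum_congr rfl fun i _ => ?_
        rw [Matrix.trace_smul, smul_eq_mul]
        congr 1
        simp only [A]
        rw [Matrix.trace_mul_comm, ← Matrix.mul_assoc, hV1, Matrix.one_mul]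
      rw [← hD, Matrix.trace_diagonal] at h2
      exact_mod_cast h2
    have hex : ∃ r, 0 < δ r := by
      by_contra hno
      push Not at hno
      have := (Finset.sum_eq_zero_iff_of_nonpos fun r _ => hno r).1 htrD
      apply hDz
      rw [← hD]
      ext r s
      by_cases h : r = s
      · subst h; simp [this r (Finset.mem_univ _)]
      · simp [h]
    obtain ⟨r, hr⟩ := hex
    exact Finset.sum_pos (fun r _ => r.2) ⟨⟨r, hr⟩, Finset.mem_univ _⟩
  · intro W hW
    let G : ι → Matrix m m ℂ := fun i => W i * (V i)ᴴ * R i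
    have hVu : ∀ i, (V i)ᴴ ∈ Matrix.unitaryGroup m ℂ := fun i => by
      rw [Matrix.mem_unitaryGroup_iff, Matrix.star_eq_conjTranspose,
        Matrix.conjTranspose_conjTranspose, hV1]
    have hG : ∀ i, G i ∈ Matrix.unitaryGroup m ℂ := fun i =>
      mul_mem (mul_mem (hW i) (hVu i)) (hRu i)
    have hGd : ∀ i, IsUnit (G i).det := by
      intro i
      have := congrArg Matrix.det (Matrix.mem_unitaryGroup_iff.1 (hG i))
      rw [Matrix.det_mul, Matrix.det_one] at this
      exact IsUnit.of_mul_eq_one _ this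
    have hinf := infinite_sol pos α e0 e R G hRu
      (fun i r s h => hR0 i r s (fun h' => h (by simp only [pos, h']))) hind
    have hsol := Sol.line (pat := fun i r j => α i (e i j) ≤ α i r)
      (fun i r j j' hjj h => (hanti i hjj).trans h) R G hGd _ hinf (fun z hz => hz)
    obtain ⟨X, L, E, M, M', hL, hM, hX, hE⟩ := hsol
    refine ⟨X * (Xᴴ * X)⁻¹ * Xᴴ, fun i => ?_⟩
    have h := trace_ineq X L hL (G i) (hG i) (E i) (M i) (M' i) (hM i) (hX i) (α i)
      (fun j => α i (e i j)) (hanti i) (hE i)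
    have e3 : G i * diagonal (fun r => (α i r : ℂ)) * (G i)ᴴ = W i * ρ i * (W i)ᴴ := by
      have e4 : G i * diagonal (fun r => (α i r : ℂ)) * (G i)ᴴ =
          W i * (V i)ᴴ * A i * V i * (W i)ᴴ := by
        rw [hAR]
        simp [G, Matrix.mul_assoc]
      have e5 : W i * (V i)ᴴ * A i * V i * (W i)ᴴ =
          W i * ((V i)ᴴ * V i) * ρ i * ((V i)ᴴ * V i) * (W i)ᴴ := by
        simp only [A, Matrix.mul_assoc]
      rw [e4, e5, hV1, Matrix.mul_one, Matrix.mul_one]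
    rwa [e3] at h

end main

theorem unitary_conj_trace {m : Type*} [Fintype m] [DecidableEq m] (V ρ : Matrix m m ℂ)
    (hV : V ∈ Matrix.unitaryGroup m ℂ) : trace (V * ρ * Vᴴ) = trace ρ := by
  have h : Vᴴ * V = 1 := Matrix.mem_unitaryGroup_iff'.1 hV
  rw [Matrix.trace_mul_comm, ← Matrix.mul_assoc, h, Matrix.one_mul]

end CCEW

theorem convex_combination_equal_weights {n N : ℕ}
    (ρ σ : Matrix (Fin n) (Fin n) ℂ) (hρ : ρ.IsHermitian) (hσ : σ.IsHermitian)
    (p : Fin N → ℝ) (hp : ∀ i, 0 ≤ p i) (hps : ∑ i, p i = 1)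
    (U : Fin N → Matrix (Fin n) (Fin n) ℂ)
    (hU : ∀ i, U i ∈ Matrix.unitaryGroup (Fin n) ℂ)
    (hσeq : σ = ∑ i, (p i : ℂ) • (U i * ρ * (U i)ᴴ)) :
    ∃ V : Fin N → Matrix (Fin n) (Fin n) ℂ,
      (∀ i, V i ∈ Matrix.unitaryGroup (Fin n) ℂ) ∧
      σ = ∑ i, ((N : ℂ))⁻¹ • (V i * ρ * (V i)ᴴ) := by
  have hN : N ≠ 0 := by
    rintro rfl
    simp at hps
  have : NeZero N := ⟨hN⟩
  have hNpos : (0 : ℝ) < N := by exact_mod_cast Nat.pos_of_ne_zero hN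
  have hNC : (N : ℂ) ≠ 0 := by exact_mod_cast hN
  let w : Option (Fin N) → ℝ := fun o => o.elim 1 (fun _ => (N : ℝ)⁻¹)
  let ρ' : Option (Fin N) → Matrix (Fin n) (Fin n) ℂ := fun o => o.elim (-σ) (fun _ => ρ)
  have hw : ∀ o, 0 < w o := by
    rintro (_ | i)
    · exact one_pos
    · exact inv_pos.2 hNpos
  have hρ' : ∀ o, (ρ' o).IsHermitian := by
    rintro (_ | i)
    · exact hσ.neg
    · exact hρ
  have htrσ : trace σ = trace ρ := by
    rw [hσeq, Matrix.trace_sum]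
    simp only [Matrix.trace_smul, CCEW.unitary_conj_trace _ ρ (hU _), smul_eq_mul]
    rw [← Finset.sum_mul, ← Complex.ofReal_sum, hps]
    simp
  have htr : ∑ o, (w o : ℂ) * trace (ρ' o) = 0 := by
    rw [Fintype.sum_option]
    simp [w, ρ', htrσ, hNC]
  rcases CCEW.zero_or_sep w hw ρ' hρ' htr with ⟨V, hV, hz⟩ | ⟨t, ht, hP⟩
  · have h1 : (V none)ᴴ * V none = 1 := Matrix.mem_unitaryGroup_iff'.1 (hV none)
    have hstar : (V none)ᴴ ∈ Matrix.unitaryGroup (Fin n) ℂ := by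
      rw [Matrix.mem_unitaryGroup_iff, Matrix.star_eq_conjTranspose,
        Matrix.conjTranspose_conjTranspose, h1]
    refine ⟨fun i => (V none)ᴴ * V (some i), fun i => mul_mem hstar (hV _), ?_⟩
    rw [Fintype.sum_option] at hz
    have hz2 : V none * σ * (V none)ᴴ =
        ∑ i : Fin N, ((N : ℂ))⁻¹ • (V (some i) * ρ * (V (some i))ᴴ) := by
      have : -(V none * σ * (V none)ᴴ) +
          ∑ i : Fin N, ((N : ℂ))⁻¹ • (V (some i) * ρ * (V (some i))ᴴ) = 0 := by
        simpa [w, ρ'] using hz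
      exact neg_add_eq_zero.1 this
    have hz3 : (V none)ᴴ * (V none * σ * (V none)ᴴ) * V none = σ := by
      have : (V none)ᴴ * (V none * σ * (V none)ᴴ) * V none =
        ((V none)ᴴ * V none) * σ * ((V none)ᴴ * V none) := by simp only [Matrix.mul_assoc]
      rw [this, h1, Matrix.one_mul, Matrix.mul_one]
    rw [← hz3, hz2, Matrix.mul_sum, Matrix.sum_mul]
    refine Finset.sum_congr rfl fun i _ => ?_
    simp [Matrix.mul_assoc]
  · exfalso
    have hj : ∀ j : Fin N, t none ≤ - ∑ i, p (i + j) * t (some i) := by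
      intro j
      obtain ⟨P, hPj⟩ := hP (fun o => o.elim 1 (fun i => U (i + j))) (by
        rintro (_ | i)
        · exact one_mem (Matrix.unitaryGroup (Fin n) ℂ)
        · exact hU _)
      have h0 : t none ≤ - (trace (P * σ)).re := by
        have := hPj none
        simpa [ρ'] using this
      have h1 : ∀ i, t (some i) ≤ (trace (P * (U (i + j) * ρ * (U (i + j))ᴴ))).re :=
        fun i => hPj (some i)
      have h2 : (trace (P * σ)).re = ∑ i, p i * (trace (P * (U i * ρ * (U i)ᴴ))).re := by
        rw [hσeq, Matrix.mul_sum, Matrix.trace_sum, Complex.re_sum]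
        refine Finset.sum_congr rfl fun i _ => ?_
        rw [Matrix.mul_smul, Matrix.trace_smul, smul_eq_mul, Complex.re_ofReal_mul]
      have h3 := Equiv.sum_comp (Equiv.addRight j)
        (fun i => p i * (trace (P * (U i * ρ * (U i)ᴴ))).re)
      simp only [Equiv.coe_addRight] at h3
      rw [← h3] at h2
      have h4 : ∑ i, p (i + j) * t (some i) ≤ (trace (P * σ)).re := by
        rw [h2]
        exact Finset.sum_le_sum fun i _ => mul_le_mul_of_nonneg_left (h1 i) (hp _)
      linarith
    have hsum := Finset.sum_le_sum fun j (_ : j ∈ Finset.univ) => hj j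
    rw [Finset.sum_neg_distrib, Finset.sum_comm] at hsum
    have hcol : ∀ i, ∑ j, p (i + j) * t (some i) = t (some i) := by
      intro i
      have := Equiv.sum_comp (Equiv.addLeft i) p
      simp only [Equiv.coe_addLeft] at this
      rw [← Finset.sum_mul, this, hps, one_mul]
    simp only [hcol, Finset.sum_const, Finset.card_univ, Fintype.card_fin, nsmul_eq_mul] at hsum
    rw [Fintype.sum_option] at ht
    have ht2 : 0 < t none + (N : ℝ)⁻¹ * ∑ i, t (some i) := by
      rw [Finset.mul_sum]
      simpa [w] using ht
    have ht3 : 0 < N * (t none + (N : ℝ)⁻¹ * ∑ i, t (some i)) := mul_pos hNpos ht2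
    rw [mul_add, ← mul_assoc, mul_inv_cancel₀ hNpos.ne', one_mul] at ht3
    linarith
end
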